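/- If p and q are strictly positive probability vectors on finite alphabets with H(p) = H(q), then the Bernoulli schemes BS(p) and BS(q) are measurably isomorphic: there exists a homomorphism from BS(p) to BS(q) which is invertible after discarding sets of measure zero, whose inverse is also a homomorphism. -/

import Mathlib

open MeasureTheory ENNReal Filter

noncomputable section

/-- The left shift transformation on bi-infinite sequences: `(shift x) n = x (n+1)`. -/
def shift {A : Type*} : (ℤ → A) → (ℤ → A) := fun x n => x (n + 1)

/-- `φ` is a homomorphism (factor map) from the shift system `(ℤ → A, μ, shift)` to
`(ℤ → B, ν, shift)`, defined on the shift-invariant full-measure domain `D`. -/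
structure IsFactorMap {A B : Type*} [MeasurableSpace A] [MeasurableSpace B]
    (μ : Measure (ℤ → A)) (ν : Measure (ℤ → B))
    (D : Set (ℤ → A)) (φ : (ℤ → A) → (ℤ → B)) : Prop where
  measurable_map : Measurable φ
  dom_measurable : MeasurableSet D
  dom_shift_invariant : shift ⁻¹' D = D
  dom_full : μ D = 1
  pushforward : ν = μ.map φ
  equivariant : ∀ x ∈ D, φ (shift x) = shift (φ x)

/-- The window `[-q, r]` of `x` determines the zero coordinate of the image under `φ`
(among points of the domain `D`). -/
def DeterminesAt {A B : Type*} (D : Set (ℤ → A)) (φ : (ℤ → A) → (ℤ → B))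
    (q r : ℕ) (x : ℤ → A) : Prop :=
  ∀ y ∈ D, (∀ i : ℤ, -(q : ℤ) ≤ i → i ≤ (r : ℤ) → y i = x i) → φ y 0 = φ x 0

/-- A homomorphism `φ` with domain `D` is finitary if for almost every `x` in the domain
there are nonnegative integers `q`, `r` such that the coordinates `x_{-q}, …, x_r`
determine `(φ x)_0`. -/
def IsFinitary {A B : Type*} [MeasurableSpace A] [MeasurableSpace B]
    (μ : Measure (ℤ → A)) (D : Set (ℤ → A)) (φ : (ℤ → A) → (ℤ → B)) : Prop :=
  ∀ᵐ x ∂μ, x ∈ D → ∃ q r : ℕ, DeterminesAt D φ q r x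

/-- The code length `C(x) = q(x) + r(x)` with `q(x), r(x)` minimal such that the window
`[-q(x), r(x)]` determines the zero output coordinate (`⊤` if no finite window works). -/
def codeLength {A B : Type*} (D : Set (ℤ → A)) (φ : (ℤ → A) → (ℤ → B))
    (x : ℤ → A) : ℝ≥0∞ :=
  ⨅ (q : ℕ) (r : ℕ) (_ : DeterminesAt D φ q r x), ((q : ℝ≥0∞) + (r : ℝ≥0∞))

/-- `μ` is the Bernoulli (product) measure on `(ℤ → A)` given by the probability vector `p`. -/
def IsBernoulliMeasure {A : Type*} [MeasurableSpace A] (μ : Measure (ℤ → A)) (p : A → ℝ) : Prop :=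
  ∀ (F : Finset ℤ) (s : ℤ → A),
    μ {x | ∀ i ∈ F, x i = s i} = ENNReal.ofReal (∏ i ∈ F, p (s i))

/-- A strictly positive probability vector on a finite alphabet. -/
def IsProbVector {A : Type*} [Fintype A] (p : A → ℝ) : Prop :=
  (∀ i, 0 < p i) ∧ ∑ i, p i = 1

/-- The entropy `H(p) = -∑ p_i log p_i` of a probability vector. -/
def vecEntropy {A : Type*} [Fintype A] (p : A → ℝ) : ℝ := -∑ i, p i * Real.log (p i)

/-- A finitary isomorphism: a pair of mutually inverse finitary factor maps. -/
def IsFinitaryIsomorphism {A B : Type*} [MeasurableSpace A] [MeasurableSpace B]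
    (μ : Measure (ℤ → A)) (ν : Measure (ℤ → B))
    (D : Set (ℤ → A)) (E : Set (ℤ → B))
    (φ : (ℤ → A) → (ℤ → B)) (ψ : (ℤ → B) → (ℤ → A)) : Prop :=
  IsFactorMap μ ν D φ ∧ IsFactorMap ν μ E ψ ∧
  IsFinitary μ D φ ∧ IsFinitary ν E ψ ∧
  (∀ x ∈ D, φ x ∈ E ∧ ψ (φ x) = x) ∧ (∀ y ∈ E, ψ y ∈ D ∧ φ (ψ y) = y)

/-- A measurable isomorphism of shift systems: a pair of mutually inverse factor maps
(after discarding sets of measure zero). -/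
def IsMeasurableIsomorphism {A B : Type*} [MeasurableSpace A] [MeasurableSpace B]
    (μ : Measure (ℤ → A)) (ν : Measure (ℤ → B))
    (D : Set (ℤ → A)) (E : Set (ℤ → B))
    (φ : (ℤ → A) → (ℤ → B)) (ψ : (ℤ → B) → (ℤ → A)) : Prop :=
  IsFactorMap μ ν D φ ∧ IsFactorMap ν μ E ψ ∧
  (∀ x ∈ D, φ x ∈ E ∧ ψ (φ x) = x) ∧ (∀ y ∈ E, ψ y ∈ D ∧ φ (ψ y) = y)

/-!
In a Bernoulli scheme, the occurrences of a marker word that does not overlap itself form a process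
whose law depends only on the length and the probability of the marker. If two schemes have markers
with the same length and probability, one can therefore couple them so that the markers occur at the
same places; it remains to pair the words which fill corresponding blocks, the stretches between
consecutive long gaps of the skeleton of markers.

A coupling of blocks of one level is refined to longer blocks. On the words of a fixed long skeleton
take the product of the given coupling, forget in the second word the letters inside the gaps, and
replace the result by an extreme point of the couplings with the same marginals. Its support is a
forest, so it has few edges. Since the entropies agree, typical words of the two schemes have about
the same probability, up to errors which forgetting the gaps absorbs; hence most words of the first
scheme have a single likely partner, outside the gaps, and the block of the first sequence almost
determines the letter of the second at the origin. Alternate the roles of the two schemes. The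
stationary joinings obtained in the limit determine each sequence from the other almost surely,
which is an isomorphism.

Two schemes of equal entropy need not possess such markers. They do with respect to a third scheme
of the same entropy, which has one symbol of probability close to `1` and two symbols adjusted to
the markers of the two given schemes.
-/

namespace Ornstein

open ProbabilityTheory

/-! ### Words and skeletons -/

section Words
variable {A : Type*} {w : List A}

open Classical in
/-- The skeleton of a finite word: the bits recording at which positions the marker `w` occurs.
Two words of different schemes are only ever paired when they have the same skeleton. -/
def skeleton (w : List A) : List A → List Bool
  | [] => []
  | a :: l => decide (w <+: a :: l) :: skeleton w l

/-- A word no two distinct occurrences of which overlap: `w` does not begin with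
any of its proper nonempty suffixes. -/
def IsNonOverlapping (w : List A) : Prop :=
  ∀ i, 0 < i → i < w.length → ¬ w.drop i <+: w

/-- A return word of `u`: a word that begins with `u` and contains no other occurrence of `u`. -/
def IsReturnWord (u S : List A) : Prop :=
  u <+: S ∧ ∀ i, 0 < i → ¬ u <+: S.drop i

/-- The skeleton of length `N` whose only marker is at the beginning. -/
def gapWord (N : ℕ) : List Bool := true :: List.replicate (N - 1) false

@[simp] lemma skeleton_nil : skeleton w [] = [] := rfl

@[simp] lemma length_skeleton (v : List A) : (skeleton w v).length = v.length := by
  induction v with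
  | nil => rfl
  | cons a l ih => simp [skeleton, ih]

lemma IsNonOverlapping.prefix_append_iff (hw : IsNonOverlapping w) {l v : List A} (hl : l ≠ [])
    (hv : w <+: v) : w <+: l ++ v ↔ w <+: l := by
  refine ⟨fun h => ?_, fun h => h.trans (List.prefix_append _ _)⟩
  rcases le_or_gt w.length l.length with hlen | hlen
  · exact List.prefix_of_prefix_length_le h (List.prefix_append _ _) hlen
  · obtain ⟨t, rfl⟩ : l <+: w :=
      List.prefix_of_prefix_length_le (List.prefix_append _ _) h hlen.le
    have htv : t <+: v := (List.prefix_append_right_inj l).1 h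
    have ht : t <+: l ++ t := List.prefix_of_prefix_length_le htv hv (by simp)
    refine absurd ?_ (hw l.length (List.length_pos_iff.2 hl) hlen)
    rwa [List.drop_left]

lemma skeleton_append (hw : IsNonOverlapping w) {l v : List A} (hv : w <+: v) :
    skeleton w (l ++ v) = skeleton w l ++ skeleton w v := by
  induction l with
  | nil => rfl
  | cons a l ih =>
    have := hw.prefix_append_iff (List.cons_ne_nil a l) hv
    rw [List.cons_append] at this
    simp [skeleton, ih, this]

lemma skeleton_flatten (hw : IsNonOverlapping w) {V : List (List A)} (hV : ∀ v ∈ V, w <+: v) :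
    skeleton w V.flatten = (V.map (skeleton w)).flatten := by
  induction V with
  | nil => rfl
  | cons v V ih =>
    have ih := ih fun v hv => hV v (List.mem_cons_of_mem _ hv)
    cases V with
    | nil => simp
    | cons v' V =>
      have hv' : w <+: (v' :: V).flatten := by
        rw [List.flatten_cons]
        exact (hV v' (by simp)).trans (List.prefix_append _ _)
      rw [List.flatten_cons, skeleton_append hw hv', ih, List.map_cons (l := v' :: V),
        List.flatten_cons (L := (v' :: V).map _)]

lemma prefix_of_head_skeleton {v : List A} (h : [true] <+: skeleton w v) : w <+: v := by
  cases v with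
  | nil => simp at h
  | cons a l => simpa [skeleton, List.cons_prefix_cons] using h

lemma skeleton_drop (v : List A) (n : ℕ) : skeleton w (v.drop n) = (skeleton w v).drop n := by
  induction v generalizing n with
  | nil => simp
  | cons a l ih => cases n with
    | zero => rfl
    | succ n => simp [skeleton, ih]

lemma exists_split (hw : IsNonOverlapping w) {ss : List (List Bool)} (hs : ∀ s ∈ ss, [true] <+: s)
    {v : List A} (hv : skeleton w v = ss.flatten) :
    ∃ V : List (List A), V.map (skeleton w) = ss ∧ V.flatten = v := by
  induction ss generalizing v with
  | nil =>
    have hv : v = [] := by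
      rw [← List.length_eq_zero_iff, ← length_skeleton (w := w), hv, List.flatten_nil,
        List.length_nil]
    exact ⟨[], rfl, by simp [hv]⟩
  | cons s ss ih =>
    have hlen := congrArg List.length hv
    rw [length_skeleton, List.flatten_cons, List.length_append] at hlen
    have hdrop : skeleton w (v.drop s.length) = ss.flatten := by
      rw [skeleton_drop, hv, List.flatten_cons, List.drop_left]
    obtain ⟨V, hV, hV'⟩ := ih (fun s' hs' => hs s' (List.mem_cons_of_mem _ hs')) hdrop
    have hv' : skeleton w v = skeleton w (v.take s.length) ++ ss.flatten := by
      rcases ss with _ | ⟨s', ss⟩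
      · rw [List.flatten_nil, List.append_nil, List.take_of_length_le (by simpa using hlen.le)]
      · conv_lhs => rw [← List.take_append_drop s.length v]
        have hpre : w <+: v.drop s.length := by
          apply prefix_of_head_skeleton
          rw [hdrop, List.flatten_cons]
          exact (hs s' (by simp)).trans (List.prefix_append _ _)
        rw [skeleton_append hw hpre, hdrop]
    rw [hv, List.flatten_cons] at hv'
    exact ⟨v.take s.length :: V, by simp [hV, List.append_cancel_right hv'.symm], by simp [hV']⟩

lemma gapWord_drop {N i : ℕ} (hi : 0 < i) :
    (gapWord N).drop i = List.replicate (N - 1 - (i - 1)) false := by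
  obtain ⟨i, rfl⟩ := Nat.exists_eq_succ_of_ne_zero hi.ne'
  simp [gapWord]

lemma length_gapWord {N : ℕ} (hN : 0 < N) : (gapWord N).length = N := by
  simp only [gapWord, List.length_cons, List.length_replicate]
  omega

lemma isNonOverlapping_gapWord (N : ℕ) : IsNonOverlapping (gapWord N) := by
  intro i hi hiN h
  rw [gapWord, List.length_cons, List.length_replicate] at hiN
  obtain ⟨m, hm⟩ := Nat.exists_eq_succ_of_ne_zero (show N - 1 - (i - 1) ≠ 0 by omega)
  rw [gapWord_drop hi, hm, List.replicate_succ, gapWord, List.cons_prefix_cons] at h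
  exact Bool.false_ne_true h.1

lemma gapWord_isPrefix {M N : ℕ} (h : M ≤ N) : gapWord M <+: gapWord N := by
  refine List.cons_prefix_cons.2 ⟨rfl, ?_⟩
  rw [← Nat.sub_add_cancel (Nat.sub_le_sub_right h 1), add_comm, List.replicate_add]
  exact List.prefix_append _ _

lemma gapWord_ne_nil (N : ℕ) : gapWord N ≠ [] := List.cons_ne_nil _ _

lemma head_of_gapWord_isPrefix {N : ℕ} {S : List Bool} (h : gapWord N <+: S) : [true] <+: S :=
  List.IsPrefix.trans (by simp [gapWord, List.cons_prefix_cons]) h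

lemma exists_factorization {u : List A} (hu : IsNonOverlapping u) (hu0 : u ≠ []) {S : List A}
    (hS : u <+: S) :
    ∃ ss : List (List A), (∀ s ∈ ss, IsReturnWord u s) ∧ ss.flatten = S := by
  classical
  induction hn : S.length using Nat.strong_induction_on generalizing S with
  | _ n ih =>
  subst hn
  by_cases hex : ∃ i, 0 < i ∧ u <+: S.drop i
  · let i := Nat.find hex
    obtain ⟨hi0, hiu⟩ : 0 < i ∧ u <+: S.drop i := Nat.find_spec hex
    have hiS : i < S.length := by
      by_contra! hle
      exact hu0 (List.prefix_nil.1 (List.drop_eq_nil_of_le hle ▸ hiu))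
    have hne : S.take i ≠ [] := by
      simpa using ⟨hi0.ne', List.ne_nil_of_length_pos (hi0.trans hiS)⟩
    obtain ⟨ss, hss, hflat⟩ := ih (S.drop i).length (by simp; omega) hiu rfl
    refine ⟨S.take i :: ss, List.forall_mem_cons.2 ⟨⟨?_, fun j hj hju => ?_⟩, hss⟩,
      by simp [hflat]⟩
    · rwa [← hu.prefix_append_iff hne hiu, List.take_append_drop]
    · rcases le_or_gt i j with hij | hij
      · rw [List.drop_eq_nil_of_le (by simp; omega), List.prefix_nil] at hju
        exact hu0 hju
      · refine Nat.find_min hex hij ⟨hj, hju.trans ?_⟩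
        rw [List.drop_take]
        exact List.take_prefix _ _
  · push Not at hex
    exact ⟨[S], by simpa using ⟨hS, hex⟩, by simp⟩

end Words

/-! ### Sparse couplings -/

section Sparse
variable {U V : Type*}

/-- The support of `κ`, seen as a bipartite graph, has at most as many edges as vertices on every
pair of finite vertex sets. Forests have this property, and only this is used of them. -/
def IsSparse (κ : U × V → ℝ) : Prop :=
  ∀ (U' : Finset U) (V' : Finset V) (E : Finset (U × V)), E ⊆ U' ×ˢ V' → (∀ e ∈ E, κ e ≠ 0) →
    E.card ≤ U'.card + V'.card

lemma IsSparse.card_le_of_two_neighbors {κ : U × V → ℝ} (h : IsSparse κ) {U' : Finset U}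
    {V' : Finset V}
    (hU : ∀ u ∈ U', ∃ v₁ ∈ V', ∃ v₂ ∈ V', v₁ ≠ v₂ ∧ κ (u, v₁) ≠ 0 ∧ κ (u, v₂) ≠ 0) :
    U'.card ≤ V'.card := by
  classical
  let E : Finset (U × V) := {e ∈ U' ×ˢ V' | κ e ≠ 0}
  have hE : E.card ≤ U'.card + V'.card := h U' V' E (Finset.filter_subset _ _) (by simp [E])
  have htwo : U'.card * 2 ≤ E.card := by
    rw [Finset.card_eq_sum_card_fiberwise (f := Prod.fst) (s := E) (t := U')
      (fun e he => (Finset.mem_product.1 (Finset.mem_filter.1 he).1).1), ← smul_eq_mul]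
    refine Finset.card_nsmul_le_sum _ _ _ fun u hu => ?_
    obtain ⟨v₁, h₁, v₂, h₂, hne, hκ₁, hκ₂⟩ := hU u hu
    refine Finset.one_lt_card.2 ⟨(u, v₁), ?_, (u, v₂), ?_, by simp [hne]⟩ <;> simp [E, *]
  omega

/-- `κ` is a nonnegative function on `FU ×ˢ FV` with the marginals of `c` and a smaller support. -/
structure IsRedistribution (FU : Finset U) (FV : Finset V) (c κ : U × V → ℝ) : Prop where
  nonneg : ∀ e, 0 ≤ κ e
  supp : ∀ e, κ e ≠ 0 → e.1 ∈ FU ∧ e.2 ∈ FV ∧ 0 < c e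
  row : ∀ u ∈ FU, ∑ v ∈ FV, κ (u, v) = ∑ v ∈ FV, c (u, v)
  col : ∀ v ∈ FV, ∑ u ∈ FU, κ (u, v) = ∑ u ∈ FU, c (u, v)

-- The marginal constraints are `U'.card + V'.card` linear equations in `E.card` unknowns.
lemma exists_circulation {E : Finset (U × V)} {U' : Finset U} {V' : Finset V}
    (hE : E ⊆ U' ×ˢ V') (hcard : U'.card + V'.card < E.card) :
    ∃ d : U × V → ℝ, (∀ e, d e ≠ 0 → e ∈ E) ∧ (∃ e, d e ≠ 0) ∧
      (∀ u, ∀ FV ⊇ V', ∑ v ∈ FV, d (u, v) = 0) ∧ ∀ v, ∀ FU ⊇ U', ∑ u ∈ FU, d (u, v) = 0 := by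
  let ext : (E → ℝ) →ₗ[ℝ] (U × V → ℝ) := Function.ExtendByZero.linearMap ℝ Subtype.val
  let marginals : (U × V → ℝ) →ₗ[ℝ] (U' → ℝ) × (V' → ℝ) :=
    (LinearMap.pi fun u : U' => ∑ v ∈ V', LinearMap.proj ((u : U), v)).prod
      (LinearMap.pi fun v : V' => ∑ u ∈ U', LinearMap.proj (u, (v : V)))
  obtain ⟨f, hf, hf0⟩ := Submodule.exists_mem_ne_zero_of_ne_bot
    (LinearMap.ker_ne_bot_of_finrank_lt (f := marginals ∘ₗ ext) (by simpa using hcard))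
  have hrow : ∀ u ∈ U', ∑ v ∈ V', ext f (u, v) = 0 := fun u hu => by
    simpa [marginals] using congrFun (congrArg Prod.fst hf) ⟨u, hu⟩
  have hcol : ∀ v ∈ V', ∑ u ∈ U', ext f (u, v) = 0 := fun v hv => by
    simpa [marginals] using congrFun (congrArg Prod.snd hf) ⟨v, hv⟩
  have hsupp : ∀ e, ext f e ≠ 0 → e ∈ E := fun e he => by
    by_contra heE
    exact he (Function.extend_apply' _ _ _ fun ⟨e', he'⟩ => heE (he' ▸ e'.2))
  have hU' : ∀ u v, u ∉ U' → ext f (u, v) = 0 := fun u v hu =>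
    not_not.1 fun h => hu (Finset.mem_product.1 (hE (hsupp _ h))).1
  have hV' : ∀ u v, v ∉ V' → ext f (u, v) = 0 := fun u v hv =>
    not_not.1 fun h => hv (Finset.mem_product.1 (hE (hsupp _ h))).2
  refine ⟨ext f, hsupp, ?_, fun u FV hFV => ?_, fun v FU hFU => ?_⟩
  · obtain ⟨e, he⟩ := Function.ne_iff.1 hf0
    exact ⟨e, by simpa [ext, Subtype.val_injective.extend_apply] using he⟩
  · rw [← Finset.sum_subset hFV fun v _ hv => hV' u v hv]
    exact (em (u ∈ U')).elim (hrow u) fun hu => Finset.sum_eq_zero fun v _ => hU' u v hu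
  · rw [← Finset.sum_subset hFU fun u _ hu => hU' u v hu]
    exact (em (v ∈ V')).elim (hcol v) fun hv => Finset.sum_eq_zero fun u _ => hV' u v hv

namespace IsRedistribution
variable {FU : Finset U} {FV : Finset V} {c κ : U × V → ℝ}

lemma support_subset (h : IsRedistribution FU FV c κ) :
    Function.support κ ⊆ (FU ×ˢ FV : Finset (U × V)) := fun e he => by
  have := h.supp e he
  simp [this.1, this.2.1]

lemma exists_of_nonneg (FU : Finset U) (FV : Finset V) (hc : ∀ e, 0 ≤ c e) :
    ∃ κ, IsRedistribution FU FV c κ := by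
  classical
  refine ⟨fun e => if e ∈ FU ×ˢ FV then c e else 0, fun e => ?_, fun e he => ?_, fun u hu => ?_,
    fun v hv => ?_⟩
  · split_ifs
    exacts [hc e, le_rfl]
  · obtain ⟨hmem, hce⟩ : e ∈ FU ×ˢ FV ∧ c e ≠ 0 := by simpa only [ite_ne_right_iff] using he
    exact ⟨(Finset.mem_product.1 hmem).1, (Finset.mem_product.1 hmem).2, (hc e).lt_of_ne' hce⟩
  · exact Finset.sum_congr rfl fun v hv => if_pos (Finset.mk_mem_product hu hv)
  · exact Finset.sum_congr rfl fun u hu => if_pos (Finset.mk_mem_product hu hv)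

/-- Adding the largest admissible multiple of the circulation `d` kills an edge. -/
lemma exists_support_ssubset (hκ : IsRedistribution FU FV c κ) {d : U × V → ℝ}
    (hd : ∀ e, d e ≠ 0 → κ e ≠ 0) (hd0 : ∃ e, d e ≠ 0) (hrow : ∀ u, ∑ v ∈ FV, d (u, v) = 0)
    (hcol : ∀ v, ∑ u ∈ FU, d (u, v) = 0) :
    ∃ κ', IsRedistribution FU FV c κ' ∧ Function.support κ' ⊂ Function.support κ := by
  have hneg : ({e ∈ FU ×ˢ FV | d e < 0} : Finset (U × V)).Nonempty := by
    obtain ⟨⟨u, v⟩, he⟩ := hd0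
    obtain ⟨hu, hv, -⟩ := hκ.supp _ (hd _ he)
    obtain ⟨v', hv', hneg⟩ := Finset.exists_pos_of_sum_zero_of_exists_nonzero
      (fun v => -d (u, v)) (by simp [hrow]) ⟨v, hv, by simpa using he⟩
    exact ⟨(u, v'), by simpa [hu, hv'] using hneg⟩
  obtain ⟨e₁, he₁, hmin⟩ := Finset.exists_min_image _ (fun e => κ e / -d e) hneg
  simp only [Finset.mem_filter, Finset.mem_product] at he₁ hmin
  set t := κ e₁ / -d e₁ with ht
  have ht0 : 0 ≤ t := div_nonneg (hκ.nonneg _) (by linarith [he₁.2])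
  have hsub : ∀ e, κ e + t * d e ≠ 0 → κ e ≠ 0 := fun e he hκe => by
    have hde : d e = 0 := not_not.1 fun h => hd e h hκe
    simp [hκe, hde] at he
  refine ⟨fun e => κ e + t * d e,
    ⟨fun e => ?_, fun e he => hκ.supp e (hsub e he), fun u hu => ?_, fun v hv => ?_⟩,
    (Set.ssubset_iff_of_subset hsub).2 ⟨e₁, hd e₁ he₁.2.ne, ?_⟩⟩
  · rcases lt_or_ge (d e) 0 with hde | hde
    · obtain ⟨hu, hv, -⟩ := hκ.supp e (hd e hde.ne)
      have := (le_div_iff₀ (by linarith)).1 (hmin e ⟨⟨hu, hv⟩, hde⟩)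
      linarith
    · exact add_nonneg (hκ.nonneg e) (mul_nonneg ht0 hde)
  · rw [Finset.sum_add_distrib, ← Finset.mul_sum, hrow, mul_zero, add_zero, hκ.row u hu]
  · rw [Finset.sum_add_distrib, ← Finset.mul_sum, hcol, mul_zero, add_zero, hκ.col v hv]
  · have : κ e₁ + t * d e₁ = 0 := by
      rw [ht, div_neg, neg_mul, div_mul_cancel₀ _ he₁.2.ne, add_neg_cancel]
    exact not_not.2 this

lemma exists_isSparse (FU : Finset U) (FV : Finset V) (hc : ∀ e, 0 ≤ c e) :
    ∃ κ, IsRedistribution FU FV c κ ∧ IsSparse κ := by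
  classical
  obtain ⟨κ, hκ, hmin⟩ : ∃ κ, IsRedistribution FU FV c κ ∧ ∀ κ', IsRedistribution FU FV c κ' →
      ¬ Function.support κ' ⊂ Function.support κ := by
    let card (κ : U × V → ℝ) : ℕ := (Function.support κ).ncard
    have hne : {κ | IsRedistribution FU FV c κ}.Nonempty := exists_of_nonneg FU FV hc
    refine ⟨Function.argminOn card _ hne, Function.argminOn_mem card _ hne, fun κ' hκ' hlt => ?_⟩
    refine (Function.argminOn_le card _ hκ').not_gt (Set.ncard_lt_ncard hlt ?_)
    exact (Finset.finite_toSet _).subset (Function.argminOn_mem card _ hne).support_subset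
  refine ⟨κ, hκ, fun U' V' E hE hEκ => ?_⟩
  by_contra! hcard
  have hE' : E ⊆ (U' ∩ FU) ×ˢ (V' ∩ FV) := fun e he => by
    obtain ⟨hu, hv, -⟩ := hκ.supp e (hEκ e he)
    have := Finset.mem_product.1 (hE he)
    simp [this.1, this.2, hu, hv]
  have hcard' : (U' ∩ FU).card + (V' ∩ FV).card < E.card := hcard.trans_le' <|
    add_le_add (Finset.card_le_card Finset.inter_subset_left)
      (Finset.card_le_card Finset.inter_subset_left)
  obtain ⟨d, hdE, hd0, hrow, hcol⟩ := exists_circulation hE' hcard'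
  obtain ⟨κ', hκ', hlt⟩ := hκ.exists_support_ssubset (fun e he => hEκ e (hdE e he)) hd0
    (fun u => hrow u FV Finset.inter_subset_right) (fun v => hcol v FU Finset.inter_subset_right)
  exact hmin κ' hκ' hlt

end IsRedistribution
end Sparse

section Marginals
variable {X Y M : Type*}

/-- The kernel `l` has marginals `P` and `Q` on `F ×ˢ G`. -/
structure HasMarginals (F : Finset X) (G : Finset Y) (P : X → ℝ) (Q : Y → ℝ)
    (l : X → Y → ℝ) : Prop where
  row : ∀ x ∈ F, ∑ y ∈ G, l x y = P x
  col : ∀ y ∈ G, ∑ x ∈ F, l x y = Q y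

/-- The map `mk` carries the weights `Q` on `G` to the weights `R` on `H`. -/
structure IsWeightMap (mk : Y → M) (G : Finset Y) (H : Finset M) (Q : Y → ℝ) (R : M → ℝ) :
    Prop where
  mapsTo : ∀ y ∈ G, mk y ∈ H
  sum_comp_mul : ∀ g : M → ℝ, ∑ y ∈ G, g (mk y) * Q y = ∑ m ∈ H, g m * R m

/-- Sets of points of `F` that are individually unlikely and ambiguous have small total weight.
A point is ambiguous if the kernel `L` pairs it with two likely points that `m` tells apart. -/
def HasFewAmbiguous (F : Finset X) (P : X → ℝ) (Q : Y → ℝ) (L : X → Y → ℝ) (m : Y → M)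
    (K : ℝ) : Prop :=
  ∀ α β : ℝ, 0 ≤ α → 0 < β → ∀ T ⊆ F,
    (∀ x ∈ T, P x ≤ α ∧ ∃ y₁ y₂, L x y₁ ≠ 0 ∧ L x y₂ ≠ 0 ∧ β ≤ Q y₁ ∧ β ≤ Q y₂ ∧ m y₁ ≠ m y₂) →
    ∑ x ∈ T, P x ≤ α * K / β

variable {F : Finset X} {G : Finset Y} {H : Finset M} {P : X → ℝ} {Q : Y → ℝ} {R : M → ℝ}
  {l : X → Y → ℝ}

lemma HasMarginals.swap (h : HasMarginals F G P Q l) : HasMarginals G F Q P fun y x => l x y :=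
  ⟨h.col, h.row⟩

lemma HasMarginals.sum_eq (h : HasMarginals F G P Q l) : ∑ x ∈ F, P x = ∑ y ∈ G, Q y := by
  rw [← Finset.sum_congr rfl h.row, Finset.sum_comm]
  exact Finset.sum_congr rfl h.col

lemma HasMarginals.mul_div_sum (hP : ∀ x, 0 < P x) (hQ : ∀ y, 0 < Q y)
    (h : ∑ x ∈ F, P x = ∑ y ∈ G, Q y) :
    HasMarginals F G P Q fun x y => P x * Q y / ∑ x ∈ F, P x where
  row x hx := by
    have hF : 0 < ∑ x ∈ F, P x := Finset.sum_pos (fun x _ => hP x) ⟨x, hx⟩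
    rw [← Finset.sum_div, ← Finset.mul_sum, ← h, mul_div_cancel_right₀ _ hF.ne']
  col y hy := by
    have hG : 0 < ∑ y ∈ G, Q y := Finset.sum_pos (fun y _ => hQ y) ⟨y, hy⟩
    rw [← Finset.sum_div, ← Finset.sum_mul, h, mul_div_cancel_left₀ _ hG.ne']

lemma HasMarginals.comp_isWeightMap {κ : X → M → ℝ} (h : HasMarginals F H P R κ) {mk : Y → M}
    (hmk : IsWeightMap mk G H Q R) (hR : ∀ m, R m ≠ 0) :
    HasMarginals F G P Q fun x y => κ x (mk y) / R (mk y) * Q y where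
  row x hx := by
    rw [hmk.sum_comp_mul fun m => κ x m / R m, ← h.row x hx]
    exact Finset.sum_congr rfl fun m _ => div_mul_cancel₀ _ (hR m)
  col y hy := by
    rw [← Finset.sum_mul, ← Finset.sum_div, h.col _ (hmk.mapsTo y hy), div_self (hR _), one_mul]

-- A sparse graph has at most as many ambiguous points as there are points of weight at least `γ`.
lemma IsSparse.sum_le_of_two_neighbors {κ : X × M → ℝ} (hκ : IsSparse κ) (hR : ∀ m, 0 ≤ R m)
    {α γ : ℝ} (hα : 0 ≤ α) (hγ : 0 < γ) {T : Finset X}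
    (hT : ∀ x ∈ T, P x ≤ α ∧ ∃ m₁ ∈ H, ∃ m₂ ∈ H, γ ≤ R m₁ ∧ γ ≤ R m₂ ∧ m₁ ≠ m₂ ∧
      κ (x, m₁) ≠ 0 ∧ κ (x, m₂) ≠ 0) :
    ∑ x ∈ T, P x ≤ α * (∑ m ∈ H, R m) / γ := by
  classical
  let H' : Finset M := {m ∈ H | γ ≤ R m}
  have hTH' : T.card ≤ H'.card := hκ.card_le_of_two_neighbors fun x hx => by
    obtain ⟨-, m₁, hm₁, m₂, hm₂, hγ₁, hγ₂, hne, hx₁, hx₂⟩ := hT x hx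
    exact ⟨m₁, by simp [H', hm₁, hγ₁], m₂, by simp [H', hm₂, hγ₂], hne, hx₁, hx₂⟩
  have hH' : H'.card * γ ≤ ∑ m ∈ H, R m := by
    rw [← nsmul_eq_mul]
    exact (Finset.card_nsmul_le_sum H' R γ fun m hm => (Finset.mem_filter.1 hm).2).trans
      (Finset.sum_le_sum_of_subset_of_nonneg (Finset.filter_subset _ _) fun m _ _ => hR m)
  calc ∑ x ∈ T, P x ≤ T.card • α := Finset.sum_le_card_nsmul _ _ _ fun x hx => (hT x hx).1
    _ = α * T.card := by rw [nsmul_eq_mul, mul_comm]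
    _ ≤ α * ((∑ m ∈ H, R m) / γ) := by
        gcongr
        rw [le_div_iff₀ hγ]
        exact hH'.trans' (by gcongr)
    _ = α * (∑ m ∈ H, R m) / γ := (mul_div_assoc _ _ _).symm

lemma IsSparse.hasFewAmbiguous {κ : X × M → ℝ} (hκ : IsSparse κ) (hR : ∀ m, 0 ≤ R m)
    {mk : Y → M} {c : ℝ} (hc : 0 < c)
    (hl : ∀ x y, l x y ≠ 0 → mk y ∈ H ∧ κ (x, mk y) ≠ 0 ∧ Q y ≤ c * R (mk y)) :
    HasFewAmbiguous F P Q l mk (c * ∑ m ∈ H, R m) := by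
  intro α β hα hβ T _ hT
  have hle := hκ.sum_le_of_two_neighbors (P := P) (H := H) hR hα (div_pos hβ hc) (T := T)
    fun x hx => by
      obtain ⟨hα, y₁, y₂, hy₁, hy₂, hβ₁, hβ₂, hne⟩ := hT x hx
      obtain ⟨hm₁, hκ₁, hQ₁⟩ := hl x y₁ hy₁
      obtain ⟨hm₂, hκ₂, hQ₂⟩ := hl x y₂ hy₂
      exact ⟨hα, _, hm₁, _, hm₂, (div_le_iff₀' hc).2 (hβ₁.trans hQ₁),
        (div_le_iff₀' hc).2 (hβ₂.trans hQ₂), hne, hκ₁, hκ₂⟩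
  exact hle.trans_eq (by field_simp)

lemma HasFewAmbiguous.mono {m : Y → M} {K K' : ℝ} (h : HasFewAmbiguous F P Q l m K)
    (hK : K ≤ K') : HasFewAmbiguous F P Q l m K' := fun α β hα hβ T hTF hT =>
  (h α β hα hβ T hTF hT).trans (by gcongr)

lemma HasFewAmbiguous.of_imp {m m' : Y → M} {l' : X → Y → ℝ} {K : ℝ}
    (h : HasFewAmbiguous F P Q l m K)
    (himp : ∀ x ∈ F, ∀ y, l' x y ≠ 0 → l x y ≠ 0 ∧ m y = m' y) :
    HasFewAmbiguous F P Q l' m' K := by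
  refine fun α β hα hβ T hTF hT => h α β hα hβ T hTF fun x hx => ?_
  obtain ⟨hPα, y₁, y₂, hy₁, hy₂, hβ₁, hβ₂, hne⟩ := hT x hx
  obtain ⟨hl₁, hm₁⟩ := himp x (hTF hx) y₁ hy₁
  obtain ⟨hl₂, hm₂⟩ := himp x (hTF hx) y₂ hy₂
  exact ⟨hPα, y₁, y₂, hl₁, hl₂, hβ₁, hβ₂, by rwa [hm₁, hm₂]⟩

lemma HasFewAmbiguous.comp {X' Y' : Type*} {m : Y → M} {K : ℝ}
    (h : HasFewAmbiguous F P Q l m K) {e : X' → X} (he : Function.Injective e) (f : Y' → Y)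
    {F' : Finset X'} (hF : ∀ x ∈ F', e x ∈ F) :
    HasFewAmbiguous F' (P ∘ e) (Q ∘ f) (fun x y => l (e x) (f y)) (m ∘ f) K := by
  intro α β hα hβ T hTF hT
  have hsub : T.map ⟨e, he⟩ ⊆ F := Finset.forall_mem_map.2 fun x hx => hF x (hTF hx)
  have hle := h α β hα hβ _ hsub <| Finset.forall_mem_map.2 fun x hx => by
    obtain ⟨hPα, y₁, y₂, hy⟩ := hT x hx
    exact ⟨hPα, f y₁, f y₂, hy⟩
  rwa [Finset.sum_map] at hle

end Marginals

section Lists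
variable {S X Y M : Type*}

/-- The finite set of lists whose entries lie in the prescribed finite sets `F s`. -/
def fiberPi (F : S → Finset X) : List S → Finset (List X)
  | [] => {[]}
  | s :: ss => (F s ×ˢ fiberPi F ss).map
      ⟨fun z => z.1 :: z.2, fun _ _ h => Prod.ext (List.cons.inj h).1 (List.cons.inj h).2⟩

/-- The product of a kernel along two lists of the same length; it vanishes on lists of different
lengths. -/
def zipProd (c : X → Y → ℝ) : List X → List Y → ℝ
  | [], [] => 1
  | x :: V, y :: W => c x y * zipProd c V W
  | _, _ => 0

lemma mem_fiberPi_cons {F : S → Finset X} {s : S} {ss : List S} {V : List X} :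
    V ∈ fiberPi F (s :: ss) ↔ ∃ x ∈ F s, ∃ V' ∈ fiberPi F ss, x :: V' = V := by
  simp only [fiberPi, Finset.mem_map, Finset.mem_product, Prod.exists, and_assoc,
    exists_and_left]
  rfl

lemma sum_fiberPi_cons (F : S → Finset X) (s : S) (ss : List S) (f : List X → ℝ) :
    ∑ V ∈ fiberPi F (s :: ss), f V = ∑ x ∈ F s, ∑ V ∈ fiberPi F ss, f (x :: V) := by
  rw [fiberPi, Finset.sum_map, Finset.sum_product]
  rfl

@[simp] lemma sum_fiberPi_nil (F : S → Finset X) (f : List X → ℝ) :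
    ∑ V ∈ fiberPi F [], f V = f [] := by simp [fiberPi]

lemma mem_fiberPi_iff {F : S → Finset X} {sx : X → S} (hF : ∀ s x, x ∈ F s ↔ sx x = s)
    {ss : List S} {V : List X} : V ∈ fiberPi F ss ↔ V.map sx = ss := by
  induction ss generalizing V with
  | nil => simp [fiberPi]
  | cons s ss ih => cases V <;> simp [mem_fiberPi_cons, hF, ih]

lemma zipProd_nonneg {c : X → Y → ℝ} (hc : ∀ x y, 0 ≤ c x y) (V : List X) (W : List Y) :
    0 ≤ zipProd c V W := by
  induction V generalizing W with
  | nil => cases W <;> simp [zipProd]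
  | cons x V ih => cases W with
    | nil => simp [zipProd]
    | cons y W => exact mul_nonneg (hc x y) (ih W)

lemma zipProd_swap (c : X → Y → ℝ) (V : List X) (W : List Y) :
    zipProd (fun y x => c x y) W V = zipProd c V W := by
  induction V generalizing W with
  | nil => cases W <;> rfl
  | cons x V ih => cases W with
    | nil => rfl
    | cons y W => rw [zipProd, zipProd, ih]

lemma sum_zipProd {F : S → Finset X} {G : S → Finset Y} {c : X → Y → ℝ} {P : X → ℝ}
    {ss : List S} (h : ∀ s ∈ ss, ∀ x ∈ F s, ∑ y ∈ G s, c x y = P x) {V : List X}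
    (hV : V ∈ fiberPi F ss) : ∑ W ∈ fiberPi G ss, zipProd c V W = (V.map P).prod := by
  induction ss generalizing V with
  | nil =>
    rw [fiberPi, Finset.mem_singleton] at hV
    simp [hV, zipProd]
  | cons s ss ih =>
    obtain ⟨hs, hss⟩ := List.forall_mem_cons.1 h
    obtain ⟨x, hx, V, hV', rfl⟩ := mem_fiberPi_cons.1 hV
    simp only [sum_fiberPi_cons, zipProd, ← Finset.mul_sum]
    rw [ih hss hV', ← Finset.sum_mul, hs x hx, List.map_cons, List.prod_cons]

lemma HasMarginals.zipProd {F : S → Finset X} {G : S → Finset Y} {c : X → Y → ℝ} {P : X → ℝ}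
    {Q : Y → ℝ} {ss : List S} (h : ∀ s ∈ ss, HasMarginals (F s) (G s) P Q c) :
    HasMarginals (fiberPi F ss) (fiberPi G ss) (fun V => (V.map P).prod)
      (fun W => (W.map Q).prod) (zipProd c) where
  row _ hV := sum_zipProd (fun s hs => (h s hs).row) hV
  col W hW := by
    simp only [← zipProd_swap c]
    exact sum_zipProd (fun s hs => (h s hs).col) hW

lemma IsWeightMap.listMap {G : S → Finset Y} {H : S → Finset M} {mk : Y → M} {Q : Y → ℝ}
    {R : M → ℝ} {ss : List S} (h : ∀ s ∈ ss, IsWeightMap mk (G s) (H s) Q R) :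
    IsWeightMap (List.map mk) (fiberPi G ss) (fiberPi H ss) (fun W => (W.map Q).prod)
      fun m => (m.map R).prod := by
  induction ss with
  | nil => exact ⟨by simp [fiberPi], by simp⟩
  | cons s ss ih =>
    obtain ⟨hs, hss⟩ := List.forall_mem_cons.1 h
    refine ⟨fun W hW => ?_, fun g => ?_⟩
    · obtain ⟨y, hy, W, hW', rfl⟩ := mem_fiberPi_cons.1 hW
      exact mem_fiberPi_cons.2 ⟨mk y, hs.mapsTo y hy, W.map mk, (ih hss).mapsTo W hW', rfl⟩
    · have htail : ∀ y, ∑ W ∈ fiberPi G ss, g ((y :: W).map mk) * ((y :: W).map Q).prod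
          = (∑ m ∈ fiberPi H ss, g (mk y :: m) * (m.map R).prod) * Q y := fun y => by
        rw [← (ih hss).sum_comp_mul, Finset.sum_mul]
        refine Finset.sum_congr rfl fun W _ => ?_
        rw [List.map_cons, List.map_cons, List.prod_cons]
        ring
      simp only [sum_fiberPi_cons, htail]
      rw [hs.sum_comp_mul fun m' => ∑ m ∈ fiberPi H ss, g (m' :: m) * (m.map R).prod]
      refine Finset.sum_congr rfl fun m' _ => ?_
      rw [Finset.sum_mul]
      refine Finset.sum_congr rfl fun m _ => ?_
      rw [List.map_cons, List.prod_cons]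
      ring

lemma prod_map_pos {Q : Y → ℝ} (hQ : ∀ y, 0 < Q y) (W : List Y) : 0 < (W.map Q).prod :=
  List.prod_pos fun a ha => by
    obtain ⟨y, -, rfl⟩ := List.mem_map.1 ha
    exact hQ y

end Lists

section Mask
variable {S X Y : Type*} {sx : X → S} {sy : Y → S} {FX : S → Finset X} {FY : S → Finset Y}
  {P : X → ℝ} {Q : Y → ℝ} {l : X → Y → ℝ} {s₀ : S}

open Classical in
/-- The entry `y`, forgotten if its label is `s₀`, the label of the gaps. -/
def maskEntry (sy : Y → S) (s₀ : S) (y : Y) : Option Y := if sy y = s₀ then none else some y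

open Classical in
/-- The masked entries with label `s`. -/
def maskFiber (FY : S → Finset Y) (s₀ s : S) : Finset (Option Y) :=
  if s = s₀ then {none} else (FY s).map Function.Embedding.some

/-- The weight of a masked entry: a forgotten entry stands for all entries with label `s₀`. -/
def maskWeight (FY : S → Finset Y) (Q : Y → ℝ) (s₀ : S) : Option Y → ℝ
  | none => ∑ y ∈ FY s₀, Q y
  | some y => Q y

/-- The coupling induced by `l` on masked entries. -/
def maskKernel (P : X → ℝ) (l : X → Y → ℝ) (x : X) : Option Y → ℝ
  | none => P x
  | some y => l x y

lemma eq_of_maskEntry_eq {y y' : Y} (hy : sy y ≠ s₀)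
    (h : maskEntry sy s₀ y' = maskEntry sy s₀ y) : y' = y := by
  rw [maskEntry, maskEntry, if_neg hy] at h
  split_ifs at h
  exact Option.some_injective _ h

lemma maskFiber_self (FY : S → Finset Y) (s : S) : maskFiber FY s s = {none} := if_pos rfl

lemma maskFiber_of_ne {s : S} (hs : s ≠ s₀) :
    maskFiber FY s₀ s = (FY s).map Function.Embedding.some := if_neg hs

lemma maskKernel_nonneg (hP : ∀ x, 0 ≤ P x) (hl : ∀ x y, 0 ≤ l x y) (x : X) (m : Option Y) :
    0 ≤ maskKernel P l x m := by
  cases m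
  exacts [hP x, hl x _]

lemma maskWeight_pos (hQ : ∀ y, 0 < Q y) (hne : (FY s₀).Nonempty) (m : Option Y) :
    0 < maskWeight FY Q s₀ m := by
  cases m
  exacts [Finset.sum_pos (fun y _ => hQ y) hne, hQ _]

lemma HasMarginals.mask {s : S} (h : HasMarginals (FX s) (FY s) P Q l) :
    HasMarginals (FX s) (maskFiber FY s₀ s) P (maskWeight FY Q s₀) (maskKernel P l) := by
  rcases eq_or_ne s s₀ with rfl | hs
  · rw [maskFiber_self]
    exact ⟨fun x _ => Finset.sum_singleton _ _, fun m hm => by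
      rw [Finset.mem_singleton.1 hm]
      exact h.sum_eq⟩
  · rw [maskFiber_of_ne hs]
    exact ⟨fun x hx => (Finset.sum_map _ _ _).trans (h.row x hx),
      Finset.forall_mem_map.2 fun y hy => h.col y hy⟩

lemma isWeightMap_maskEntry (hFY : ∀ s y, y ∈ FY s ↔ sy y = s) (s : S) :
    IsWeightMap (maskEntry sy s₀) (FY s) (maskFiber FY s₀ s) Q (maskWeight FY Q s₀) := by
  rcases eq_or_ne s s₀ with rfl | hs
  · have hnone : ∀ y ∈ FY s, maskEntry sy s y = none := fun y hy => if_pos ((hFY s y).1 hy)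
    rw [maskFiber_self]
    refine ⟨fun y hy => Finset.mem_singleton.2 (hnone y hy), fun g => ?_⟩
    rw [Finset.sum_singleton, maskWeight, Finset.mul_sum]
    exact Finset.sum_congr rfl fun y hy => by rw [hnone y hy]
  · have hsome : ∀ y ∈ FY s, maskEntry sy s₀ y = some y := fun y hy =>
      if_neg ((hFY s y).1 hy ▸ hs)
    rw [maskFiber_of_ne hs]
    refine ⟨fun y hy => by simpa [hsome y hy] using hy, fun g => ?_⟩
    rw [Finset.sum_map]
    exact Finset.sum_congr rfl fun y hy => by rw [hsome y hy]; rfl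

lemma forall₂_of_zipProd_mask_ne_zero (hFX : ∀ s x, x ∈ FX s ↔ sx x = s)
    (hFY : ∀ s y, y ∈ FY s ↔ sy y = s) {ss : List S} {V : List X} {W : List Y}
    (hV : V ∈ fiberPi FX ss) (hW : W ∈ fiberPi FY ss)
    (h : zipProd (maskKernel P l) V (W.map (maskEntry sy s₀)) ≠ 0) :
    List.Forall₂ (fun x y => sx x = sy y ∧ (sx x = s₀ ∨ l x y ≠ 0)) V W := by
  induction ss generalizing V W with
  | nil => simp_all [fiberPi]
  | cons s ss ih =>
    obtain ⟨x, hx, V, hV', rfl⟩ := mem_fiberPi_cons.1 hV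
    obtain ⟨y, hy, W, hW', rfl⟩ := mem_fiberPi_cons.1 hW
    rw [List.map_cons, zipProd] at h
    have hxy : sx x = sy y := ((hFX s x).1 hx).trans ((hFY s y).1 hy).symm
    refine .cons ⟨hxy, or_iff_not_imp_left.2 fun hx₀ => ?_⟩ (ih hV' hW' (right_ne_zero_of_mul h))
    have hkernel := left_ne_zero_of_mul h
    rwa [maskEntry, if_neg (hxy ▸ hx₀)] at hkernel

open Classical in
lemma prod_le_pow_count_mul_prod_mask (hFY : ∀ s y, y ∈ FY s ↔ sy y = s) (hQ : ∀ y, 0 < Q y)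
    {θ : ℝ} (hθQ : ∀ y ∈ FY s₀, Q y ≤ θ * ∑ y ∈ FY s₀, Q y) {ss : List S} {W : List Y}
    (hW : W ∈ fiberPi FY ss) :
    (W.map Q).prod ≤
      θ ^ ss.count s₀ * ((W.map (maskEntry sy s₀)).map (maskWeight FY Q s₀)).prod := by
  induction ss generalizing W with
  | nil => simp_all [fiberPi]
  | cons s ss ih =>
    obtain ⟨y, hy, W, hW', rfl⟩ := mem_fiberPi_cons.1 hW
    have hsy := (hFY s y).1 hy
    have hprod := (prod_map_pos hQ W).le
    simp only [List.map_cons, List.prod_cons]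
    rcases eq_or_ne s s₀ with rfl | hs
    · rw [List.count_cons_self, pow_succ, maskEntry, if_pos hsy, maskWeight]
      have hy' := hθQ y hy
      calc Q y * (W.map Q).prod ≤ (θ * ∑ y ∈ FY s, Q y) * (W.map Q).prod := by gcongr
        _ ≤ (θ * ∑ y ∈ FY s, Q y) * _ :=
            mul_le_mul_of_nonneg_left (ih hW') ((hQ y).le.trans hy')
        _ = _ := by ring
    · rw [List.count_cons_of_ne hs, maskEntry, if_neg (hsy ▸ hs), maskWeight]
      calc Q y * (W.map Q).prod ≤ Q y * _ := mul_le_mul_of_nonneg_left (ih hW') (hQ y).le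
        _ = _ := by ring

open Classical in
/-- The product coupling is forgotten inside the gaps `s₀`, made sparse, and disintegrated again.
Sparseness bounds the number of ambiguous lists, and each forgotten entry gains a factor `θ`. -/
theorem exists_masked_coupling (hFX : ∀ s x, x ∈ FX s ↔ sx x = s)
    (hFY : ∀ s y, y ∈ FY s ↔ sy y = s) (hP : ∀ x, 0 ≤ P x) (hQ : ∀ y, 0 < Q y)
    (hl : ∀ x y, 0 ≤ l x y) {ss : List S} (hPQ : ∀ s ∈ ss, HasMarginals (FX s) (FY s) P Q l)
    {θ : ℝ} (hθ : 0 < θ) (hθQ : ∀ y ∈ FY s₀, Q y ≤ θ * ∑ y ∈ FY s₀, Q y)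
    (hne : (FY s₀).Nonempty) :
    ∃ L : List X → List Y → ℝ, (∀ V W, 0 ≤ L V W) ∧
      (∀ V W, L V W ≠ 0 → V ∈ fiberPi FX ss ∧ W ∈ fiberPi FY ss ∧
        List.Forall₂ (fun x y => sx x = sy y ∧ (sx x = s₀ ∨ l x y ≠ 0)) V W) ∧
      HasMarginals (fiberPi FX ss) (fiberPi FY ss) (fun V => (V.map P).prod)
        (fun W => (W.map Q).prod) L ∧
      HasFewAmbiguous (fiberPi FX ss) (fun V => (V.map P).prod) (fun W => (W.map Q).prod) L
        (List.map (maskEntry sy s₀))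
        (θ ^ ss.count s₀ * ∑ V ∈ fiberPi FX ss, (V.map P).prod) := by
  let mk : List Y → List (Option Y) := List.map (maskEntry sy s₀)
  let R : List (Option Y) → ℝ := fun m => (m.map (maskWeight FY Q s₀)).prod
  have hR : ∀ m, 0 < R m := prod_map_pos (maskWeight_pos hQ hne)
  obtain ⟨κ, hκ, hsparse⟩ := IsRedistribution.exists_isSparse (fiberPi FX ss)
    (fiberPi (maskFiber FY s₀) ss) fun e => zipProd_nonneg (maskKernel_nonneg hP hl) e.1 e.2
  have hzip := HasMarginals.zipProd fun s hs => (hPQ s hs).mask (s₀ := s₀)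
  have hκm : HasMarginals (fiberPi FX ss) (fiberPi (maskFiber FY s₀) ss)
      (fun V => (V.map P).prod) R fun V m => κ (V, m) :=
    ⟨fun V hV => (hκ.row V hV).trans (hzip.row V hV),
      fun m hm => (hκ.col m hm).trans (hzip.col m hm)⟩
  have hmk := IsWeightMap.listMap (ss := ss) fun s _ => isWeightMap_maskEntry (s₀ := s₀)
    (Q := Q) hFY s
  let L V W := if W ∈ fiberPi FY ss then κ (V, mk W) / R (mk W) * (W.map Q).prod else 0
  have hL : ∀ V W, L V W ≠ 0 → W ∈ fiberPi FY ss ∧ κ (V, mk W) ≠ 0 := fun V W h => by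
    obtain ⟨hW, h⟩ := ite_ne_right_iff.1 h
    exact ⟨hW, fun h₀ => h (by rw [h₀, zero_div, zero_mul])⟩
  have hLm := hκm.comp_isWeightMap hmk fun m => (hR m).ne'
  refine ⟨L, fun V W => ?_, fun V W h => ?_,
    ⟨fun V hV => (Finset.sum_congr rfl fun W hW => if_pos hW).trans (hLm.row V hV),
      fun W hW => (Finset.sum_congr rfl fun V _ => if_pos hW).trans (hLm.col W hW)⟩, ?_⟩
  · dsimp only [L]
    split_ifs
    exacts [mul_nonneg (div_nonneg (hκ.nonneg _) (hR _).le) (prod_map_pos hQ W).le, le_rfl]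
  · obtain ⟨hW, h⟩ := hL V W h
    obtain ⟨hV, -, hzip⟩ := hκ.supp _ h
    exact ⟨hV, hW, forall₂_of_zipProd_mask_ne_zero hFX hFY hV hW hzip.ne'⟩
  · rw [hκm.sum_eq]
    refine hsparse.hasFewAmbiguous (fun m => (hR m).le) (pow_pos hθ _) fun V W h => ?_
    obtain ⟨hW, h⟩ := hL V W h
    exact ⟨hmk.mapsTo W hW, h, prod_le_pow_count_mul_prod_mask hFY hQ hθQ hW⟩

end Mask

/-! ### Marker blocks of bi-infinite sequences -/

section Word
variable {A : Type*} {w : List A} {N : ℕ} {x : ℤ → A} {z : ℤ → Bool} {v : List A} {S : List Bool}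
  {s t : ℤ} {j n : ℕ}

/-- The word of length `n` read in `x` from position `t`. -/
def word (x : ℤ → A) (t : ℤ) (n : ℕ) : List A :=
  (List.range n).map fun i : ℕ => x (t + i)

/-- The sequence recording the positions at which the marker `w` begins in `x`. -/
def markerBits (w : List A) (x : ℤ → A) (t : ℤ) : Bool :=
  open Classical in decide (word x t w.length = w)

/-- A cut of level `N`: a marker followed by `N - 1` positions without marker. -/
def IsCut (N : ℕ) (z : ℤ → Bool) (t : ℤ) : Prop := word z t N = gapWord N

/-- The level `N` block of `z` covering the origin is `S`, and the origin has offset `j` in it. -/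
def IsSkeletonAt (N : ℕ) (z : ℤ → Bool) (S : List Bool) (j : ℕ) : Prop :=
  word z (-j) S.length = S ∧ j < S.length ∧ IsCut N z (S.length - j) ∧ IsReturnWord (gapWord N) S

/-- The level `N` block of `x` covering the origin is filled with the word `v`, and the origin has
offset `j` in it. -/
def IsBlockAt (w : List A) (N : ℕ) (x : ℤ → A) (v : List A) (j : ℕ) : Prop :=
  word x (-j) v.length = v ∧ j < v.length ∧ IsCut N (markerBits w x) (v.length - j) ∧
    IsReturnWord (gapWord N) (skeleton w v)

/-- Translation of sequences. -/
def translate (t : ℤ) (x : ℤ → A) : ℤ → A := fun n => x (n + t)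

@[simp] lemma length_word (x : ℤ → A) (t : ℤ) (n : ℕ) : (word x t n).length = n := by
  simp [word]

lemma word_add (x : ℤ → A) (t : ℤ) (m n : ℕ) :
    word x t (m + n) = word x t m ++ word x (t + m) n := by
  simp [word, List.range_add, Function.comp_def, add_assoc]

lemma word_succ (x : ℤ → A) (t : ℤ) (n : ℕ) : word x t (n + 1) = x t :: word x (t + 1) n := by
  rw [add_comm n 1, word_add]
  simp [word]

@[simp] lemma word_zero (x : ℤ → A) (t : ℤ) : word x t 0 = [] := rfl

lemma word_one (x : ℤ → A) (t : ℤ) : word x t 1 = [x t] := by simp [word]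

lemma word_translate (x : ℤ → A) (s t : ℤ) (n : ℕ) :
    word (translate s x) t n = word x (t + s) n := by
  simp only [word, translate, add_right_comm]

lemma getElem?_word (x : ℤ → A) (t : ℤ) {n i : ℕ} (h : i < n) :
    (word x t n)[i]? = some (x (t + i)) := by
  simp [word, h]

lemma drop_word (x : ℤ → A) (t : ℤ) {n i : ℕ} (h : i ≤ n) :
    (word x t n).drop i = word x (t + i) (n - i) := by
  obtain ⟨d, rfl⟩ := Nat.exists_eq_add_of_le h
  rw [word_add, List.drop_append_of_le_length (by simp)]
  simp

lemma take_word (x : ℤ → A) (t : ℤ) {n i : ℕ} (h : i ≤ n) :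
    (word x t n).take i = word x t i := by
  obtain ⟨d, rfl⟩ := Nat.exists_eq_add_of_le h
  rw [word_add]
  simp

lemma prefix_word_iff {u : List A} (h : u.length ≤ n) :
    u <+: word x t n ↔ word x t u.length = u := by
  rw [List.prefix_iff_eq_take, take_word x t h, eq_comm]

lemma word_congr {y : ℤ → A} (h : ∀ i, t ≤ i → i < t + n → x i = y i) :
    word x t n = word y t n := by
  refine List.map_congr_left fun i hi => h _ (by omega) ?_
  have := List.mem_range.1 hi
  omega

lemma word_eq_iff : word x t v.length = v ↔ ∀ i : ℕ, ∀ h : i < v.length, x (t + i) = v[i] := by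
  simp [List.ext_getElem_iff, word]

lemma markerBits_translate (x : ℤ → A) (s : ℤ) :
    markerBits w (translate s x) = translate s (markerBits w x) := by
  funext t
  simp [markerBits, word_translate, translate]

lemma markerBits_eq_true : markerBits w x t = true ↔ word x t w.length = w := by
  simp [markerBits]

lemma IsCut.bit (hN : 0 < N) (h : IsCut N z t) : z t = true := by
  obtain ⟨n, rfl⟩ := Nat.exists_eq_succ_of_ne_zero hN.ne'
  rw [IsCut, word_succ, gapWord] at h
  exact (List.cons.inj h).1

lemma IsCut.bit_false (h : IsCut N z t) {i : ℕ} (hi : 0 < i) (hiN : i < N) :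
    z (t + i) = false := by
  have hget := getElem?_word z t hiN
  rw [show word z t N = gapWord N from h] at hget
  obtain ⟨n, rfl⟩ := Nat.exists_eq_succ_of_ne_zero hi.ne'
  have hn : n < N - 1 := by omega
  simp only [gapWord, Nat.succ_eq_add_one, List.getElem?_cons_succ, List.getElem?_replicate,
    hn, if_true, Option.some.injEq] at hget
  exact hget.symm

lemma IsCut.separated (hs : IsCut N z s) (ht : IsCut N z t) (hst : s < t) : s + N ≤ t := by
  by_contra! hlt
  have hfalse := hs.bit_false (i := (t - s).toNat) (by omega) (by omega)
  rw [show s + ((t - s).toNat : ℤ) = t by omega, ht.bit (by omega)] at hfalse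
  exact Bool.false_ne_true hfalse.symm

lemma IsCut.mono {M : ℕ} (h : M ≤ N) (hM : 0 < M) (hc : IsCut N z t) : IsCut M z t := by
  have hpre := gapWord_isPrefix h
  rwa [← show word z t N = gapWord N from hc, prefix_word_iff (by rwa [length_gapWord hM]),
    length_gapWord hM] at hpre

lemma isCut_translate : IsCut N (translate s z) t ↔ IsCut N z (t + s) := by
  rw [IsCut, IsCut, word_translate]

lemma skeleton_word (hw : IsNonOverlapping w) (h : markerBits w x (t + n) = true) :
    skeleton w (word x t n) = word (markerBits w x) t n := by
  induction n generalizing t with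
  | zero => rfl
  | succ n ih =>
    have htail : skeleton w (word x (t + 1) n) = word (markerBits w x) (t + 1) n := ih (by
      convert h using 2
      push_cast
      ring)
    have happend : word x t (n + 1) ++ w = word x t (n + 1 + w.length) := by
      rw [word_add x t (n + 1), markerBits_eq_true.1 h]
    have hpre := hw.prefix_append_iff (l := word x t (n + 1)) (by rw [word_succ]; simp)
      List.prefix_rfl
    rw [happend, prefix_word_iff (by omega), ← markerBits_eq_true] at hpre
    rw [word_succ (markerBits w x), ← htail, word_succ x, skeleton, ← word_succ]
    simp [← hpre]

lemma IsBlockAt.isSkeletonAt (hw : IsNonOverlapping w) (hN : 0 < N) (h : IsBlockAt w N x v j) :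
    IsSkeletonAt N (markerBits w x) (skeleton w v) j := by
  obtain ⟨hword, hj, hcut, hreturn⟩ := h
  refine ⟨?_, by simpa, by simpa, hreturn⟩
  conv_rhs => rw [← hword]
  rw [skeleton_word hw, length_skeleton]
  convert hcut.bit hN using 2
  ring

lemma gapWord_isPrefix_drop_iff (hN : 0 < N) (hS : word z t S.length = S)
    (hend : IsCut N z (t + S.length)) {i : ℕ} (hi : i < S.length) :
    gapWord N <+: S.drop i ↔ IsCut N z (t + i) := by
  have happend : S.drop i ++ gapWord N = word z (t + i) (S.length - i + N) := by
    rw [word_add, ← drop_word z _ hi.le, hS, ← show word z _ N = gapWord N from hend]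
    congr 2
    push_cast [hi.le]
    ring
  rw [← (isNonOverlapping_gapWord N).prefix_append_iff (by simpa using hi) List.prefix_rfl,
    happend, prefix_word_iff (by rw [length_gapWord hN]; omega), length_gapWord hN]
  rfl

lemma isSkeletonAt_iff (hN : 0 < N) :
    IsSkeletonAt N z S j ↔ word z (-j) S.length = S ∧ j < S.length ∧ IsCut N z (-j) ∧
      IsCut N z (S.length - j) ∧ ∀ i : ℤ, -j < i → i < S.length - j → ¬ IsCut N z i := by
  have hdrop (hS : word z (-j) S.length = S) (hend : IsCut N z (S.length - j)) (i : ℕ)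
      (hi : i < S.length) : gapWord N <+: S.drop i ↔ IsCut N z (-j + i) :=
    gapWord_isPrefix_drop_iff hN hS (by rwa [neg_add_eq_sub]) hi
  constructor
  · rintro ⟨hS, hj, hend, hpre, hinner⟩
    refine ⟨hS, hj, ?_, hend, fun i hi hi' hc => ?_⟩
    · simpa using (hdrop hS hend 0 (by omega)).1 (by simpa using hpre)
    · refine hinner (i + j).toNat (by omega) ((hdrop hS hend _ (by omega)).2 ?_)
      convert hc using 1
      omega
  · rintro ⟨hS, hj, hstart, hend, hinner⟩
    refine ⟨hS, hj, hend, ?_, fun i hi hpre => ?_⟩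
    · simpa using (hdrop hS hend 0 (by omega)).2 (by simpa using hstart)
    · have hiS : i < S.length := by
        by_contra! hle
        rw [List.drop_eq_nil_of_le hle, List.prefix_nil] at hpre
        exact gapWord_ne_nil N hpre
      exact hinner _ (by omega) (by omega) ((hdrop hS hend i hiS).1 hpre)

lemma IsSkeletonAt.unique (hN : 0 < N) {S' : List Bool} {j' : ℕ}
    (h : IsSkeletonAt N z S j) (h' : IsSkeletonAt N z S' j') : S = S' ∧ j = j' := by
  rw [isSkeletonAt_iff hN] at h h'
  obtain ⟨hS, hj, hstart, hend, hinner⟩ := h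
  obtain ⟨hS', hj', hstart', hend', hinner'⟩ := h'
  obtain rfl : j = j' := by
    rcases lt_trichotomy j j' with hlt | heq | hgt
    · exact absurd hstart (hinner' _ (by omega) (by omega))
    · exact heq
    · exact absurd hstart' (hinner _ (by omega) (by omega))
  have hlen : S.length = S'.length := by
    rcases lt_trichotomy S.length S'.length with hlt | heq | hgt
    · exact absurd hend (hinner' _ (by omega) (by omega))
    · exact heq
    · exact absurd hend' (hinner _ (by omega) (by omega))
  exact ⟨by rw [← hS, ← hS', hlen], rfl⟩

lemma IsBlockAt.unique (hw : IsNonOverlapping w) (hN : 0 < N) {v' : List A} {j' : ℕ}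
    (h : IsBlockAt w N x v j) (h' : IsBlockAt w N x v' j') : v = v' ∧ j = j' := by
  obtain ⟨hskel, rfl⟩ := (h.isSkeletonAt hw hN).unique hN (h'.isSkeletonAt hw hN)
  have hlen := congrArg List.length hskel
  rw [length_skeleton, length_skeleton] at hlen
  exact ⟨by rw [← h.1, ← h'.1, hlen], rfl⟩

lemma IsBlockAt.isCut_start (hw : IsNonOverlapping w) (hN : 0 < N) (h : IsBlockAt w N x v j) :
    IsCut N (markerBits w x) (-j) :=
  ((isSkeletonAt_iff hN).1 (h.isSkeletonAt hw hN)).2.2.1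

lemma exists_isSkeletonAt (hN : 0 < N) (hpast : ∃ t ≤ 0, IsCut N z t)
    (hfuture : ∃ t, 0 < t ∧ IsCut N z t) :
    ∃ j b : ℕ, 0 < b ∧ IsCut N z b ∧ IsSkeletonAt N z (word z (-j) (j + b)) j := by
  classical
  have hleft : ∃ j : ℕ, IsCut N z (-j) := by
    obtain ⟨t, ht, h⟩ := hpast
    exact ⟨(-t).toNat, by convert h using 1; omega⟩
  have hright : ∃ b : ℕ, 0 < b ∧ IsCut N z b := by
    obtain ⟨t, ht, h⟩ := hfuture
    exact ⟨t.toNat, by omega, by convert h using 1; omega⟩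
  obtain ⟨hb, hcut⟩ := Nat.find_spec hright
  refine ⟨Nat.find hleft, Nat.find hright, hb, hcut, ?_⟩
  rw [isSkeletonAt_iff hN]
  simp only [length_word]
  refine ⟨trivial, by omega, Nat.find_spec hleft, by simpa using hcut, fun i hi hi' hc => ?_⟩
  rcases le_or_gt i 0 with hi₀ | hi₀
  · refine Nat.find_min hleft (m := (-i).toNat) (by omega) ?_
    convert hc using 1
    omega
  · refine Nat.find_min hright (m := i.toNat) (by omega) ⟨by omega, ?_⟩
    convert hc using 1
    omega

lemma exists_isBlockAt (hw : IsNonOverlapping w) (hN : 0 < N)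
    (hpast : ∃ t ≤ 0, IsCut N (markerBits w x) t)
    (hfuture : ∃ t, 0 < t ∧ IsCut N (markerBits w x) t) : ∃ v j, IsBlockAt w N x v j := by
  obtain ⟨j, b, hb, hcut, hskel⟩ := exists_isSkeletonAt hN hpast hfuture
  have hbit : markerBits w x (-j + (j + b : ℕ)) = true := by simpa using hcut.bit hN
  refine ⟨word x (-j) (j + b), j, by simp, by simp; omega, by simpa using hcut, ?_⟩
  rw [skeleton_word hw hbit]
  exact hskel.2.2.2

lemma isBlockAt_translate (hj : j + 1 < v.length) :
    IsBlockAt w N (translate 1 x) v (j + 1) ↔ IsBlockAt w N x v j := by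
  rw [IsBlockAt, IsBlockAt, word_translate, markerBits_translate, isCut_translate,
    show -((j + 1 : ℕ) : ℤ) + 1 = -j by push_cast; ring,
    show (v.length : ℤ) - ((j + 1 : ℕ) : ℤ) + 1 = v.length - j by push_cast; ring]
  simp [hj, (Nat.lt_succ_self j).trans hj]

end Word

section Blocks
variable {A : Type*} {w : List A}

open Classical in
/-- The number of occurrences of `u` in a list. -/
def occCount (u : List A) : List A → ℕ
  | [] => 0
  | a :: l => (if u <+: a :: l then 1 else 0) + occCount u l

lemma occCount_append_ge (u l₁ l₂ : List A) :
    occCount u l₁ + occCount u l₂ ≤ occCount u (l₁ ++ l₂) := by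
  induction l₁ with
  | nil => simp [occCount]
  | cons a l ih =>
    have hpre : u <+: a :: l → u <+: a :: (l ++ l₂) := fun h =>
      h.trans (List.prefix_append (a :: l) l₂)
    simp only [occCount, List.cons_append]
    split_ifs <;> first | omega | tauto

lemma one_le_occCount_self {u : List A} (hu : u ≠ []) : 1 ≤ occCount u u := by
  cases u with
  | nil => exact absurd rfl hu
  | cons a l => simp [occCount]

lemma occCount_le_occCount_skeleton (hw : IsNonOverlapping w) {u : List A} (v : List A) :
    occCount (u ++ w) v ≤ occCount (skeleton w u) (skeleton w v) := by
  induction v with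
  | nil => simp [occCount]
  | cons a l ih =>
    have hpre : u ++ w <+: a :: l → skeleton w u <+: skeleton w (a :: l) := by
      rintro ⟨r, hr⟩
      rw [← hr, List.append_assoc, skeleton_append hw (List.prefix_append _ _)]
      exact List.prefix_append _ _
    simp only [occCount, skeleton] at hpre ⊢
    split_ifs <;> first | omega | tauto

lemma occCount_append_of_forall_not_isPrefix {u U s r : List A} (hu : IsNonOverlapping u)
    (hU : u <+: U) (hs : ∀ i, ¬ u <+: s.drop i) (hr : r = [] ∨ u <+: r) :
    occCount U (s ++ r) = occCount U r := by
  induction s with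
  | nil => rfl
  | cons a s ih =>
    rw [List.cons_append, occCount, ih (fun i => by simpa using hs (i + 1)), if_neg, zero_add]
    intro h
    refine hs 0 ?_
    rcases hr with rfl | hr
    · simpa using hU.trans h
    · exact (hu.prefix_append_iff (l := a :: s) (by simp) hr).1 (hU.trans h)

lemma eq_gapWord_of_isPrefix_append {N g : ℕ} (hg : 0 < g) {s r : List Bool}
    (hs : IsReturnWord (gapWord N) s) (hr : r = [] ∨ gapWord N <+: r)
    (h : gapWord g ++ gapWord N <+: s ++ r) : s = gapWord g := by
  have hlen : (gapWord g).length = g := length_gapWord hg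
  have hs₀ : 0 < s.length := List.length_pos_iff.2 fun h₀ =>
    gapWord_ne_nil N (List.prefix_nil.1 (h₀ ▸ hs.1))
  rcases lt_trichotomy s.length g with hlt | heq | hgt
  · have hdrop := h.drop s.length
    obtain ⟨k, hk⟩ : ∃ k, g - 1 - (s.length - 1) = k + 1 := ⟨g - s.length - 1, by omega⟩
    rw [List.drop_append_of_le_length (by omega), List.drop_left, gapWord_drop hs₀, hk,
      List.replicate_succ] at hdrop
    rcases hr with rfl | hr
    · simp at hdrop
    · obtain ⟨r', rfl⟩ := head_of_gapWord_isPrefix hr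
      simp [List.cons_prefix_cons] at hdrop
  · exact (List.prefix_of_prefix_length_le ((List.prefix_append _ _).trans h)
      (List.prefix_append _ _) (by omega)).eq_of_length (by omega) |>.symm
  · have hdrop := h.drop (gapWord g).length
    rw [List.drop_left, List.drop_append_of_le_length (by omega), hlen] at hdrop
    refine absurd ?_ (hs.2 g hg)
    rcases hr with rfl | hr
    · simpa using hdrop
    · exact ((isNonOverlapping_gapWord N).prefix_append_iff (by simpa using hgt) hr).1 hdrop

open Classical in
lemma occCount_flatten_le_count {N g : ℕ} (hN : 0 < N) (hg : N ≤ g) {ss : List (List Bool)}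
    (hss : ∀ s ∈ ss, IsReturnWord (gapWord N) s) :
    occCount (gapWord g ++ gapWord N) ss.flatten ≤ ss.count (gapWord g) := by
  induction ss with
  | nil => simp [occCount]
  | cons s ss ih =>
    obtain ⟨hs, htail⟩ := List.forall_mem_cons.1 hss
    have ih := ih htail
    have hr : ss.flatten = [] ∨ gapWord N <+: ss.flatten := by
      cases ss with
      | nil => exact .inl rfl
      | cons s' ss => exact .inr ((htail s' (by simp)).1.trans (List.prefix_append _ _))
    have heq := eq_gapWord_of_isPrefix_append (hN.trans_le hg) hs hr
    cases s with
    | nil => exact absurd (List.prefix_nil.1 hs.1) (gapWord_ne_nil N)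
    | cons a s =>
      rw [List.flatten_cons, List.cons_append, occCount,
        occCount_append_of_forall_not_isPrefix (isNonOverlapping_gapWord N)
          ((gapWord_isPrefix hg).trans (List.prefix_append _ _))
          (fun i => by simpa using hs.2 (i + 1) i.succ_pos) hr]
      split_ifs with hpre
      · rw [heq hpre, List.count_cons_self, add_comm]
        exact Nat.succ_le_succ ih
      · rw [zero_add]
        exact ih.trans List.count_le_count_cons

lemma exists_locate {V : List (List A)} {j : ℕ} (hj : j < V.flatten.length) :
    ∃ V₁ v V₂ i, V = V₁ ++ v :: V₂ ∧ j = V₁.flatten.length + i ∧ i < v.length := by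
  induction V generalizing j with
  | nil => simp at hj
  | cons v V ih =>
    rcases lt_or_ge j v.length with h | h
    · exact ⟨[], v, V, j, rfl, by simp, h⟩
    · rw [List.flatten_cons, List.length_append] at hj
      obtain ⟨V₁, v', V₂, i, rfl, hji, hi⟩ := ih (j := j - v.length) (by omega)
      refine ⟨v :: V₁, v', V₂, i, rfl, ?_, hi⟩
      rw [List.flatten_cons, List.length_append]
      omega

lemma gapWord_isPrefix_skeleton_flatten (hw : IsNonOverlapping w) {M : ℕ} {V : List (List A)}
    (hV : ∀ v ∈ V, IsReturnWord (gapWord M) (skeleton w v)) (hne : V ≠ []) :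
    gapWord M <+: skeleton w V.flatten := by
  rw [skeleton_flatten hw fun v hv =>
    prefix_of_head_skeleton (head_of_gapWord_isPrefix (hV v hv).1)]
  cases V with
  | nil => exact absurd rfl hne
  | cons v V => exact (hV v (by simp)).1.trans (List.prefix_append _ _)

lemma IsBlockAt.descend (hw : IsNonOverlapping w) {M N : ℕ} (hM : 0 < M) (hMN : M ≤ N)
    {x : ℤ → A} {V₁ V₂ : List (List A)} {v : List A} {i : ℕ}
    (h : IsBlockAt w N x (V₁ ++ v :: V₂).flatten (V₁.flatten.length + i)) (hi : i < v.length)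
    (hV : ∀ u ∈ V₁ ++ v :: V₂, IsReturnWord (gapWord M) (skeleton w u)) :
    IsBlockAt w M x v i := by
  have hskel := (h.isSkeletonAt hw (by omega)).1
  have hword := h.1
  have hend := h.2.2.1.mono hMN hM
  have hflat : (V₁ ++ v :: V₂).flatten = V₁.flatten ++ (v ++ V₂.flatten) := by simp
  rw [hflat, List.length_append, List.length_append, word_add, word_add] at hword
  obtain ⟨hv, -⟩ := List.append_inj (List.append_inj hword (by simp)).2 (by simp)
  refine ⟨by convert hv using 2; push_cast; ring, hi, ?_, hV v (by simp)⟩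
  rcases eq_or_ne V₂ [] with rfl | hV₂
  · convert hend using 1
    simp
  · have hpre := gapWord_isPrefix_skeleton_flatten hw
      (fun u hu => hV u (List.mem_append_right _ (List.mem_cons_of_mem _ hu))) hV₂
    have hdrop : (skeleton w (V₁ ++ v :: V₂).flatten).drop (V₁.flatten.length + v.length) =
        skeleton w V₂.flatten := by
      rw [← skeleton_drop, hflat, ← List.append_assoc, List.drop_left' (by simp)]
    rw [← hdrop, gapWord_isPrefix_drop_iff hM hskel (by
      rw [length_skeleton]
      convert hend using 1
      ring)] at hpre
    · convert hpre using 1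
      push_cast
      ring
    · have hlen := hpre.length_le
      rw [length_gapWord hM, List.length_drop] at hlen
      omega

variable [Finite A]

/-- The finite set of words with a given skeleton. -/
def fiber (w : List A) (S : List Bool) : Finset (List A) :=
  ((List.finite_length_eq A S.length).subset
    (fun v (hv : skeleton w v = S) => by simp [← hv]) : {v | skeleton w v = S}.Finite).toFinset

@[simp] lemma mem_fiber {S : List Bool} {v : List A} : v ∈ fiber w S ↔ skeleton w v = S := by
  simp [fiber]

lemma mem_fiberPi_fiber {ss : List (List Bool)} {V : List (List A)} :
    V ∈ fiberPi (fiber w) ss ↔ V.map (skeleton w) = ss :=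
  mem_fiberPi_iff fun _ _ => mem_fiber

lemma flatten_inj_fiberPi {ss : List (List Bool)} {V V' : List (List A)}
    (hV : V ∈ fiberPi (fiber w) ss) (hV' : V' ∈ fiberPi (fiber w) ss)
    (h : V.flatten = V'.flatten) : V = V' := by
  rw [mem_fiberPi_fiber] at hV hV'
  have hlen : ∀ U : List (List A), U.map List.length = (U.map (skeleton w)).map List.length :=
    fun U => by simp [Function.comp_def]
  exact List.eq_iff_flatten_eq.2 ⟨h, by rw [hlen, hlen, hV, hV']⟩

lemma sum_fiber_flatten (hw : IsNonOverlapping w) {ss : List (List Bool)}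
    (hs : ∀ s ∈ ss, [true] <+: s) (f : List A → ℝ) :
    ∑ v ∈ fiber w ss.flatten, f v = ∑ V ∈ fiberPi (fiber w) ss, f V.flatten := by
  refine (Finset.sum_bij (fun V _ => V.flatten) (fun V hV => ?_)
    (fun V hV V' hV' h => flatten_inj_fiberPi hV hV' h) (fun v hv => ?_) fun _ _ => rfl).symm
  · rw [mem_fiberPi_fiber] at hV
    rw [mem_fiber, skeleton_flatten hw, hV]
    exact fun v hv => prefix_of_head_skeleton (hs _ (hV ▸ List.mem_map_of_mem hv))
  · obtain ⟨V, hV, hflat⟩ := exists_split hw hs (mem_fiber.1 hv)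
    exact ⟨V, mem_fiberPi_fiber.2 hV, hflat⟩

end Blocks

/-! ### Bernoulli measures and the law of large numbers -/

section Weight
variable {A : Type*} {p : A → ℝ}

/-- The weight of a word under the product of the letter weights `p`. -/
def weight (p : A → ℝ) (v : List A) : ℝ := (v.map p).prod

lemma weight_pos (hp : ∀ a, 0 < p a) (v : List A) : 0 < weight p v := prod_map_pos hp v

lemma weight_append (u v : List A) : weight p (u ++ v) = weight p u * weight p v := by
  simp [weight]

lemma weight_flatten (V : List (List A)) : weight p V.flatten = (V.map (weight p)).prod := by
  induction V with
  | nil => rfl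
  | cons v V ih => rw [List.flatten_cons, weight_append, ih, List.map_cons, List.prod_cons]

end Weight

section DependsOn
variable {A : Type*} {F : Finset ℤ}

lemma exists_comp_restrict {β : Type*} [Nonempty β] {f : (ℤ → A) → β}
    (hf : DependsOn f (F : Set ℤ)) : ∃ g : (F → A) → β, f = g ∘ F.restrict :=
  dependsOn_iff_exists_comp.1 hf

lemma dependsOn_word (t : ℤ) (n : ℕ) {β : Type*} (f : List A → β) :
    DependsOn (fun x : ℤ → A => f (word x t n)) (Finset.Ico t (t + n) : Set ℤ) :=
  fun x y h => congrArg f (word_congr fun i hi hi' => h i (by simp [hi, hi']))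

lemma word_markerBits_congr {w : List A} {x y : ℤ → A} {t : ℤ} {n : ℕ}
    (h : ∀ i, t ≤ i → i < t + (n + w.length : ℕ) → x i = y i) :
    word (markerBits w x) t n = word (markerBits w y) t n := by
  refine word_congr fun i hi hi' => ?_
  rw [markerBits, markerBits, word_congr fun j hj hj' => h j (by omega) (by push_cast; omega)]

lemma dependsOn_isCut (w : List A) (t : ℤ) (N : ℕ) :
    DependsOn (fun x : ℤ → A => IsCut N (markerBits w x) t)
      (Finset.Ico t (t + (N + w.length : ℕ)) : Set ℤ) := fun x y h => by
  dsimp only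
  rw [IsCut, IsCut, word_markerBits_congr fun i hi hi' => h i (by simp at hi' ⊢; omega)]

variable [Finite A] [MeasurableSpace A] [DiscreteMeasurableSpace A]

lemma measurable_of_dependsOn {β : Type*} [Nonempty β] [MeasurableSpace β]
    {f : (ℤ → A) → β} (hf : DependsOn f (F : Set ℤ)) : Measurable f := by
  obtain ⟨g, rfl⟩ := exists_comp_restrict hf
  exact Measurable.of_discrete.comp (Finset.measurable_restrict F)

lemma measurableSet_of_dependsOn {E : Set (ℤ → A)} (hE : DependsOn (· ∈ E) (F : Set ℤ)) :
    MeasurableSet E :=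
  measurableSet_setOfPred.2 (measurable_of_dependsOn hE)

end DependsOn

lemma nonempty_of_isProbVector {A : Type*} [Fintype A] {p : A → ℝ} (hp : IsProbVector p) :
    Nonempty A := by
  by_contra! hA
  simpa using hp.2

lemma isProbabilityMeasure_of_isBernoulliMeasure {A : Type*} [MeasurableSpace A] [hA : Nonempty A]
    {p : A → ℝ} {μ : Measure (ℤ → A)} (hμ : IsBernoulliMeasure μ p) : IsProbabilityMeasure μ :=
  ⟨by simpa using hμ ∅ fun _ => hA.some⟩

lemma measurable_translate {A : Type*} [MeasurableSpace A] (t : ℤ) :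
    Measurable (translate t : (ℤ → A) → ℤ → A) :=
  measurable_pi_lambda _ fun n => measurable_pi_apply (n + t)

section Measure
variable {A : Type*} [Fintype A] [MeasurableSpace A] {p : A → ℝ} {μ : Measure (ℤ → A)}

/-- The measure on the alphabet that gives each letter `a` the mass `p a`. -/
def letterMeasure (p : A → ℝ) : Measure A := ∑ a, ENNReal.ofReal (p a) • Measure.dirac a

lemma isProbabilityMeasure_letterMeasure (hp : IsProbVector p) :
    IsProbabilityMeasure (letterMeasure p) := by
  constructor
  simp only [letterMeasure, Measure.coe_finsetSum, Measure.coe_smul, Finset.sum_apply,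
    Pi.smul_apply, measure_univ, smul_eq_mul, mul_one]
  rw [← ENNReal.ofReal_sum_of_nonneg fun i _ => (hp.1 i).le, hp.2, ENNReal.ofReal_one]

lemma measure_word (hp : IsProbVector p) (hμ : IsBernoulliMeasure μ p) (t : ℤ) (v : List A) :
    μ {x | word x t v.length = v} = ENNReal.ofReal (weight p v) := by
  have hA := nonempty_of_isProbVector hp
  have hcylinder : {x : ℤ → A | word x t v.length = v} =
      {x | ∀ i ∈ (Finset.range v.length).map (Nat.castEmbedding.trans (addLeftEmbedding t)),
        x i = v.getD (i - t).toNat hA.some} := by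
    ext x
    simp +contextual [word_eq_iff]
  rw [hcylinder, hμ _ fun i => v.getD (i - t).toNat hA.some, Finset.prod_map, weight]
  simp only [Function.Embedding.trans_apply, Nat.castEmbedding_apply, addLeftEmbedding_apply,
    add_sub_cancel_left, Int.toNat_natCast]
  rw [← Fin.prod_univ_eq_prod_range (fun i => p (v.getD i hA.some)), ← List.prod_ofFn]
  congr 2
  exact List.ext_getElem (by simp) (by simp)

variable [DiscreteMeasurableSpace A]

lemma letterMeasure_singleton (a : A) : letterMeasure p {a} = ENNReal.ofReal (p a) := by
  classical
  simp [letterMeasure, Set.indicator_apply]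

lemma eq_infinitePi (hp : IsProbVector p) (hμ : IsBernoulliMeasure μ p) :
    haveI := isProbabilityMeasure_letterMeasure hp
    μ = Measure.infinitePi fun _ : ℤ => letterMeasure p := by
  classical
  have := isProbabilityMeasure_letterMeasure hp
  have hA := nonempty_of_isProbVector hp
  have := isProbabilityMeasure_of_isBernoulliMeasure hμ
  have hlimit : IsProjectiveLimit μ fun I : Finset ℤ =>
      Measure.pi fun _ : I => letterMeasure p := fun I => by
    refine Measure.ext_of_singleton fun s => ?_
    have hcylinder : (I.restrict : (ℤ → A) → (I → A)) ⁻¹' {s} =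
        {x | ∀ i ∈ I, x i = if h : i ∈ I then s ⟨i, h⟩ else hA.some} := by
      ext x
      simp +contextual [funext_iff, Finset.restrict]
    rw [Measure.map_apply (Finset.measurable_restrict I) (measurableSet_singleton s),
      Measure.pi_singleton, hcylinder, hμ I fun i => if h : i ∈ I then s ⟨i, h⟩ else hA.some,
      ENNReal.ofReal_prod_of_nonneg fun i _ => (hp.1 _).le, ← Finset.prod_attach,
      Finset.univ_eq_attach]
    exact Finset.prod_congr rfl fun i _ => by simp [letterMeasure_singleton]
  exact hlimit.unique (Measure.isProjectiveLimit_infinitePi fun _ : ℤ => letterMeasure p)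

lemma isBernoulliMeasure_unique (hp : IsProbVector p) {μ' : Measure (ℤ → A)}
    (hμ : IsBernoulliMeasure μ p) (hμ' : IsBernoulliMeasure μ' p) : μ = μ' :=
  (eq_infinitePi hp hμ).trans (eq_infinitePi hp hμ').symm

lemma exists_isBernoulliMeasure (hp : IsProbVector p) :
    ∃ μ : Measure (ℤ → A), IsBernoulliMeasure μ p := by
  have := isProbabilityMeasure_letterMeasure hp
  refine ⟨Measure.infinitePi fun _ : ℤ => letterMeasure p, fun F s => ?_⟩
  have hcylinder : {x : ℤ → A | ∀ i ∈ F, x i = s i} = Set.pi F fun i => {s i} := by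
    ext x
    simp [Set.mem_pi]
  rw [hcylinder, Measure.infinitePi_pi _ (fun i _ => measurableSet_singleton _),
    ENNReal.ofReal_prod_of_nonneg fun i _ => (hp.1 _).le]
  exact Finset.prod_congr rfl fun i _ => letterMeasure_singleton _

lemma measurePreserving_translate (hp : IsProbVector p) (hμ : IsBernoulliMeasure μ p) (t : ℤ) :
    MeasurePreserving (translate t) μ μ := by
  refine ⟨measurable_translate t, isBernoulliMeasure_unique hp (fun F s => ?_) hμ⟩
  have hcylinder : MeasurableSet {x : ℤ → A | ∀ i ∈ F, x i = s i} :=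
    measurableSet_of_dependsOn (F := F) fun x y h =>
      propext (forall₂_congr fun i hi => by rw [h i hi])
  have htranslate := hμ (F.map (addRightEmbedding t)) fun i => s (i - t)
  simp only [Finset.prod_map, addRightEmbedding_apply, add_sub_cancel_right] at htranslate
  rw [Measure.map_apply (measurable_translate t) hcylinder, ← htranslate]
  congr 1
  ext x
  simp [translate]

lemma indepFun_of_dependsOn (hp : IsProbVector p) (hμ : IsBernoulliMeasure μ p)
    {β γ : Type*} [Nonempty β] [MeasurableSpace β] [Nonempty γ] [MeasurableSpace γ]
    {F G : Finset ℤ} (hFG : Disjoint F G) {f : (ℤ → A) → β} {g : (ℤ → A) → γ}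
    (hf : DependsOn f (F : Set ℤ)) (hg : DependsOn g (G : Set ℤ)) : IndepFun f g μ := by
  have := isProbabilityMeasure_letterMeasure hp
  obtain ⟨f, rfl⟩ := exists_comp_restrict hf
  obtain ⟨g, rfl⟩ := exists_comp_restrict hg
  have hcoord : iIndepFun (fun (i : ℤ) (x : ℤ → A) => x i) μ := by
    rw [eq_infinitePi hp hμ]
    exact iIndepFun_infinitePi (X := fun _ a => a) (fun _ => measurable_id)
  exact (hcoord.indepFun_finset F G hFG (fun i => measurable_pi_apply i)).comp
    .of_discrete .of_discrete

lemma measure_inter_of_dependsOn (hp : IsProbVector p) (hμ : IsBernoulliMeasure μ p)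
    {F G : Finset ℤ} (hFG : Disjoint F G) {E E' : Set (ℤ → A)}
    (hE : DependsOn (· ∈ E) (F : Set ℤ)) (hE' : DependsOn (· ∈ E') (G : Set ℤ)) :
    μ (E ∩ E') = μ E * μ E' := by
  have hmul := (indepFun_of_dependsOn hp hμ hFG hE hE').measure_inter_preimage_eq_mul
    {True} {True} (measurableSet_singleton _) (measurableSet_singleton _)
  have hpreimage (E : Set (ℤ → A)) : (fun x => x ∈ E) ⁻¹' {True} = E := by
    ext x
    simp
  rwa [hpreimage, hpreimage] at hmul

end Measure

section WeakLaw
variable {A : Type*}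

lemma eventually_linear {s : ℕ → ℝ} {c ε : ℝ} (hε : 0 < ε)
    (h : Tendsto (fun n : ℕ => s n / n) atTop (nhds c)) :
    ∃ M : ℕ, ∀ n ≥ M, |s n - c * n| ≤ ε * n := by
  obtain ⟨M, hM⟩ := Metric.tendsto_atTop.1 h ε hε
  refine ⟨M + 1, fun n hn => ?_⟩
  have hdist := hM n (by omega)
  have hn0 : (0 : ℝ) < n := by exact_mod_cast (by omega : 0 < n)
  rw [Real.dist_eq] at hdist
  rw [show s n - c * n = (s n / n - c) * n by field_simp, abs_mul, abs_of_pos hn0]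
  gcongr

lemma injective_negSucc : Function.Injective (fun i : ℕ => -((i : ℤ) + 1)) := by
  intro a b h
  simpa using h

lemma neg_log_weight_word {p : A → ℝ} (hp : ∀ a, 0 < p a) (x : ℤ → A) (t : ℤ) (n : ℕ) :
    -Real.log (weight p (word x t n)) =
      ∑ i ∈ Finset.range n, -Real.log (weight p (word x (t + i) 1)) := by
  induction n with
  | zero => simp [weight]
  | succ n ih =>
    rw [word_add, weight_append, Real.log_mul (weight_pos hp _).ne' (weight_pos hp _).ne',
      Finset.sum_range_succ, ← ih]
    ring

open Classical in
lemma sum_grid_le_occCount {u : List A} (hu : u ≠ []) (x : ℤ → A) (t : ℤ) (n : ℕ) :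
    ∑ i ∈ Finset.range n, (if word x (t + (u.length * i : ℕ)) u.length = u then (1 : ℝ) else 0) ≤
      occCount u (word x t (u.length * n)) := by
  induction n with
  | zero => simp
  | succ n ih =>
    set t' := t + (u.length * n : ℕ)
    have hlast : (if word x t' u.length = u then (1 : ℝ) else 0) ≤
        occCount u (word x t' u.length) := by
      split_ifs with h
      · rw [h]
        exact_mod_cast one_le_occCount_self hu
      · positivity
    have happend : (occCount u (word x t (u.length * n)) : ℝ) + occCount u (word x t' u.length) ≤
        occCount u (word x t (u.length * n) ++ word x t' u.length) := by
      exact_mod_cast occCount_append_ge _ _ _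
    rw [Finset.sum_range_succ, mul_add, mul_one, word_add]
    linarith

lemma occCount_word_le (u : List A) (x : ℤ → A) (t : ℤ) (k m n : ℕ) :
    occCount u (word x (t + k) m) ≤ occCount u (word x t (k + m + n)) := by
  rw [word_add, word_add]
  have hleft := occCount_append_ge u (word x t k) (word x (t + k) m)
  have hright := occCount_append_ge u (word x t k ++ word x (t + k) m) (word x (t + (k + m : ℕ)) n)
  omega

variable [MeasurableSpace A] [DiscreteMeasurableSpace A] {p : A → ℝ} {μ : Measure (ℤ → A)}

lemma measurableSet_word [Finite A] (t : ℤ) (n : ℕ) (E : Set (List A)) :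
    MeasurableSet {x : ℤ → A | word x t n ∈ E} :=
  measurableSet_of_dependsOn (dependsOn_word t n (· ∈ E))

variable [Fintype A]

open Classical in
lemma integral_ite_word (hp : IsProbVector p) (hμ : IsBernoulliMeasure μ p) (t : ℤ) (u : List A) :
    ∫ x, (if word x t u.length = u then (1 : ℝ) else 0) ∂μ = weight p u := by
  have hindicator : (fun x : ℤ → A => if word x t u.length = u then (1 : ℝ) else 0) =
      {x | word x t u.length = u}.indicator 1 := by
    funext x
    simp [Set.indicator_apply]
  have hmeas : MeasurableSet {x : ℤ → A | word x t u.length = u} :=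
    measurableSet_word t u.length {u}
  rw [hindicator, integral_indicator_one hmeas, measureReal_def, measure_word hp hμ,
    ENNReal.toReal_ofReal (weight_pos hp.1 u).le]

lemma integral_letter (hp : IsProbVector p) (hμ : IsBernoulliMeasure μ p) (g : A → ℝ) :
    ∫ x, g (x 0) ∂μ = ∑ a, p a * g a := by
  have := nonempty_of_isProbVector hp
  have := isProbabilityMeasure_of_isBernoulliMeasure hμ
  have hcoord : Measurable fun x : ℤ → A => x 0 := measurable_pi_apply 0
  rw [← integral_map (f := g) hcoord.aemeasurable Measurable.of_discrete.aestronglyMeasurable,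
    integral_fintype (Integrable.of_finite)]
  refine Finset.sum_congr rfl fun a _ => ?_
  have hletter := measure_word hp hμ 0 [a]
  simp only [List.length_singleton, word_one, List.cons.injEq, and_true] at hletter
  rw [smul_eq_mul, measureReal_def, Measure.map_apply hcoord (measurableSet_singleton a),
    show (fun x : ℤ → A => x 0) ⁻¹' {a} = {x | x 0 = a} from rfl, hletter]
  simp [weight, (hp.1 a).le]

lemma tendsto_average (hp : IsProbVector p) (hμ : IsBernoulliMeasure μ p) (f : List A → ℝ)
    {m : ℕ} {σ : ℕ → ℤ} (hσ : Function.Injective σ) :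
    ∀ᵐ x ∂μ, Tendsto (fun n : ℕ => (∑ i ∈ Finset.range n, f (word x (m * σ i) m)) / n) atTop
      (nhds (∫ x, f (word x 0 m) ∂μ)) := by
  have := nonempty_of_isProbVector hp
  have := isProbabilityMeasure_of_isBernoulliMeasure hμ
  have hdep (t : ℤ) : DependsOn (fun x : ℤ → A => f (word x t m))
    (Finset.Ico t (t + m) : Finset ℤ) := dependsOn_word t m f
  have hmeas (t : ℤ) : Measurable (fun x : ℤ → A => f (word x t m)) :=
    measurable_of_dependsOn (hdep t)
  have hident (t s : ℤ) : IdentDistrib (fun x : ℤ → A => f (word x t m))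
      (fun x => f (word x s m)) μ μ := by
    refine ⟨(hmeas t).aemeasurable, (hmeas s).aemeasurable, ?_⟩
    have htranslate : (fun x : ℤ → A => f (word x t m)) =
        (fun x => f (word x s m)) ∘ translate (t - s) := by
      funext x
      simp [word_translate]
    rw [htranslate, ← Measure.map_map (hmeas s) (measurable_translate _),
      (measurePreserving_translate hp hμ _).map_eq]
  have hint : Integrable (fun x => f (word x (m * σ 0) m)) μ := by
    have hfinite : (Set.range fun x : ℤ → A => f (word x (m * σ 0) m)).Finite := by
      refine ((List.finite_length_eq A m).image f).subset ?_
      rintro _ ⟨x, rfl⟩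
      exact ⟨_, by simp, rfl⟩
    obtain ⟨C, hC⟩ := hfinite.isBounded.exists_norm_le
    exact Integrable.of_bound (hmeas _).aestronglyMeasurable C (ae_of_all _ fun x => hC _ ⟨x, rfl⟩)
  rw [(hident 0 (m * σ 0)).integral_eq]
  refine strong_law_ae_real (fun i x => f (word x (m * σ i) m)) hint (fun i j hij => ?_)
    fun i => hident _ _
  refine indepFun_of_dependsOn hp hμ (Finset.disjoint_left.2 fun t hi hj => ?_) (hdep _) (hdep _)
  rw [Finset.mem_Ico] at hi hj
  rcases (hσ.ne hij).lt_or_gt with h | h <;> nlinarith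

lemma ae_average_two_sided (hp : IsProbVector p) (hμ : IsBernoulliMeasure μ p) (f : List A → ℝ)
    (m : ℕ) {c δ : ℝ} (hc : ∫ x, f (word x 0 m) ∂μ = c) (hδ : 0 < δ) :
    ∀ᵐ x ∂μ, ∃ M : ℕ, ∀ n ≥ M,
      |∑ i ∈ Finset.range n, f (word x (m * i : ℕ) m) - c * n| ≤ δ * n ∧
      |∑ i ∈ Finset.range n, f (word x (-(m * n : ℕ) + (m * i : ℕ)) m) - c * n| ≤ δ * n := by
  filter_upwards [tendsto_average hp hμ f (m := m) (σ := Nat.cast) Nat.cast_injective,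
    tendsto_average hp hμ f (m := m) injective_negSucc] with x hfuture hpast
  rw [hc] at hfuture hpast
  obtain ⟨M₁, hM₁⟩ := eventually_linear hδ hfuture
  obtain ⟨M₂, hM₂⟩ := eventually_linear hδ hpast
  refine ⟨max M₁ M₂, fun n hn => ⟨by simpa using hM₁ n (le_of_max_le_left hn), ?_⟩⟩
  have hreflect : ∑ i ∈ Finset.range n, f (word x (-(m * n : ℕ) + (m * i : ℕ)) m) =
      ∑ i ∈ Finset.range n, f (word x (m * -((i : ℤ) + 1)) m) := by
    rw [← Finset.sum_range_reflect]
    refine Finset.sum_congr rfl fun i hi => ?_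
    rw [Finset.mem_range] at hi
    congr 2
    rw [Nat.sub_sub, Nat.cast_mul, Nat.cast_mul, Nat.cast_sub (by omega)]
    push_cast
    ring
  rw [hreflect]
  exact hM₂ n (le_of_max_le_right hn)

lemma ae_entropy_typical (hp : IsProbVector p) (hμ : IsBernoulliMeasure μ p) {δ : ℝ} (hδ : 0 < δ) :
    ∀ᵐ x ∂μ, ∃ M : ℕ, ∀ a b : ℕ, M ≤ a → M ≤ b →
      |-Real.log (weight p (word x (-a) (a + b))) - vecEntropy p * (a + b : ℕ)| ≤
        δ * (a + b : ℕ) := by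
  have hint : ∫ x, -Real.log (weight p (word x 0 1)) ∂μ = vecEntropy p := by
    simp only [word_one, weight, List.map_cons, List.map_nil, List.prod_cons, List.prod_nil,
      mul_one]
    rw [integral_letter hp hμ (fun a => -Real.log (p a)), vecEntropy]
    simp
  filter_upwards [ae_average_two_sided hp hμ (fun v => -Real.log (weight p v)) 1 hint hδ]
    with x ⟨M, hM⟩
  refine ⟨M, fun a b ha hb => ?_⟩
  have hfuture : |-Real.log (weight p (word x 0 b)) - vecEntropy p * b| ≤ δ * b := by
    simpa [neg_log_weight_word hp.1 x 0 b] using (hM b hb).1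
  have hpast : |-Real.log (weight p (word x (-a) a)) - vecEntropy p * a| ≤ δ * a := by
    simpa [neg_log_weight_word hp.1 x (-a) a] using (hM a ha).2
  rw [word_add, weight_append, Real.log_mul (weight_pos hp.1 _).ne' (weight_pos hp.1 _).ne',
    neg_add_cancel]
  push_cast
  rw [abs_le] at *
  constructor <;> nlinarith

lemma ae_occCount_linear (hp : IsProbVector p) (hμ : IsBernoulliMeasure μ p) {u : List A}
    (hu : u ≠ []) :
    ∀ᵐ x ∂μ, ∃ M : ℕ, ∀ a b : ℕ, M ≤ a → M ≤ b →
      weight p u / (4 * u.length) * (a + b : ℕ) ≤ occCount u (word x (-a) (a + b)) := by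
  classical
  set m := u.length
  have hm : 0 < m := List.length_pos_iff.2 hu
  have hpos := weight_pos hp.1 u
  filter_upwards [ae_average_two_sided hp hμ (fun v => if v = u then 1 else 0) m
    (integral_ite_word hp hμ 0 u) (half_pos hpos)] with x ⟨M, hM⟩
  refine ⟨m * (M + 1), fun a b ha hb => ?_⟩
  have hdiv {c : ℕ} (hc : m * (M + 1) ≤ c) : M ≤ c / m ∧ (c : ℝ) ≤ 2 * m * (c / m : ℕ) := by
    have hM_lt : M + 1 ≤ c / m := (Nat.le_div_iff_mul_le hm).2 (by rwa [mul_comm])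
    have hlt : c < m * (c / m + 1) := Nat.lt_mul_div_succ c hm
    exact ⟨by omega, by exact_mod_cast (by nlinarith : c ≤ 2 * m * (c / m))⟩
  have hpast := sum_grid_le_occCount hu x (-(m * (a / m) : ℕ)) (a / m)
  have hfuture := sum_grid_le_occCount hu x 0 (b / m)
  simp only [zero_add] at hfuture
  have happend : (occCount u (word x (-(m * (a / m) : ℕ)) (m * (a / m))) : ℝ) +
      occCount u (word x 0 (m * (b / m))) ≤ occCount u (word x (-a) (a + b)) := by
    have hstart : -(a : ℤ) + (a % m : ℕ) = -(m * (a / m) : ℕ) := by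
      have := Nat.mod_add_div a m
      omega
    have hwindow := occCount_word_le u x (-a) (a % m) (m * (a / m) + m * (b / m)) (b % m)
    rw [show a % m + (m * (a / m) + m * (b / m)) + b % m = a + b by
      rw [← add_assoc, Nat.mod_add_div, add_assoc, Nat.div_add_mod], hstart, word_add,
      neg_add_cancel] at hwindow
    exact_mod_cast (occCount_append_ge _ _ _).trans hwindow
  suffices hgrid : weight p u / (4 * m) * (a + b : ℕ) ≤
      weight p u / 2 * ((a / m : ℕ) + (b / m : ℕ)) by
    linarith [(abs_le.1 (hM _ (hdiv ha).1).2).1, (abs_le.1 (hM _ (hdiv hb).1).1).1]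
  rw [div_mul_eq_mul_div, div_le_iff₀ (by positivity)]
  push_cast
  nlinarith [(hdiv ha).2, (hdiv hb).2]

end WeakLaw

/-! ### The law of the marker blocks -/

/-- A Bernoulli measure together with a marker word that does not overlap itself and that leaves
some freedom inside long gaps. -/
structure IsMarked {A : Type*} [Fintype A] [MeasurableSpace A] (p : A → ℝ) (μ : Measure (ℤ → A))
    (w : List A) : Prop where
  prob : IsProbVector p
  bern : IsBernoulliMeasure μ p
  nonOverlap : IsNonOverlapping w
  ne_nil : w ≠ []
  rich : ∃ g₀, ∀ g ≥ g₀, ∃ v v', v ≠ v' ∧ skeleton w v = gapWord g ∧ skeleton w v' = gapWord g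

/-- The probability of a cut of level `N`. -/
def cutProb {A : Type*} [MeasurableSpace A] (μ : Measure (ℤ → A)) (w : List A) (N : ℕ) : ℝ≥0∞ :=
  μ {x | IsCut N (markerBits w x) 0}

lemma exists_measure_compl_le {X : Type*} [MeasurableSpace X] {μ : Measure X} [IsFiniteMeasure μ]
    {G : ℕ → Set X} (hG : ∀ M, MeasurableSet (G M)) (hmono : Monotone G)
    (hae : ∀ᵐ x ∂μ, ∃ M, x ∈ G M) {ε : ℝ≥0∞} (hε : ε ≠ 0) : ∃ M, μ (G M)ᶜ ≤ ε := by
  have hlim := tendsto_measure_iInter_atTop (μ := μ) (fun M => (hG M).compl.nullMeasurableSet)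
    (fun _ _ h => Set.compl_subset_compl.2 (hmono h)) ⟨0, measure_ne_top _ _⟩
  have hzero : μ (⋂ M, (G M)ᶜ) = 0 := by
    refine measure_mono_null (fun x hx => ?_) hae
    rintro ⟨M, hM⟩
    exact Set.mem_iInter.1 hx M hM
  rw [hzero] at hlim
  obtain ⟨M, hM⟩ := ((tendsto_order.1 hlim).2 _ (pos_iff_ne_zero.2 hε)).exists
  exact ⟨M, hM.le⟩

section Markers
variable {A : Type*} {w : List A} {N : ℕ}

lemma isCut_of_word (hw : IsNonOverlapping w) (hN : 0 < N) {u : List A}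
    (hu : skeleton w u = gapWord N) {x : ℤ → A} {t : ℤ}
    (h : word x t (u ++ w).length = u ++ w) : IsCut N (markerBits w x) t := by
  have hlength : u.length = N := by rw [← length_skeleton (w := w), hu, length_gapWord hN]
  rw [List.length_append, word_add] at h
  obtain ⟨hgap, hmarker⟩ := List.append_inj h (by simp)
  rw [IsCut, ← hu, ← hlength, ← skeleton_word hw (markerBits_eq_true.2 hmarker), hgap]

lemma markerBits_separated (hw : IsNonOverlapping w) {x : ℤ → A} {s t : ℤ}
    (hs : markerBits w x s = true) (ht : markerBits w x t = true) (hst : s < t) :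
    s + w.length ≤ t := by
  rw [markerBits_eq_true] at hs ht
  by_contra! hlt
  obtain ⟨i, rfl⟩ : ∃ i : ℕ, t = s + i := ⟨(t - s).toNat, by omega⟩
  refine hw i (by omega) (by omega) ?_
  have hdrop : w.drop i = word x (s + i) (w.length - i) := by
    rw [← drop_word x s (by omega), hs]
  rw [hdrop, ← take_word x (s + i) (Nat.sub_le w.length i), ht]
  exact ⟨_, List.take_append_drop _ _⟩

lemma dependsOn_forall_markerBits (w : List A) (F : Finset ℤ) :
    DependsOn (fun x : ℤ → A => x ∈ {x | ∀ t ∈ F, markerBits w x t = true})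
      (F.biUnion fun s => Finset.Ico s (s + w.length) : Finset ℤ) := fun x y h => by
  simp only [Set.mem_ofPred_eq, markerBits_eq_true]
  refine propext (forall₂_congr fun s hs => ?_)
  rw [word_congr fun i hi hi' => h i ?_]
  exact Finset.mem_coe.2 (Finset.mem_biUnion.2 ⟨s, hs, Finset.mem_Ico.2 ⟨hi, hi'⟩⟩)

variable [Finite A] [MeasurableSpace A] [DiscreteMeasurableSpace A]

lemma measurableSet_isCut (w : List A) (N : ℕ) (t : ℤ) :
    MeasurableSet {x : ℤ → A | IsCut N (markerBits w x) t} :=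
  measurableSet_of_dependsOn (dependsOn_isCut w t N)

lemma measurableSet_isBlockAt (w : List A) (N : ℕ) (v : List A) (j : ℕ) :
    MeasurableSet {x : ℤ → A | IsBlockAt w N x v j} :=
  (measurableSet_word _ _ {v}).inter <| (MeasurableSet.const _).inter <|
    (measurableSet_isCut _ _ _).inter (MeasurableSet.const _)

lemma measurable_markerBits (w : List A) : Measurable (markerBits w : (ℤ → A) → ℤ → Bool) :=
  measurable_pi_lambda _ fun t => measurable_of_dependsOn
    (dependsOn_word t w.length fun v => open Classical in decide (v = w))

omit [MeasurableSpace A] [DiscreteMeasurableSpace A] in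
lemma setOf_isSkeletonAt (hw : IsNonOverlapping w) (hN : 0 < N) (S : List Bool) (j : ℕ) :
    {x : ℤ → A | IsSkeletonAt N (markerBits w x) S j} =
      ⋃ v ∈ fiber w S, {x | IsBlockAt w N x v j} := by
  ext x
  simp only [Set.mem_ofPred_eq, Set.mem_iUnion, exists_prop, mem_fiber]
  refine ⟨fun ⟨hword, hj, hcut, hS⟩ => ?_, fun ⟨v, hv, h⟩ => hv ▸ h.isSkeletonAt hw hN⟩
  have hskeleton : skeleton w (word x (-j) S.length) = S := by
    rw [skeleton_word hw, hword]
    convert hcut.bit hN using 2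
    ring
  exact ⟨word x (-j) S.length, hskeleton, by simp, by simpa, by simpa, by rwa [hskeleton]⟩

lemma measurableSet_isSkeletonAt (hw : IsNonOverlapping w) (hN : 0 < N) (S : List Bool) (j : ℕ) :
    MeasurableSet {x : ℤ → A | IsSkeletonAt N (markerBits w x) S j} := by
  rw [setOf_isSkeletonAt hw hN]
  exact Finset.measurableSet_biUnion _ fun v _ => measurableSet_isBlockAt w N v j

end Markers

section BlockMeasure
variable {A : Type*} [Fintype A] [MeasurableSpace A] {p : A → ℝ} {μ : Measure (ℤ → A)}
  {w : List A} {N : ℕ}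

lemma IsMarked.isProbabilityMeasure (h : IsMarked p μ w) : IsProbabilityMeasure μ :=
  have := nonempty_of_isProbVector h.prob
  isProbabilityMeasure_of_isBernoulliMeasure h.bern

lemma IsMarked.cutProb_ne_top (h : IsMarked p μ w) (N : ℕ) : cutProb μ w N ≠ ∞ := by
  have := h.isProbabilityMeasure
  exact measure_ne_top _ _

lemma IsMarked.cutProb_pos (h : IsMarked p μ w) (hN : 0 < N) {u : List A}
    (hu : skeleton w u = gapWord N) : 0 < cutProb μ w N := by
  refine lt_of_lt_of_le ?_ (measure_mono (μ := μ) (s := {x | word x 0 (u ++ w).length = u ++ w})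
    fun x hx => isCut_of_word h.nonOverlap hN hu hx)
  rw [measure_word h.prob h.bern]
  exact ENNReal.ofReal_pos.2 (weight_pos h.prob.1 _)

variable [DiscreteMeasurableSpace A]

lemma IsMarked.measure_isCut (h : IsMarked p μ w) (N : ℕ) (t : ℤ) :
    μ {x | IsCut N (markerBits w x) t} = cutProb μ w N := by
  have htranslate : {x : ℤ → A | IsCut N (markerBits w x) t} =
      translate t ⁻¹' {x | IsCut N (markerBits w x) 0} := by
    ext x
    simp [markerBits_translate, isCut_translate]
  rw [htranslate, (measurePreserving_translate h.prob h.bern t).measure_preimage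
    (measurableSet_isCut w N 0).nullMeasurableSet, cutProb]

lemma IsMarked.mul_cutProb_le (h : IsMarked p μ w) (N : ℕ) : N * cutProb μ w N ≤ 1 := by
  have := h.isProbabilityMeasure
  have hdisjoint : Pairwise (Function.onFun Disjoint
      fun i : Fin N => {x : ℤ → A | IsCut N (markerBits w x) i}) := by
    refine (pairwise_disjoint_on _).2 fun i j hij => Set.disjoint_left.2 fun x hi hj => ?_
    have := IsCut.separated hi hj (by exact_mod_cast hij)
    omega
  have hunion := measure_iUnion hdisjoint (fun i => measurableSet_isCut w N i) (μ := μ)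
  simp only [tsum_fintype, h.measure_isCut, Finset.sum_const, Finset.card_univ, Fintype.card_fin,
    nsmul_eq_mul] at hunion
  rw [← hunion]
  exact prob_le_one

lemma IsMarked.tendsto_cutProb (h : IsMarked p μ w) : Tendsto (cutProb μ w) atTop (nhds 0) :=
  tendsto_of_tendsto_of_tendsto_of_le_of_le tendsto_const_nhds ENNReal.tendsto_inv_nat_nhds_zero
    (fun _ => zero_le) fun N => by
      rw [← one_div]
      exact ENNReal.le_div_iff_mul_le (Or.inr one_ne_zero) (Or.inl (ENNReal.natCast_ne_top N)) |>.2
        (by rw [mul_comm]; exact h.mul_cutProb_le N)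

lemma ae_exists_word (hp : IsProbVector p) (hμ : IsBernoulliMeasure μ p) (u : List A)
    {σ : ℕ → ℤ} (hσ : Function.Injective σ) :
    ∀ᵐ x ∂μ, ∃ i, word x (u.length * σ i) u.length = u := by
  classical
  filter_upwards [tendsto_average hp hμ (fun v => if v = u then 1 else 0) (m := u.length) hσ]
    with x hx
  by_contra! hne
  simp only [hne, if_false, Finset.sum_const_zero, zero_div, integral_ite_word hp hμ] at hx
  exact (weight_pos hp.1 u).ne' (tendsto_nhds_unique hx tendsto_const_nhds)

lemma IsMarked.ae_exists_isBlockAt (h : IsMarked p μ w) (hN : 0 < N) {u : List A}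
    (hu : skeleton w u = gapWord N) : ∀ᵐ x ∂μ, ∃ v j, IsBlockAt w N x v j := by
  have hlength : 0 < (u ++ w).length := by
    have : u.length = N := by rw [← length_skeleton (w := w), hu, length_gapWord hN]
    rw [List.length_append]
    omega
  filter_upwards [ae_exists_word h.prob h.bern (u ++ w) injective_negSucc,
    ae_exists_word h.prob h.bern (u ++ w) (σ := fun i : ℕ => (i : ℤ) + 1)
      (fun a b h => by simpa using h)] with x ⟨i, hi⟩ ⟨j, hj⟩
  refine exists_isBlockAt h.nonOverlap hN ⟨_, ?_, isCut_of_word h.nonOverlap hN hu hi⟩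
    ⟨_, ?_, isCut_of_word h.nonOverlap hN hu hj⟩
  · exact mul_nonpos_of_nonneg_of_nonpos (by positivity) (by omega)
  · exact mul_pos (by exact_mod_cast hlength) (by omega)

lemma IsMarked.measure_isBlockAt (h : IsMarked p μ w) {v : List A} {j : ℕ} (hj : j < v.length)
    (hv : IsReturnWord (gapWord N) (skeleton w v)) :
    μ {x | IsBlockAt w N x v j} = ENNReal.ofReal (weight p v) * cutProb μ w N := by
  have hinter : {x : ℤ → A | IsBlockAt w N x v j} = {x | word x (-j) v.length = v} ∩
      {x | IsCut N (markerBits w x) (v.length - j)} := by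
    ext x
    simp only [IsBlockAt, Set.mem_inter_iff, Set.mem_ofPred_eq]
    tauto
  have hdisjoint : Disjoint (Finset.Ico (-j : ℤ) (-j + v.length))
      (Finset.Ico (v.length - j : ℤ) (v.length - j + (N + w.length : ℕ))) :=
    Finset.disjoint_left.2 fun t ht ht' => by
      rw [Finset.mem_Ico] at ht ht'
      omega
  rw [hinter, measure_inter_of_dependsOn h.prob h.bern hdisjoint
    (E := {x | word x (-j) v.length = v}) (E' := {x | IsCut N (markerBits w x) (v.length - j)})
    (dependsOn_word _ _ (fun u => u = v)) (dependsOn_isCut _ _ _), measure_word h.prob h.bern,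
    h.measure_isCut]

lemma IsMarked.measure_isSkeletonAt (h : IsMarked p μ w) (hN : 0 < N) {S : List Bool} {j : ℕ}
    (hj : j < S.length) (hS : IsReturnWord (gapWord N) S) :
    μ {x | IsSkeletonAt N (markerBits w x) S j} =
      ENNReal.ofReal (∑ v ∈ fiber w S, weight p v) * cutProb μ w N := by
  have hdisjoint : (fiber w S : Set (List A)).PairwiseDisjoint
      fun v => {x | IsBlockAt w N x v j} := fun v _ v' _ hne =>
    Set.disjoint_left.2 fun x hx hx' => hne (IsBlockAt.unique h.nonOverlap hN hx hx').1
  rw [setOf_isSkeletonAt h.nonOverlap hN,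
    measure_biUnion_finset hdisjoint fun v _ => measurableSet_isBlockAt w N v j,
    ENNReal.ofReal_sum_of_nonneg fun v _ => (weight_pos h.prob.1 v).le, Finset.sum_mul]
  refine Finset.sum_congr rfl fun v hv => ?_
  rw [mem_fiber] at hv
  exact h.measure_isBlockAt (by rwa [← length_skeleton (w := w), hv]) (by rwa [hv])

lemma IsMarked.tsum_measure_isSkeletonAt_le_one (h : IsMarked p μ w) (hN : 0 < N) :
    ∑' Sj : List Bool × ℕ, μ {x | IsSkeletonAt N (markerBits w x) Sj.1 Sj.2} ≤ 1 := by
  have := h.isProbabilityMeasure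
  rw [← measure_iUnion ?_ fun Sj => measurableSet_isSkeletonAt h.nonOverlap hN _ _]
  · exact prob_le_one
  · rintro ⟨S, j⟩ ⟨S', j'⟩ hne
    refine Set.disjoint_left.2 fun x hx hx' => hne ?_
    obtain ⟨rfl, rfl⟩ := IsSkeletonAt.unique hN hx hx'
    rfl

lemma IsMarked.measure_biUnion_isBlockAt_le (h : IsMarked p μ w) (hN : 0 < N) {S : List Bool}
    (hS : IsReturnWord (gapWord N) S) (j : ℕ) {T : Finset (List A)} (hT : T ⊆ fiber w S) {ε : ℝ}
    (hε : 0 ≤ ε) (hle : ∑ v ∈ T, weight p v ≤ ε * ∑ v ∈ fiber w S, weight p v) :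
    μ (⋃ v ∈ T, {x | IsBlockAt w N x v j}) ≤
      ENNReal.ofReal ε * μ {x | IsSkeletonAt N (markerBits w x) S j} := by
  have hskeleton : ∀ v ∈ T, skeleton w v = S := fun v hv => mem_fiber.1 (hT hv)
  have hlength : ∀ v ∈ T, v.length = S.length := fun v hv => by
    rw [← hskeleton v hv, length_skeleton]
  by_cases hj : j < S.length
  · have hmeasure : ∀ v ∈ T, μ {x | IsBlockAt w N x v j} =
        ENNReal.ofReal (weight p v) * cutProb μ w N := fun v hv =>
      h.measure_isBlockAt (by rwa [hlength v hv]) (by rwa [hskeleton v hv])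
    rw [h.measure_isSkeletonAt hN hj hS, ← mul_assoc, ← ENNReal.ofReal_mul hε]
    refine (measure_biUnion_finset_le _ _).trans ?_
    rw [Finset.sum_congr rfl hmeasure, ← Finset.sum_mul,
      ← ENNReal.ofReal_sum_of_nonneg fun v _ => (weight_pos h.prob.1 v).le]
    gcongr
  · have hempty : (⋃ v ∈ T, {x | IsBlockAt w N x v j}) = ∅ := by
      simp only [Set.iUnion_eq_empty]
      exact fun v hv => Set.eq_empty_of_forall_notMem fun x hx => hj (hlength v hv ▸ hx.2.1)
    simp [hempty]

lemma IsMarked.measure_isBlockAt_mem_le (h : IsMarked p μ w) (hN : 0 < N) {Bad : Set (List A)}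
    {ε : ℝ} (hε : 0 ≤ ε)
    (hBad : ∀ S, IsReturnWord (gapWord N) S → ∀ T ⊆ fiber w S, (∀ v ∈ T, v ∈ Bad) →
      ∑ v ∈ T, weight p v ≤ ε * ∑ v ∈ fiber w S, weight p v) :
    μ {x | ∃ v j, IsBlockAt w N x v j ∧ v ∈ Bad} ≤ ENNReal.ofReal ε := by
  classical
  let badAt (Sj : List Bool × ℕ) : Set (ℤ → A) :=
    ⋃ v ∈ (fiber w Sj.1).filter (· ∈ Bad), {x | IsBlockAt w N x v Sj.2}
  have hcover : {x | ∃ v j, IsBlockAt w N x v j ∧ v ∈ Bad} ⊆ ⋃ Sj, badAt Sj := by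
    rintro x ⟨v, j, hx, hv⟩
    simp only [badAt, Set.mem_iUnion]
    exact ⟨(skeleton w v, j), v, by simpa using hv, hx⟩
  have hbadAt (Sj : List Bool × ℕ) : μ (badAt Sj) ≤
      ENNReal.ofReal ε * μ {x | IsSkeletonAt N (markerBits w x) Sj.1 Sj.2} := by
    by_cases hS : IsReturnWord (gapWord N) Sj.1
    · exact h.measure_biUnion_isBlockAt_le hN hS Sj.2 (Finset.filter_subset _ _) hε
        (hBad _ hS _ (Finset.filter_subset _ _) fun v hv => (Finset.mem_filter.1 hv).2)
    · have hempty : badAt Sj = ∅ := by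
        simp only [badAt, Set.iUnion_eq_empty, Finset.mem_filter, mem_fiber]
        rintro v ⟨hv, -⟩
        exact Set.eq_empty_of_forall_notMem fun x hx => hS (hv ▸ hx.2.2.2)
      simp [hempty]
  calc μ {x | ∃ v j, IsBlockAt w N x v j ∧ v ∈ Bad}
    _ ≤ ∑' Sj, μ (badAt Sj) := (measure_mono hcover).trans (measure_iUnion_le _)
    _ ≤ ∑' Sj : List Bool × ℕ,
        ENNReal.ofReal ε * μ {x | IsSkeletonAt N (markerBits w x) Sj.1 Sj.2} :=
      ENNReal.tsum_le_tsum hbadAt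
    _ ≤ ENNReal.ofReal ε * 1 := by
      rw [ENNReal.tsum_mul_left]
      gcongr
      exact h.tsum_measure_isSkeletonAt_le_one hN
    _ = ENNReal.ofReal ε := mul_one _

/- Cuts of high level are rare, so with high probability none of them is near the origin, and the
block covering the origin is a long window. -/
lemma IsMarked.exists_measure_isBlockAt_le (h : IsMarked p μ w) {Typ : Set (List A)}
    (hTyp : ∀ᵐ x ∂μ, ∃ M : ℕ, ∀ a b : ℕ, M ≤ a → M ≤ b → word x (-a) (a + b) ∈ Typ)
    {ε : ℝ≥0∞} (hε : ε ≠ 0) :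
    ∃ N₀, ∀ N ≥ N₀, μ {x | ∃ v j, IsBlockAt w N x v j ∧ v ∉ Typ} ≤ ε := by
  have := h.isProbabilityMeasure
  let G (M : ℕ) : Set (ℤ → A) := {x | ∀ a b : ℕ, M ≤ a → M ≤ b → word x (-a) (a + b) ∈ Typ}
  have hG (M : ℕ) : MeasurableSet (G M) := by
    simp only [G, Set.ofPred_forall]
    exact MeasurableSet.iInter fun a => MeasurableSet.iInter fun b => MeasurableSet.iInter fun _ =>
      MeasurableSet.iInter fun _ => measurableSet_word _ _ _
  have hmono : Monotone G := fun M M' hM x hx a b ha hb => hx a b (hM.trans ha) (hM.trans hb)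
  have hε2 : ε / 2 ≠ 0 := by simpa using hε
  obtain ⟨M, hM⟩ := exists_measure_compl_le hG hmono hTyp hε2
  have hlim := ENNReal.Tendsto.const_mul (a := (2 * M + 1 : ℕ)) h.tendsto_cutProb
    (Or.inr (ENNReal.natCast_ne_top _))
  rw [mul_zero] at hlim
  obtain ⟨N₀, hN₀⟩ := eventually_atTop.1 ((tendsto_order.1 hlim).2 _ (pos_iff_ne_zero.2 hε2))
  refine ⟨N₀ + 1, fun N hN => ?_⟩
  have hcover : {x | ∃ v j, IsBlockAt w N x v j ∧ v ∉ Typ} ⊆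
      (G M)ᶜ ∪ ⋃ t ∈ Finset.Icc (-M : ℤ) M, {x | IsCut N (markerBits w x) t} := by
    rintro x ⟨v, j, hx, hv⟩
    by_contra! hne
    simp only [Set.mem_union, Set.mem_compl_iff, not_or, not_not, Set.mem_iUnion, not_exists,
      Finset.mem_Icc, Set.mem_ofPred_eq] at hne
    obtain ⟨hxG, hnocut⟩ := hne
    have hstart := hx.isCut_start h.nonOverlap (by omega)
    obtain ⟨hword, hj, hend, -⟩ := hx
    have hwindow := hxG j (v.length - j)
      (by by_contra hlt; exact hnocut (-j) (by omega) hstart)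
      (by by_contra hlt; exact hnocut (v.length - j) (by omega) hend)
    rw [Nat.add_sub_cancel' hj.le, hword] at hwindow
    exact hv hwindow
  refine (measure_mono hcover).trans ((measure_union_le _ _).trans ?_)
  rw [← ENNReal.add_halves ε]
  refine add_le_add hM ((measure_biUnion_finset_le _ _).trans ?_)
  simp only [h.measure_isCut, Finset.sum_const, Int.card_Icc, nsmul_eq_mul]
  rw [show ((M : ℤ) + 1 - -M).toNat = 2 * M + 1 by omega]
  exact (hN₀ N (by omega)).le

lemma IsMarked.exists_measure_gap_le (h : IsMarked p μ w) (hN : 0 < N) {ε : ℝ≥0∞}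
    (hε : ε ≠ 0) (g₀ : ℕ) :
    ∃ g ≥ g₀, μ {x | ∃ j, IsSkeletonAt N (markerBits w x) (gapWord g) j} ≤ ε := by
  have := h.isProbabilityMeasure
  have hmeas (g : ℕ) :
      MeasurableSet {x : ℤ → A | ∃ j, IsSkeletonAt N (markerBits w x) (gapWord g) j} := by
    rw [Set.ofPred_exists]
    exact MeasurableSet.iUnion fun j => measurableSet_isSkeletonAt h.nonOverlap hN _ _
  have hdisjoint : Pairwise (Function.onFun Disjoint
      fun g : ℕ => {x : ℤ → A | ∃ j, IsSkeletonAt N (markerBits w x) (gapWord (g + 1)) j}) := by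
    refine fun g g' hne => Set.disjoint_left.2 ?_
    rintro x ⟨j, hj⟩ ⟨j', hj'⟩
    have hlength := congrArg List.length (hj.unique hN hj').1
    rw [length_gapWord (by omega), length_gapWord (by omega)] at hlength
    omega
  have hlim := ENNReal.tendsto_atTop_zero_of_tsum_ne_top
    (measure_iUnion hdisjoint (fun g => hmeas _) (μ := μ) ▸ measure_ne_top _ _)
  obtain ⟨g, hg, hg₀⟩ := (((tendsto_order.1 hlim).2 ε (pos_iff_ne_zero.2 hε)).and
    (eventually_ge_atTop g₀)).exists
  exact ⟨g + 1, by omega, hg.le⟩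

end BlockMeasure

section MarkedPair
variable {A B : Type*} [Fintype A] [MeasurableSpace A] [Fintype B] [MeasurableSpace B]
  {p : A → ℝ} {q : B → ℝ} {μ : Measure (ℤ → A)} {ν : Measure (ℤ → B)} {w : List A} {w' : List B}

/-- Marked Bernoulli schemes whose markers have the same length and the same probability, so that
the occurrences of the two markers have the same law. -/
structure IsMarkedPair (p : A → ℝ) (q : B → ℝ) (μ : Measure (ℤ → A)) (ν : Measure (ℤ → B))
    (w : List A) (w' : List B) : Prop where
  left : IsMarked p μ w
  right : IsMarked q ν w'
  length_eq : w.length = w'.length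
  weight_eq : weight p w = weight q w'

lemma IsMarkedPair.symm (h : IsMarkedPair p q μ ν w w') : IsMarkedPair q p ν μ w' w :=
  ⟨h.right, h.left, h.length_eq.symm, h.weight_eq.symm⟩

end MarkedPair

section MarkerLaw
variable {A : Type*} [Fintype A] [MeasurableSpace A] [DiscreteMeasurableSpace A]
  {p : A → ℝ} {μ : Measure (ℤ → A)} {w : List A}

open Classical in
lemma IsMarked.measure_markerBits (h : IsMarked p μ w) (F : Finset ℤ) :
    μ {x | ∀ t ∈ F, markerBits w x t = true} =
      if ∀ s ∈ F, ∀ t ∈ F, s < t → s + w.length ≤ t then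
        ENNReal.ofReal (weight p w) ^ F.card else 0 := by
  have := h.isProbabilityMeasure
  induction F using Finset.induction_on_max with
  | empty => simp
  | insert t F ht ih =>
    split_ifs with hsep
    · rw [if_pos fun s hs t ht => hsep s (Finset.mem_insert_of_mem hs) t
        (Finset.mem_insert_of_mem ht)] at ih
      have hdisjoint : Disjoint (F.biUnion fun s => Finset.Ico s (s + w.length))
          (Finset.Ico t (t + w.length)) := by
        refine (Finset.disjoint_biUnion_left _ _ _).2 fun s hs => Finset.disjoint_left.2 ?_
        intro i hi hi'
        rw [Finset.mem_Ico] at hi hi'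
        have := hsep s (Finset.mem_insert_of_mem hs) t (Finset.mem_insert_self _ _) (ht s hs)
        omega
      have hinsert : {x : ℤ → A | ∀ s ∈ insert t F, markerBits w x s = true} =
          {x | ∀ t ∈ F, markerBits w x t = true} ∩ {x | word x t w.length = w} := by
        ext x
        simp only [Finset.forall_mem_insert, Set.mem_ofPred_eq, Set.mem_inter_iff,
          markerBits_eq_true, and_comm]
      rw [hinsert, measure_inter_of_dependsOn h.prob h.bern
        (E' := {x | word x t w.length = w}) hdisjoint (dependsOn_forall_markerBits w F)
        (dependsOn_word _ _ (fun u => u = w)), ih, measure_word h.prob h.bern,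
        Finset.card_insert_of_notMem fun hmem => lt_irrefl _ (ht t hmem), pow_succ]
    · exact measure_mono_null (fun x hx => hsep fun s hs t ht =>
        markerBits_separated h.nonOverlap (hx s hs) (hx t ht)) (measure_empty (μ := μ))

lemma measurableSet_forall_eq_true {ι : Type*} (F : Finset ι) :
    MeasurableSet {z : ι → Bool | ∀ t ∈ F, z t = true} := by
  simp only [Set.ofPred_forall]
  exact Finset.measurableSet_biInter F fun t _ =>
    measurableSet_eq_fun (measurable_pi_apply t) measurable_const

lemma measure_bool_ext {ι : Type*} {P Q : Measure (ι → Bool)} [IsFiniteMeasure P]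
    (h : ∀ F : Finset ι, P {z | ∀ t ∈ F, z t = true} = Q {z | ∀ t ∈ F, z t = true}) : P = Q := by
  let C : Set (Set (ι → Bool)) := Set.range fun F : Finset ι => {z | ∀ t ∈ F, z t = true}
  have hgenerate : (inferInstance : MeasurableSpace (ι → Bool)) = .generateFrom C := by
    apply le_antisymm
    · refine iSup_le fun t => ?_
      rw [← measurable_iff_comap_le]
      refine @measurable_to_bool _ (MeasurableSpace.generateFrom C) _ ?_
      exact MeasurableSpace.measurableSet_generateFrom ⟨{t}, by ext z; simp⟩
    · refine MeasurableSpace.generateFrom_le ?_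
      rintro _ ⟨F, rfl⟩
      exact measurableSet_forall_eq_true F
  refine ext_of_generate_finite C hgenerate ?_ ?_ (by simpa using h ∅)
  · rintro _ ⟨F, rfl⟩ _ ⟨G, rfl⟩ _
    classical
    refine ⟨F ∪ G, ?_⟩
    ext z
    simp only [Finset.forall_mem_union, Set.mem_ofPred_eq, Set.mem_inter_iff]
  · rintro _ ⟨F, rfl⟩
    exact h F

variable {B : Type*} [Fintype B] [MeasurableSpace B] [DiscreteMeasurableSpace B]
  {q : B → ℝ} {ν : Measure (ℤ → B)} {w' : List B}

lemma IsMarkedPair.map_markerBits_eq (h : IsMarkedPair p q μ ν w w') :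
    μ.map (markerBits w) = ν.map (markerBits w') := by
  have := h.left.isProbabilityMeasure
  refine measure_bool_ext fun F => ?_
  rw [Measure.map_apply (measurable_markerBits w) (measurableSet_forall_eq_true F),
    Measure.map_apply (measurable_markerBits w') (measurableSet_forall_eq_true F)]
  have hw := h.left.measure_markerBits F
  rw [h.length_eq, h.weight_eq] at hw
  exact hw.trans (h.right.measure_markerBits F).symm

lemma IsMarkedPair.measure_markerBits_preimage_eq (h : IsMarkedPair p q μ ν w w')
    {E : Set (ℤ → Bool)} (hE : MeasurableSet E) :
    μ (markerBits w ⁻¹' E) = ν (markerBits w' ⁻¹' E) := by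
  rw [← Measure.map_apply (measurable_markerBits w) hE, h.map_markerBits_eq,
    Measure.map_apply (measurable_markerBits w') hE]

lemma IsMarkedPair.cutProb_eq (h : IsMarkedPair p q μ ν w w') (N : ℕ) :
    cutProb μ w N = cutProb ν w' N :=
  h.measure_markerBits_preimage_eq (measurableSet_word 0 N {gapWord N})

lemma IsMarkedPair.sum_weight_fiber_eq (h : IsMarkedPair p q μ ν w w') {N : ℕ} (hN : 0 < N)
    {u : List A} (hu : skeleton w u = gapWord N) {S : List Bool} (hS : IsReturnWord (gapWord N) S) :
    ∑ v ∈ fiber w S, weight p v = ∑ v ∈ fiber w' S, weight q v := by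
  have hmeas : MeasurableSet {z : ℤ → Bool | IsSkeletonAt N z S 0} :=
    (measurableSet_word _ _ {S}).inter <| (MeasurableSet.const _).inter <|
      (measurableSet_word _ _ {gapWord N}).inter (MeasurableSet.const _)
  have hS0 : 0 < S.length := by
    have := hS.1.length_le
    rw [length_gapWord hN] at this
    omega
  have hmeasure := h.measure_markerBits_preimage_eq hmeas
  rw [Set.preimage_ofPred_eq, Set.preimage_ofPred_eq, h.left.measure_isSkeletonAt hN hS0 hS,
    h.right.measure_isSkeletonAt hN hS0 hS, ← h.cutProb_eq,
    ENNReal.mul_left_inj (h.left.cutProb_pos hN hu).ne' (h.left.cutProb_ne_top N),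
    ENNReal.ofReal_eq_ofReal_iff (Finset.sum_nonneg fun v _ => (weight_pos h.left.prob.1 v).le)
    (Finset.sum_nonneg fun v _ => (weight_pos h.right.prob.1 v).le)] at hmeasure
  exact hmeasure

end MarkerLaw

/-! ### Refining a coupling of blocks -/

section Split
variable {A : Type*} {w : List A} {ss : List (List Bool)} {v : List A} {V : List (List A)}

open Classical in
/-- The decomposition of a word according to a decomposition `ss` of its skeleton; words with
another skeleton are left in one piece. -/
def split (w : List A) (ss : List (List Bool)) (v : List A) : List (List A) :=
  if h : ∃ V : List (List A), V.map (skeleton w) = ss ∧ V.flatten = v then h.choose else [v]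

lemma flatten_split (w : List A) (ss : List (List Bool)) (v : List A) :
    (split w ss v).flatten = v := by
  rw [split]
  split_ifs with h
  exacts [h.choose_spec.2, List.flatten_singleton]

lemma split_injective (w : List A) (ss : List (List Bool)) : Function.Injective (split w ss) :=
  Function.LeftInverse.injective (flatten_split w ss)

lemma prod_map_weight_split (p : A → ℝ) (w : List A) (ss : List (List Bool)) (v : List A) :
    ((split w ss v).map (weight p)).prod = weight p v := by
  rw [← weight_flatten, flatten_split]

lemma map_skeleton_split (hw : IsNonOverlapping w) (hs : ∀ s ∈ ss, [true] <+: s) :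
    (split w ss v).map (skeleton w) = ss ↔ skeleton w v = ss.flatten := by
  refine ⟨fun h => ?_, fun hv => ?_⟩
  · have hbegins : ∀ u ∈ split w ss v, w <+: u := fun u hu =>
      prefix_of_head_skeleton (hs _ (h ▸ List.mem_map_of_mem hu))
    rw [← flatten_split w ss v, skeleton_flatten hw hbegins, h]
  · have h := exists_split hw hs hv
    rw [split, dif_pos h]
    exact h.choose_spec.1

lemma length_flatten_of_map_skeleton (hV : V.map (skeleton w) = ss) :
    V.flatten.length = ss.flatten.length := by
  subst hV
  simp [List.length_flatten, Function.comp_def]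

lemma exists_of_map_skeleton_eq {s₁ s₂ : List (List Bool)} {s : List Bool}
    (hV : V.map (skeleton w) = s₁ ++ s :: s₂) :
    ∃ V₁ v V₂, V = V₁ ++ v :: V₂ ∧ V₁.length = s₁.length ∧
      V₁.flatten.length = s₁.flatten.length ∧ skeleton w v = s := by
  obtain ⟨V₁, V', rfl, hV₁, hV'⟩ := List.map_eq_append_iff.1 hV
  obtain ⟨v, V₂, rfl, hv, -⟩ := List.map_eq_cons_iff.1 hV'
  exact ⟨V₁, v, V₂, rfl, by rw [← hV₁, List.length_map], length_flatten_of_map_skeleton hV₁, hv⟩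

lemma getElem?_flatten_of_map_skeleton {s₁ s₂ : List (List Bool)} {s : List Bool} {i : ℕ}
    (hV : V.map (skeleton w) = s₁ ++ s :: s₂) (hv : V[s₁.length]? = some v) (hi : i < s.length) :
    V.flatten[s₁.flatten.length + i]? = v[i]? := by
  obtain ⟨V₁, u, V₂, rfl, hlen, hflat, rfl⟩ := exists_of_map_skeleton_eq hV
  obtain rfl : u = v := by simpa [← hlen] using hv
  rw [length_skeleton] at hi
  rw [← hflat, List.flatten_append, List.flatten_cons, List.getElem?_append_right (by omega),
    Nat.add_sub_cancel_left, List.getElem?_append_left hi]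

lemma IsBlockAt.exists_descend (hw : IsNonOverlapping w) {M N : ℕ} (hM : 0 < M) (hMN : M ≤ N)
    {x : ℤ → A} {s₁ s₂ : List (List Bool)} {s : List Bool} {i : ℕ} (hi : i < s.length)
    (hs : ∀ r ∈ s₁ ++ s :: s₂, IsReturnWord (gapWord M) r)
    (hV : V.map (skeleton w) = s₁ ++ s :: s₂)
    (h : IsBlockAt w N x V.flatten (s₁.flatten.length + i)) :
    ∃ v, V[s₁.length]? = some v ∧ skeleton w v = s ∧ IsBlockAt w M x v i := by
  have hreturn : ∀ u ∈ V, IsReturnWord (gapWord M) (skeleton w u) := fun u hu =>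
    hs _ (hV ▸ List.mem_map_of_mem hu)
  obtain ⟨V₁, v, V₂, rfl, hlen, hflat, rfl⟩ := exists_of_map_skeleton_eq hV
  rw [length_skeleton] at hi
  rw [← hflat] at h
  exact ⟨v, by simp [← hlen], rfl, h.descend hw hM hMN hi hreturn⟩

lemma IsBlockAt.getElem?_eq {N : ℕ} {x : ℤ → A} {j : ℕ} (h : IsBlockAt w N x v j) :
    v[j]? = some (x 0) := by
  have hget := getElem?_word x (-j) h.2.1
  rwa [h.1, neg_add_cancel] at hget

variable [Finite A]

lemma split_mem_fiberPi (hw : IsNonOverlapping w) (hs : ∀ s ∈ ss, [true] <+: s) :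
    split w ss v ∈ fiberPi (fiber w) ss ↔ v ∈ fiber w ss.flatten := by
  rw [mem_fiberPi_fiber, map_skeleton_split hw hs, mem_fiber]

lemma sum_fiber_split (hw : IsNonOverlapping w) (hs : ∀ s ∈ ss, [true] <+: s)
    (f : List (List A) → ℝ) :
    ∑ v ∈ fiber w ss.flatten, f (split w ss v) = ∑ V ∈ fiberPi (fiber w) ss, f V := by
  rw [sum_fiber_flatten hw hs]
  refine Finset.sum_congr rfl fun V hV => congrArg f ?_
  have hmem : split w ss V.flatten ∈ fiberPi (fiber w) ss := by
    rw [mem_fiberPi_fiber] at hV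
    rw [split_mem_fiberPi hw hs, mem_fiber, skeleton_flatten hw fun v hv =>
      prefix_of_head_skeleton (hs _ (hV ▸ List.mem_map_of_mem hv)), hV]
  exact flatten_inj_fiberPi hmem hV (flatten_split w ss _)

lemma sum_weight_fiber_flatten (hw : IsNonOverlapping w) (hs : ∀ s ∈ ss, [true] <+: s)
    (p : A → ℝ) :
    ∑ v ∈ fiber w ss.flatten, weight p v = ∑ V ∈ fiberPi (fiber w) ss, (V.map (weight p)).prod :=
  (sum_fiber_flatten hw hs _).trans (Finset.sum_congr rfl fun V _ => weight_flatten V)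

end Split

section Coupling
variable {A B : Type*} {p : A → ℝ} {q : B → ℝ} {w : List A} {w' : List B} {N : ℕ}
  {l : List A → List B → ℝ}

open Classical in
/-- The kernel on level `N` blocks which is `L S` on the words of skeleton `S`. -/
def fiberwise (w : List A) (w' : List B) (N : ℕ) (L : List Bool → List A → List B → ℝ)
    (v : List A) (v' : List B) : ℝ :=
  if skeleton w v = skeleton w' v' ∧ IsReturnWord (gapWord N) (skeleton w v) then
    L (skeleton w v) v v' else 0

/-- The coupling `l'` of level `N'` blocks refines the coupling `l` of level `N` blocks away from
the gaps of length `g`: the level `N` blocks seen inside two blocks coupled by `l'` are such gaps,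
or they are coupled by `l` and the second one can be read off `m`. -/
def IsRefinement {M : Type*} (w : List A) (w' : List B) (N N' g : ℕ)
    (l l' : List A → List B → ℝ) (m : List B → M) : Prop :=
  ∀ v v', l' v v' ≠ 0 → ∀ x y j, IsBlockAt w N' x v j → IsBlockAt w' N' y v' j →
    ∃ v₁ v₁' i, IsBlockAt w N x v₁ i ∧ IsBlockAt w' N y v₁' i ∧
      (skeleton w v₁ = gapWord g ∨ l v₁ v₁' ≠ 0 ∧
        ∀ u, skeleton w' u = skeleton w' v' → m u = m v' → u[j]? = some (y 0))

lemma fiberwise_ne_zero {L : List Bool → List A → List B → ℝ} {v : List A} {v' : List B}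
    (h : fiberwise w w' N L v v' ≠ 0) :
    skeleton w v = skeleton w' v' ∧ IsReturnWord (gapWord N) (skeleton w v) ∧
      L (skeleton w v) v v' ≠ 0 := by
  classical
  rw [fiberwise, ite_ne_right_iff] at h
  obtain ⟨⟨hskel, hreturn⟩, hL⟩ := h
  exact ⟨hskel, hreturn, hL⟩

variable [Finite A] [Finite B]

/-- A coupling of the level `N` blocks of two marked Bernoulli measures which preserves the
skeleton. -/
structure IsBlockCoupling (p : A → ℝ) (q : B → ℝ) (w : List A) (w' : List B) (N : ℕ)
    (l : List A → List B → ℝ) : Prop where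
  nonneg : ∀ v v', 0 ≤ l v v'
  supp : ∀ v v', l v v' ≠ 0 →
    skeleton w v = skeleton w' v' ∧ IsReturnWord (gapWord N) (skeleton w v)
  marginals : ∀ S, IsReturnWord (gapWord N) S →
    HasMarginals (fiber w S) (fiber w' S) (weight p) (weight q) l

lemma IsBlockCoupling.flip (h : IsBlockCoupling p q w w' N l) :
    IsBlockCoupling q p w' w N fun v' v => l v v' where
  nonneg v' v := h.nonneg v v'
  supp v' v hl := by
    obtain ⟨hskel, hreturn⟩ := h.supp v v' hl
    exact ⟨hskel.symm, hskel ▸ hreturn⟩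
  marginals S hS := (h.marginals S hS).swap

lemma fiberwise_eq {L : List Bool → List A → List B → ℝ} {S : List Bool}
    (hS : IsReturnWord (gapWord N) S) {v : List A} (hv : v ∈ fiber w S) {v' : List B}
    (hv' : v' ∈ fiber w' S) : fiberwise w w' N L v v' = L S v v' := by
  rw [mem_fiber] at hv hv'
  rw [fiberwise, if_pos ⟨hv.trans hv'.symm, hv ▸ hS⟩, hv]

lemma isBlockCoupling_fiberwise {L : List Bool → List A → List B → ℝ}
    (hnonneg : ∀ S, IsReturnWord (gapWord N) S → ∀ v v', 0 ≤ L S v v')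
    (hL : ∀ S, IsReturnWord (gapWord N) S →
      HasMarginals (fiber w S) (fiber w' S) (weight p) (weight q) (L S)) :
    IsBlockCoupling p q w w' N (fiberwise w w' N L) where
  nonneg v v' := by
    rw [fiberwise]
    split_ifs with h
    exacts [hnonneg _ h.2 v v', le_rfl]
  supp v v' h := ⟨(fiberwise_ne_zero h).1, (fiberwise_ne_zero h).2.1⟩
  marginals S hS :=
    ⟨fun v hv => (Finset.sum_congr rfl fun _ hv' => fiberwise_eq hS hv hv').trans
        ((hL S hS).row v hv),
      fun v' hv' => (Finset.sum_congr rfl fun _ hv => fiberwise_eq hS hv hv').trans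
        ((hL S hS).col v' hv')⟩

lemma exists_isBlockCoupling (hp : ∀ a, 0 < p a) (hq : ∀ b, 0 < q b) (N : ℕ)
    (hmass : ∀ S, IsReturnWord (gapWord N) S →
      ∑ v ∈ fiber w S, weight p v = ∑ v ∈ fiber w' S, weight q v) :
    ∃ l, IsBlockCoupling p q w w' N l := by
  refine ⟨fiberwise w w' N fun S v v' => weight p v * weight q v' / ∑ u ∈ fiber w S, weight p u,
    isBlockCoupling_fiberwise (fun S _ v v' => ?_) fun S hS =>
      .mul_div_sum (weight_pos hp) (weight_pos hq) (hmass S hS)⟩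
  exact div_nonneg (mul_pos (weight_pos hp v) (weight_pos hq v')).le
    (Finset.sum_nonneg fun u _ => (weight_pos hp u).le)

lemma HasMarginals.comp_split (hw : IsNonOverlapping w) (hw' : IsNonOverlapping w')
    {ss : List (List Bool)} (hs : ∀ s ∈ ss, [true] <+: s)
    {L : List (List A) → List (List B) → ℝ}
    (hL : HasMarginals (fiberPi (fiber w) ss) (fiberPi (fiber w') ss)
      (fun V => (V.map (weight p)).prod) (fun W => (W.map (weight q)).prod) L) :
    HasMarginals (fiber w ss.flatten) (fiber w' ss.flatten) (weight p) (weight q)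
      fun v v' => L (split w ss v) (split w' ss v') where
  row v hv := by
    rw [sum_fiber_split hw' hs, hL.row _ ((split_mem_fiberPi hw hs).2 hv), prod_map_weight_split]
  col v' hv' := by
    rw [sum_fiber_split hw hs fun V => L V (split w' ss v'),
      hL.col _ ((split_mem_fiberPi hw' hs).2 hv'), prod_map_weight_split]

lemma isRefinement_comp_split (hw : IsNonOverlapping w) (hw' : IsNonOverlapping w') {N' g : ℕ}
    (hN : 0 < N) (hNN' : N ≤ N') {ss : List (List Bool)}
    (hss : ∀ s ∈ ss, IsReturnWord (gapWord N) s) {L : List (List A) → List (List B) → ℝ}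
    (hL : ∀ V W, L V W ≠ 0 → V ∈ fiberPi (fiber w) ss ∧ W ∈ fiberPi (fiber w') ss ∧
      List.Forall₂ (fun v v' => skeleton w v = skeleton w' v' ∧
        (skeleton w v = gapWord g ∨ l v v' ≠ 0)) V W) :
    IsRefinement w w' N N' g l (fun v v' => L (split w ss v) (split w' ss v'))
      fun v' => (split w' ss v').map (maskEntry (skeleton w') (gapWord g)) := by
  intro v v' hvv' x y j hx hy
  obtain ⟨hV, hW, hVW⟩ := hL _ _ hvv'
  rw [mem_fiberPi_fiber] at hV hW
  have hv' := flatten_split w' ss v'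
  rw [← flatten_split w ss v] at hx
  rw [← hv'] at hy
  obtain ⟨s₁, s, s₂, i, rfl, rfl, hi⟩ := exists_locate (V := ss) (j := j)
    (length_flatten_of_map_skeleton hV ▸ hx.2.1)
  obtain ⟨v₁, hv₁, hs, hx₁⟩ := hx.exists_descend hw hN hNN' hi hss hV
  obtain ⟨v₁', hv₁', hs', hy₁⟩ := hy.exists_descend hw' hN hNN' hi hss hW
  refine ⟨v₁, v₁', i, hx₁, hy₁, or_iff_not_imp_left.2 fun hgap => ⟨?_, fun u hu hmask => ?_⟩⟩
  · obtain ⟨hk, rfl⟩ := List.getElem?_eq_some_iff.1 hv₁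
    obtain ⟨hk', rfl⟩ := List.getElem?_eq_some_iff.1 hv₁'
    exact (((List.forall₂_iff_get.1 hVW).2 _ hk hk').2).resolve_left hgap
  · have hhead : ∀ r ∈ s₁ ++ s :: s₂, [true] <+: r := fun r hr =>
      head_of_gapWord_isPrefix (hss r hr).1
    have hU := (map_skeleton_split hw' hhead).2 (hu.trans ((map_skeleton_split hw' hhead).1 hW))
    have hu₁ : (split w' (s₁ ++ s :: s₂) u)[s₁.length]? = some v₁' := by
      have hget := congrArg (·[s₁.length]?) hmask
      simp only [List.getElem?_map, hv₁', Option.map_some, Option.map_eq_some_iff] at hget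
      obtain ⟨u₁, hu₁, heq⟩ := hget
      rwa [eq_of_maskEntry_eq (hs'.trans_ne (hs ▸ hgap)) heq] at hu₁
    rw [← flatten_split w' (s₁ ++ s :: s₂) u, getElem?_flatten_of_map_skeleton hU hu₁ hi,
      hy₁.getElem?_eq]

lemma IsBlockCoupling.exists_refinement_fiber (hc : IsBlockCoupling p q w w' N l)
    (hp : ∀ a, 0 < p a) (hq : ∀ b, 0 < q b) (hw : IsNonOverlapping w) (hw' : IsNonOverlapping w')
    {N' g : ℕ} (hN : 0 < N) (hNN' : N ≤ N') (hNg : N ≤ g) {θ : ℝ} (hθ : 0 < θ) (hθ1 : θ ≤ 1)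
    (hθQ : ∀ v ∈ fiber w' (gapWord g), weight q v ≤ θ * ∑ v ∈ fiber w' (gapWord g), weight q v)
    (hne : (fiber w' (gapWord g)).Nonempty) {S : List Bool} (hS : IsReturnWord (gapWord N') S) :
    ∃ (l' : List A → List B → ℝ) (m : List B → List (Option (List B))), (∀ v v', 0 ≤ l' v v') ∧
      HasMarginals (fiber w S) (fiber w' S) (weight p) (weight q) l' ∧
      IsRefinement w w' N N' g l l' m ∧
      HasFewAmbiguous (fiber w S) (weight p) (weight q) l' m
        (θ ^ occCount (gapWord g ++ gapWord N) S * ∑ v ∈ fiber w S, weight p v) := by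
  classical
  obtain ⟨ss, hss, rfl⟩ := exists_factorization (isNonOverlapping_gapWord N) (gapWord_ne_nil N)
    ((gapWord_isPrefix hNN').trans hS.1)
  have hhead : ∀ s ∈ ss, [true] <+: s := fun s hs => head_of_gapWord_isPrefix (hss s hs).1
  obtain ⟨L, hL0, hLsupp, hLm, hLfew⟩ := exists_masked_coupling (FX := fiber w) (FY := fiber w')
    (fun _ _ => mem_fiber) (fun _ _ => mem_fiber) (fun v => (weight_pos hp v).le) (weight_pos hq)
    hc.nonneg (fun s hs => hc.marginals s (hss s hs)) hθ hθQ hne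
  refine ⟨fun v v' => L (split w ss v) (split w' ss v'), _, fun v v' => hL0 _ _,
    hLm.comp_split hw hw' hhead, isRefinement_comp_split hw hw' hN hNN' hss hLsupp, ?_⟩
  have hfew := hLfew.comp (split_injective w ss) (split w' ss) fun v =>
    (split_mem_fiberPi hw hhead).2
  simp only [Function.comp_def, prod_map_weight_split] at hfew
  rw [sum_weight_fiber_flatten hw hhead]
  refine hfew.mono (mul_le_mul_of_nonneg_right (pow_le_pow_of_le_one hθ.le hθ1 ?_)
    (Finset.sum_nonneg fun V _ => (prod_map_pos (weight_pos hp) V).le))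
  convert occCount_flatten_le_count hN hNg hss

theorem IsBlockCoupling.exists_refinement (hc : IsBlockCoupling p q w w' N l)
    (hp : ∀ a, 0 < p a) (hq : ∀ b, 0 < q b) (hw : IsNonOverlapping w) (hw' : IsNonOverlapping w')
    {N' g : ℕ} (hN : 0 < N) (hNN' : N ≤ N') (hNg : N ≤ g) {θ : ℝ} (hθ : 0 < θ) (hθ1 : θ ≤ 1)
    (hθQ : ∀ v ∈ fiber w' (gapWord g), weight q v ≤ θ * ∑ v ∈ fiber w' (gapWord g), weight q v)
    (hne : (fiber w' (gapWord g)).Nonempty) :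
    ∃ (l' : List A → List B → ℝ) (m : List B → List (Option (List B))),
      IsBlockCoupling p q w w' N' l' ∧ IsRefinement w w' N N' g l l' m ∧
      ∀ S, IsReturnWord (gapWord N') S →
        HasFewAmbiguous (fiber w S) (weight p) (weight q) l' m
          (θ ^ occCount (gapWord g ++ gapWord N) S * ∑ v ∈ fiber w S, weight p v) := by
  have hfiber : ∀ S, IsReturnWord (gapWord N') S → _ := fun S hS =>
    hc.exists_refinement_fiber hp hq hw hw' hN hNN' hNg hθ hθ1 hθQ hne hS
  choose! L m hL0 hLm hLref hLfew using hfiber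
  refine ⟨fiberwise w w' N' L, fun v' => m (skeleton w' v') v',
    isBlockCoupling_fiberwise hL0 hLm, fun v v' hvv' x y j hx hy => ?_, fun S hS => ?_⟩
  · obtain ⟨hskel, hreturn, hL⟩ := fiberwise_ne_zero hvv'
    obtain ⟨v₁, v₁', i, hx₁, hy₁, hor⟩ := hLref _ hreturn v v' hL x y j hx hy
    refine ⟨v₁, v₁', i, hx₁, hy₁, hor.imp_right fun h => ⟨h.1, fun u hu hm => h.2 u hu ?_⟩⟩
    rw [hskel]
    exact (congrArg (m · u) hu.symm).trans hm
  · refine (hLfew S hS).of_imp fun v hv v' hvv' => ?_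
    obtain ⟨hskel, -, hL⟩ := fiberwise_ne_zero hvv'
    rw [mem_fiber.1 hv] at hskel hL
    exact ⟨hL, by rw [hskel]⟩

end Coupling

section HoldsOutside
variable {X Y : Type*} [MeasurableSpace X] [MeasurableSpace Y] {μ : Measure X} {ν : Measure Y}
  {ε ε' : ℝ≥0∞} {R R' : X → Y → Prop}

/-- The relation `R` holds off exceptional sets of measure at most `ε` in each coordinate; under
every coupling of `μ` and `ν` it then fails with probability at most `2 * ε`. -/
def HoldsOutside (μ : Measure X) (ν : Measure Y) (ε : ℝ≥0∞) (R : X → Y → Prop) : Prop :=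
  ∃ (D : Set X) (E : Set Y), μ D ≤ ε ∧ ν E ≤ ε ∧ ∀ x ∉ D, ∀ y ∉ E, R x y

lemma HoldsOutside.flip (h : HoldsOutside μ ν ε R) : HoldsOutside ν μ ε fun y x => R x y := by
  obtain ⟨D, E, hD, hE, hR⟩ := h
  exact ⟨E, D, hE, hD, fun y hy x hx => hR x hx y hy⟩

lemma HoldsOutside.imp (h : HoldsOutside μ ν ε R) (himp : ∀ x y, R x y → R' x y) :
    HoldsOutside μ ν ε R' := by
  obtain ⟨D, E, hD, hE, hR⟩ := h
  exact ⟨D, E, hD, hE, fun x hx y hy => himp x y (hR x hx y hy)⟩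

lemma HoldsOutside.and (h : HoldsOutside μ ν ε R) (h' : HoldsOutside μ ν ε' R') :
    HoldsOutside μ ν (ε + ε') fun x y => R x y ∧ R' x y := by
  obtain ⟨D, E, hD, hE, hR⟩ := h
  obtain ⟨D', E', hD', hE', hR'⟩ := h'
  refine ⟨D ∪ D', E ∪ E', (measure_union_le _ _).trans (add_le_add hD hD'),
    (measure_union_le _ _).trans (add_le_add hE hE'), fun x hx y hy => ?_⟩
  rw [Set.mem_union, not_or] at hx hy
  exact ⟨hR x hx.1 y hy.1, hR' x hx.2 y hy.2⟩

lemma HoldsOutside.measure_le (h : HoldsOutside μ ν ε R) {M : Measure (X × Y)}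
    (hfst : M.map Prod.fst = μ) (hsnd : M.map Prod.snd = ν) :
    M {z | ¬ R z.1 z.2} ≤ 2 * ε := by
  obtain ⟨D, E, hD, hE, hR⟩ := h
  have hcover : {z : X × Y | ¬ R z.1 z.2} ⊆ Prod.fst ⁻¹' D ∪ Prod.snd ⁻¹' E := fun z hz => by
    by_contra hne
    rw [Set.mem_union, not_or] at hne
    exact hz (hR _ hne.1 _ hne.2)
  rw [two_mul]
  exact (measure_mono hcover).trans <| (measure_union_le _ _).trans <| add_le_add
    ((Measure.le_map_apply measurable_fst.aemeasurable _).trans (hfst ▸ hD))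
    ((Measure.le_map_apply measurable_snd.aemeasurable _).trans (hsnd ▸ hE))

end HoldsOutside

section Typical
variable {A : Type*} {p : A → ℝ} {H δ : ℝ} {v : List A}

/-- The weight of the word `v` lies between `exp (-(H + δ) n)` and `exp (-(H - δ) n)`, where `n` is
the length of `v`. -/
def IsEntropyTypical (p : A → ℝ) (H δ : ℝ) (v : List A) : Prop :=
  |-Real.log (weight p v) - H * v.length| ≤ δ * v.length

lemma IsEntropyTypical.weight_le (h : IsEntropyTypical p H δ v) (hp : ∀ a, 0 < p a) :
    weight p v ≤ Real.exp (-((H - δ) * v.length)) := by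
  rw [← Real.log_le_iff_le_exp (weight_pos hp v)]
  linarith [(abs_le.1 h).1]

lemma IsEntropyTypical.le_weight (h : IsEntropyTypical p H δ v) (hp : ∀ a, 0 < p a) :
    Real.exp (-((H + δ) * v.length)) ≤ weight p v := by
  rw [← Real.le_log_iff_exp_le (weight_pos hp v)]
  linarith [(abs_le.1 h).2]

lemma exp_neg_mul_pow_le {c θ ε : ℝ} {L₀ L n : ℕ} (hδ : 0 ≤ δ) (hθ : 0 < θ) (hθ1 : θ ≤ 1)
    (hc : c * Real.log θ = -(3 * δ)) (hn : c * L ≤ n) (hL : L₀ ≤ L)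
    (hε : Real.exp (-(δ * L₀)) ≤ ε) :
    Real.exp (-((H - δ) * L)) * θ ^ n ≤ ε * Real.exp (-((H + δ) * L)) := by
  have hpow : θ ^ n = Real.exp (n * Real.log θ) := by
    rw [mul_comm, Real.exp_mul, Real.exp_log hθ, Real.rpow_natCast]
  have hgain : n * Real.log θ ≤ -(3 * δ) * L := by
    have := mul_le_mul_of_nonpos_right hn (Real.log_nonpos hθ.le hθ1)
    nlinarith
  have hlong : δ * L₀ ≤ δ * L := mul_le_mul_of_nonneg_left (by exact_mod_cast hL) hδ
  refine le_trans ?_ (mul_le_mul_of_nonneg_right hε (Real.exp_pos _).le)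
  rw [hpow, ← Real.exp_add, ← Real.exp_add, Real.exp_le_exp]
  nlinarith

/-- The word `v` is entropy typical, and contains `u` so often that the factor `θ` gained at each
occurrence makes up for the error `δ` in the entropy. -/
def IsRichTypical (p : A → ℝ) (H δ θ ε : ℝ) (u v : List A) : Prop :=
  IsEntropyTypical p H δ v ∧ Real.exp (-((H - δ) * v.length)) * θ ^ occCount u v ≤
    ε * Real.exp (-((H + δ) * v.length))

variable [Fintype A] [MeasurableSpace A] [DiscreteMeasurableSpace A] {μ : Measure (ℤ → A)}

lemma ae_isEntropyTypical (hp : IsProbVector p) (hμ : IsBernoulliMeasure μ p) (hδ : 0 < δ) :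
    ∀ᵐ x ∂μ, ∃ M : ℕ, ∀ a b : ℕ, M ≤ a → M ≤ b →
      IsEntropyTypical p (vecEntropy p) δ (word x (-a) (a + b)) := by
  simpa only [IsEntropyTypical, length_word] using ae_entropy_typical hp hμ hδ

lemma exists_ae_isRichTypical (hp : IsProbVector p) (hμ : IsBernoulliMeasure μ p) {u : List A}
    (hu : u ≠ []) {θ ε : ℝ} (hθ : 0 < θ) (hθ1 : θ < 1) (hε : 0 < ε) :
    ∃ δ > 0, ∀ᵐ x ∂μ, ∃ M : ℕ, ∀ a b : ℕ, M ≤ a → M ≤ b →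
      IsRichTypical p (vecEntropy p) δ θ ε u (word x (-a) (a + b)) := by
  set c : ℝ := weight p u / (4 * u.length)
  have hc : 0 < c := by
    have : 0 < u.length := List.length_pos_iff.2 hu
    exact div_pos (weight_pos hp.1 u) (by positivity)
  obtain ⟨δ, hδ⟩ : ∃ δ : ℝ, c * Real.log θ = -(3 * δ) := ⟨-(c * Real.log θ) / 3, by ring⟩
  have hδ_pos : 0 < δ := by linarith [mul_neg_of_pos_of_neg hc (Real.log_neg hθ hθ1)]
  obtain ⟨L₀, hL₀⟩ : ∃ L₀ : ℕ, Real.exp (-(δ * L₀)) ≤ ε :=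
    ((Real.tendsto_exp_neg_atTop_nhds_zero.comp
      (tendsto_natCast_atTop_atTop.const_mul_atTop hδ_pos)).eventually (ge_mem_nhds hε)).exists
  refine ⟨δ, hδ_pos, ?_⟩
  filter_upwards [ae_isEntropyTypical hp hμ hδ_pos, ae_occCount_linear hp hμ hu]
    with x ⟨M₁, hM₁⟩ ⟨M₂, hM₂⟩
  refine ⟨max L₀ (max M₁ M₂), fun a b ha hb => ?_⟩
  simp only [max_le_iff] at ha hb
  refine ⟨hM₁ a b ha.2.1 hb.2.1, ?_⟩
  rw [length_word]
  exact exp_neg_mul_pow_le hδ_pos.le hθ hθ1.le hδ (hM₂ a b ha.2.2 hb.2.2) (by omega) hL₀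

end Typical

section Decoding
variable {A B M : Type*} {p : A → ℝ} {q : B → ℝ} {w : List A} {w' : List B} {N N' g : ℕ}
  {l l' : List A → List B → ℝ} {m : List B → M} {H δ : ℝ}

/-- The level `N` blocks of two sequences at the origin are matched by the coupling `l`. -/
def IsMatched (w : List A) (w' : List B) (N : ℕ) (l : List A → List B → ℝ) (x : ℤ → A)
    (y : ℤ → B) : Prop :=
  ∃ v v' j, IsBlockAt w N x v j ∧ IsBlockAt w' N y v' j ∧ l v v' ≠ 0

/-- The rule `F` reads the letter `b` off the level `N` block of `x` at the origin. -/
def IsDecoded (w : List A) (N : ℕ) (F : List A → ℕ → B) (x : ℤ → A) (b : B) : Prop :=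
  ∃ v j, IsBlockAt w N x v j ∧ F v j = b

lemma IsMatched.flip {x : ℤ → A} {y : ℤ → B} (h : IsMatched w w' N l x y) :
    IsMatched w' w N (fun v' v => l v v') y x := by
  obtain ⟨v, v', j, hx, hy, hl⟩ := h
  exact ⟨v', v, j, hy, hx, hl⟩

/-- The word `v` has two entropy typical partners under `l` which `m` tells apart. -/
def IsAmbiguous (q : B → ℝ) (H δ : ℝ) (l : List A → List B → ℝ) (m : List B → M)
    (v : List A) : Prop :=
  ∃ v₁ v₂, l v v₁ ≠ 0 ∧ l v v₂ ≠ 0 ∧ IsEntropyTypical q H δ v₁ ∧ IsEntropyTypical q H δ v₂ ∧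
    m v₁ ≠ m v₂

lemma IsRefinement.exists_decoder [Nonempty B] (hl : IsRefinement w w' N N' g l l' m)
    (hskel : ∀ v v', l' v v' ≠ 0 → skeleton w v = skeleton w' v') :
    ∃ F : List A → ℕ → B, ∀ v v', l' v v' ≠ 0 → ¬ IsAmbiguous q H δ l' m v →
      IsEntropyTypical q H δ v' → ∀ x y j, IsBlockAt w N' x v j → IsBlockAt w' N' y v' j →
        ∃ v₁ v₁' i, IsBlockAt w N x v₁ i ∧ IsBlockAt w' N y v₁' i ∧
          (skeleton w v₁ = gapWord g ∨ l v₁ v₁' ≠ 0 ∧ F v j = y 0) := by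
  classical
  let partner (v : List A) : List B :=
    if hv : ∃ v', l' v v' ≠ 0 ∧ IsEntropyTypical q H δ v' then hv.choose else []
  refine ⟨fun v j => (partner v)[j]?.getD (Classical.arbitrary B),
    fun v v' hvv' hamb htyp x y j hx hy => ?_⟩
  have hpartner : l' v (partner v) ≠ 0 ∧ IsEntropyTypical q H δ (partner v) := by
    have hex : ∃ v', l' v v' ≠ 0 ∧ IsEntropyTypical q H δ v' := ⟨v', hvv', htyp⟩
    simpa only [partner, dif_pos hex] using hex.choose_spec
  have hm : m (partner v) = m v' := by
    by_contra hne
    exact hamb ⟨_, _, hpartner.1, hvv', hpartner.2, htyp, hne⟩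
  obtain ⟨v₁, v₁', i, hx₁, hy₁, hor⟩ := hl v v' hvv' x y j hx hy
  refine ⟨v₁, v₁', i, hx₁, hy₁, hor.imp_right fun ⟨hl₁, hread⟩ => ⟨hl₁, ?_⟩⟩
  change (partner v)[j]?.getD _ = y 0
  rw [hread _ ((hskel v _ hpartner.1).symm.trans (hskel v v' hvv')) hm, Option.getD_some]

lemma IsNonOverlapping.occCount_le_occCount_gapWord (hw : IsNonOverlapping w) {u uN : List A}
    (hu : skeleton w u = gapWord g) (huN : skeleton w uN = gapWord N) (v : List A) :
    occCount (u ++ uN ++ w) v ≤ occCount (gapWord g ++ gapWord N) (skeleton w v) := by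
  have hbegins : w <+: uN :=
    prefix_of_head_skeleton (huN ▸ head_of_gapWord_isPrefix List.prefix_rfl)
  rw [← hu, ← huN, ← skeleton_append hw hbegins]
  exact occCount_le_occCount_skeleton hw v

lemma IsRefinement.exists_holdsOutside [MeasurableSpace A] [MeasurableSpace B]
    {μ : Measure (ℤ → A)} {ν : Measure (ℤ → B)} [Nonempty B]
    (href : IsRefinement w w' N N' g l l' m) (hw : IsNonOverlapping w) (hN : 0 < N)
    (hskel : ∀ v v', l' v v' ≠ 0 → skeleton w v = skeleton w' v') {Typ : Set (List A)} {ε : ℝ≥0∞}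
    (hTyp : μ {x | ∃ v j, IsBlockAt w N' x v j ∧ v ∉ Typ} ≤ ε)
    (hamb : μ {x | ∃ v j, IsBlockAt w N' x v j ∧ v ∈ Typ ∧ IsAmbiguous q H δ l' m v} ≤ ε)
    (hgap : μ {x | ∃ j, IsSkeletonAt N (markerBits w x) (gapWord g) j} ≤ ε)
    (hTyp' : ν {y | ∃ v j, IsBlockAt w' N' y v j ∧ ¬ IsEntropyTypical q H δ v} ≤ ε) :
    ∃ F : List A → ℕ → B, HoldsOutside μ ν (3 * ε) fun x y =>
      IsMatched w w' N' l' x y → IsMatched w w' N l x y ∧ IsDecoded w N' F x (y 0) := by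
  obtain ⟨F, hF⟩ := href.exists_decoder (q := q) (H := H) (δ := δ) hskel
  have hsmall := (measure_union_le _ _).trans
    (add_le_add ((measure_union_le _ _).trans (add_le_add hTyp hamb)) hgap)
  refine ⟨F, _, _, hsmall.trans_eq (by ring), hTyp'.trans (le_mul_of_one_le_left' (by norm_num)),
    fun x hx y hy => ?_⟩
  rintro ⟨v, v', j, hxv, hyv', hvv'⟩
  simp only [Set.mem_union, Set.mem_ofPred_eq, not_or, not_exists, not_and, not_not] at hx hy
  obtain ⟨⟨hTypx, hambx⟩, hgapx⟩ := hx
  obtain ⟨v₁, v₁', i, hx₁, hy₁, hor⟩ :=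
    hF v v' hvv' (hambx v j hxv (hTypx v j hxv)) (hy v' j hyv') x y j hxv hyv'
  rcases hor with hgap₁ | ⟨hl₁, hread⟩
  · exact absurd (hgap₁ ▸ hx₁.isSkeletonAt hw hN) (hgapx i)
  · exact ⟨⟨v₁, v₁', i, hx₁, hy₁, hl₁⟩, v, j, hxv, hread⟩

lemma exists_lt_one_forall_le_mul_sum {ι : Type*} {s : Finset ι} {f : ι → ℝ} (hf : ∀ i, 0 < f i)
    (hs : s.Nontrivial) : ∃ θ : ℝ, 0 < θ ∧ θ < 1 ∧ ∀ i ∈ s, f i ≤ θ * ∑ i ∈ s, f i := by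
  obtain ⟨k, hk, hmax⟩ := s.exists_max_image f hs.nonempty
  have hpos : 0 < ∑ i ∈ s, f i := Finset.sum_pos (fun i _ => hf i) hs.nonempty
  obtain ⟨k', hk', hne⟩ := hs.exists_ne k
  have hlt : f k < ∑ i ∈ s, f i :=
    Finset.single_lt_sum hne hk hk' (hf k') fun i _ _ => (hf i).le
  refine ⟨f k / ∑ i ∈ s, f i, div_pos (hf k) hpos, (div_lt_one hpos).2 hlt, fun i hi => ?_⟩
  rw [div_mul_cancel₀ _ hpos.ne']
  exact hmax i hi

section Finite
variable [Finite A]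

lemma HasFewAmbiguous.sum_weight_le {S : List Bool} {K : ℝ}
    (hfew : HasFewAmbiguous (fiber w S) (weight p) (weight q) l m K) (hp : ∀ a, 0 < p a)
    (hq : ∀ b, 0 < q b) (hskel : ∀ v v', l v v' ≠ 0 → skeleton w v = skeleton w' v')
    {T : Finset (List A)} (hT : T ⊆ fiber w S)
    (hamb : ∀ v ∈ T, IsEntropyTypical p H δ v ∧ IsAmbiguous q H δ l m v) :
    ∑ v ∈ T, weight p v ≤
      Real.exp (-((H - δ) * S.length)) * K / Real.exp (-((H + δ) * S.length)) := by
  refine hfew _ _ (Real.exp_pos _).le (Real.exp_pos _) T hT fun v hv => ?_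
  obtain ⟨htyp, v₁, v₂, hv₁, hv₂, htyp₁, htyp₂, hm⟩ := hamb v hv
  have hlen : v.length = S.length := by rw [← mem_fiber.1 (hT hv), length_skeleton]
  have hlen' {v' : List B} (hv' : l v v' ≠ 0) : v'.length = S.length := by
    rw [← length_skeleton (w := w'), ← hskel v v' hv', length_skeleton, hlen]
  exact ⟨hlen ▸ htyp.weight_le hp, v₁, v₂, hv₁, hv₂, hlen' hv₁ ▸ htyp₁.le_weight hq,
    hlen' hv₂ ▸ htyp₂.le_weight hq, hm⟩

end Finite

variable [Fintype A] [MeasurableSpace A] [DiscreteMeasurableSpace A] {μ : Measure (ℤ → A)}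

lemma IsMarked.measure_isAmbiguous_le (h : IsMarked p μ w) (hq : ∀ b, 0 < q b) (hN : 0 < N)
    (hskel : ∀ v v', l v v' ≠ 0 → skeleton w v = skeleton w' v') {T : List Bool} {u : List A}
    (hu : ∀ v, occCount u v ≤ occCount T (skeleton w v)) {θ ε : ℝ}
    (hθ : 0 < θ) (hθ1 : θ ≤ 1) (hε : 0 ≤ ε)
    (hfew : ∀ S, IsReturnWord (gapWord N) S → HasFewAmbiguous (fiber w S) (weight p) (weight q) l m
      (θ ^ occCount T S * ∑ v ∈ fiber w S, weight p v)) :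
    μ {x | ∃ v j, IsBlockAt w N x v j ∧ IsRichTypical p H δ θ ε u v ∧ IsAmbiguous q H δ l m v} ≤
      ENNReal.ofReal ε := by
  refine h.measure_isBlockAt_mem_le hN
    (Bad := {v | IsRichTypical p H δ θ ε u v ∧ IsAmbiguous q H δ l m v}) hε
    fun S hS T' hT' hbad => ?_
  have hmass : 0 ≤ ∑ v ∈ fiber w S, weight p v :=
    Finset.sum_nonneg fun v _ => (weight_pos h.prob.1 v).le
  rcases T'.eq_empty_or_nonempty with rfl | ⟨v₀, hv₀⟩
  · simpa using mul_nonneg hε hmass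
  refine ((hfew S hS).sum_weight_le h.prob.1 hq hskel hT' fun v hv =>
    ⟨(hbad v hv).1.1, (hbad v hv).2⟩).trans ?_
  have hrich := (hbad v₀ hv₀).1.2
  have hv₀S := mem_fiber.1 (hT' hv₀)
  rw [← length_skeleton (w := w), hv₀S] at hrich
  rw [div_le_iff₀ (Real.exp_pos _)]
  calc Real.exp (-((H - δ) * S.length)) * (θ ^ occCount T S * ∑ v ∈ fiber w S, weight p v)
      ≤ Real.exp (-((H - δ) * S.length)) * (θ ^ occCount u v₀ * ∑ v ∈ fiber w S, weight p v) := by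
        have := pow_le_pow_of_le_one hθ.le hθ1 (hv₀S ▸ hu v₀)
        gcongr
    _ ≤ ε * Real.exp (-((H + δ) * S.length)) * ∑ v ∈ fiber w S, weight p v := by
        rw [← mul_assoc]
        exact mul_le_mul_of_nonneg_right hrich hmass
    _ = ε * (∑ v ∈ fiber w S, weight p v) * Real.exp (-((H + δ) * S.length)) := by ring

variable [Fintype B] [MeasurableSpace B] [DiscreteMeasurableSpace B] {ν : Measure (ℤ → B)}

/- Words typical for either scheme have about the same probability because the entropies agree, and
forgetting the entries inside the gaps gains enough factors `θ` to absorb the error, so a typical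
word rarely has two typical partners. -/
theorem exists_decoding_refinement (h : IsMarked p μ w) (h' : IsMarked q ν w')
    (hent : vecEntropy p = vecEntropy q) (hN : 0 < N) {uN : List A}
    (huN : skeleton w uN = gapWord N) (hc : IsBlockCoupling p q w w' N l) {ε : ℝ} (hε : 0 < ε)
    (n₀ : ℕ) :
    ∃ N' ≥ n₀, ∃ (l' : List A → List B → ℝ) (F : List A → ℕ → B),
      IsBlockCoupling p q w w' N' l' ∧ HoldsOutside μ ν (ENNReal.ofReal ε) fun x y =>
        IsMatched w w' N' l' x y → IsMatched w w' N l x y ∧ IsDecoded w N' F x (y 0) := by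
  have : Nonempty B := nonempty_of_isProbVector h'.prob
  have hε3 : 0 < ε / 3 := by positivity
  have hε3' : ENNReal.ofReal (ε / 3) ≠ 0 := (ENNReal.ofReal_pos.2 hε3).ne'
  obtain ⟨g₁, hg₁⟩ := h.rich
  obtain ⟨g₂, hg₂⟩ := h'.rich
  obtain ⟨g, hg, hgap⟩ := h.exists_measure_gap_le hN hε3' (max N (max g₁ g₂))
  simp only [ge_iff_le, max_le_iff] at hg
  obtain ⟨u, -, -, hu, -⟩ := hg₁ g hg.2.1
  obtain ⟨a, b, hab, ha, hb⟩ := hg₂ g hg.2.2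
  have hnontrivial : (fiber w' (gapWord g)).Nontrivial :=
    ⟨a, mem_fiber.2 ha, b, mem_fiber.2 hb, hab⟩
  obtain ⟨θ, hθ, hθ1, hθQ⟩ :=
    exists_lt_one_forall_le_mul_sum (weight_pos h'.prob.1) hnontrivial
  obtain ⟨δ, hδ, hrich⟩ := exists_ae_isRichTypical h.prob h.bern (u := u ++ uN ++ w)
    (by simp [h.ne_nil]) hθ hθ1 hε3
  obtain ⟨NA, hNA⟩ := h.exists_measure_isBlockAt_le
    (Typ := {v | IsRichTypical p (vecEntropy p) δ θ (ε / 3) (u ++ uN ++ w) v}) hrich hε3'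
  obtain ⟨NB, hNB⟩ := h'.exists_measure_isBlockAt_le
    (Typ := {v | IsEntropyTypical q (vecEntropy q) δ v})
    (ae_isEntropyTypical h'.prob h'.bern hδ) hε3'
  obtain ⟨N', hN'⟩ : ∃ N', max (max n₀ N) (max NA NB) ≤ N' := ⟨_, le_rfl⟩
  simp only [max_le_iff] at hN'
  obtain ⟨⟨hn₀, hNN'⟩, hNA', hNB'⟩ := hN'
  obtain ⟨l', m, hc', href, hfew⟩ := hc.exists_refinement h.prob.1 h'.prob.1 h.nonOverlap
    h'.nonOverlap hN hNN' hg.1 hθ hθ1.le hθQ hnontrivial.nonempty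
  have hskel v v' (hvv' : l' v v' ≠ 0) := (hc'.supp v v' hvv').1
  have hamb := h.measure_isAmbiguous_le (H := vecEntropy p) (δ := δ) h'.prob.1
    (hN.trans_le hNN') hskel (h.nonOverlap.occCount_le_occCount_gapWord hu huN) hθ hθ1.le hε3.le
    hfew
  obtain ⟨F, hF⟩ := href.exists_holdsOutside h.nonOverlap hN hskel (hNA N' hNA') hamb hgap
    (hent ▸ hNB N' hNB')
  have hsum : 3 * ENNReal.ofReal (ε / 3) = ENNReal.ofReal ε := by
    rw [← ENNReal.ofReal_ofNat, ← ENNReal.ofReal_mul (by norm_num), mul_div_cancel₀ _ (by norm_num)]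
  exact ⟨N', hn₀, l', F, hc', hsum ▸ hF⟩

end Decoding

/-! ### Gluing and passing to a joining -/

section BlockCoupling
variable {A B : Type*} [Finite A] [Finite B] {p : A → ℝ} {q : B → ℝ} {w : List A} {w' : List B}
  {N : ℕ} {l : List A → List B → ℝ}

lemma IsBlockCoupling.length_eq (hc : IsBlockCoupling p q w w' N l) {v : List A} {v' : List B}
    (hl : l v v' ≠ 0) : v'.length = v.length := by
  rw [← length_skeleton (w := w'), ← (hc.supp v v' hl).1, length_skeleton]

lemma IsBlockCoupling.tsum_right (hc : IsBlockCoupling p q w w' N l) {v : List A}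
    (hv : IsReturnWord (gapWord N) (skeleton w v)) :
    ∑' v', ENNReal.ofReal (l v v') = ENNReal.ofReal (weight p v) := by
  rw [← (hc.marginals _ hv).row v (mem_fiber.2 rfl),
    ENNReal.ofReal_sum_of_nonneg fun v' _ => hc.nonneg v v']
  refine tsum_eq_sum fun v' hv' => ?_
  by_contra hne
  have hl : l v v' ≠ 0 := fun hzero => hne (by rw [hzero, ENNReal.ofReal_zero])
  exact hv' (mem_fiber.2 (hc.supp v v' hl).1.symm)

end BlockCoupling

section Glue
variable {A B : Type*} [MeasurableSpace A] [MeasurableSpace B]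

/-- The measure on pairs of sequences under which the level `N` blocks at the origin are coupled by
`l` and have the same offset, and the sequences are conditionally independent given their blocks. -/
def glue (μ : Measure (ℤ → A)) (ν : Measure (ℤ → B)) (w : List A) (w' : List B) (N : ℕ)
    (l : List A → List B → ℝ) : Measure ((ℤ → A) × (ℤ → B)) :=
  .sum fun i : (List A × List B) × ℕ => (ENNReal.ofReal (l i.1.1 i.1.2) * cutProb μ w N) •
    μ[|{x | IsBlockAt w N x i.1.1 i.2}].prod ν[|{y | IsBlockAt w' N y i.1.2 i.2}]

lemma measurePreserving_cond_preimage {X Y : Type*} [MeasurableSpace X] [MeasurableSpace Y]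
    {μ : Measure X} {ν : Measure Y} {T : X → Y} (hT : MeasurePreserving T μ ν) {E : Set Y}
    (hE : MeasurableSet E) : MeasurePreserving T μ[|T ⁻¹' E] ν[|E] := by
  rw [ProbabilityTheory.cond, ProbabilityTheory.cond, hT.measure_preimage hE.nullMeasurableSet]
  exact (hT.restrict_preimage hE).smul_measure _

variable [Fintype A] [DiscreteMeasurableSpace A] [Fintype B] [DiscreteMeasurableSpace B]
  {p : A → ℝ} {q : B → ℝ} {μ : Measure (ℤ → A)} {ν : Measure (ℤ → B)} {w : List A} {w' : List B}
  {N : ℕ} {l : List A → List B → ℝ}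

omit [Fintype B] [DiscreteMeasurableSpace B] [MeasurableSpace B] in
lemma IsMarked.tsum_measure_inter_isBlockAt (h : IsMarked p μ w) (hN : 0 < N) {u : List A}
    (hu : skeleton w u = gapWord N) {X : Set (ℤ → A)} (hX : MeasurableSet X) :
    ∑' i : List A × ℕ, μ ({x | IsBlockAt w N x i.1 i.2} ∩ X) = μ X := by
  rw [← measure_iUnion]
  · refine le_antisymm (measure_mono (Set.iUnion_subset fun i => Set.inter_subset_right)) ?_
    refine measure_mono_ae ?_
    filter_upwards [h.ae_exists_isBlockAt hN hu] with x ⟨v, j, hx⟩ hxX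
    exact Set.mem_iUnion.2 ⟨(v, j), hx, hxX⟩
  · refine fun i i' hne => Set.disjoint_left.2 fun x hx hx' => hne ?_
    obtain ⟨hword, hoffset⟩ := hx.1.unique h.nonOverlap hN hx'.1
    exact Prod.ext hword hoffset
  · exact fun i => (measurableSet_isBlockAt w N i.1 i.2).inter hX

lemma IsMarkedPair.cond_isBlockAt_univ (h : IsMarkedPair p q μ ν w w') (hN : 0 < N) {u : List A}
    (hu : skeleton w u = gapWord N) (hc : IsBlockCoupling p q w w' N l) {v : List A} {v' : List B}
    (hl : l v v' ≠ 0) {j : ℕ} (hj : j < v.length) :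
    ν[|{y | IsBlockAt w' N y v' j}] Set.univ = 1 := by
  have := h.right.isProbabilityMeasure
  obtain ⟨hskel, hreturn⟩ := hc.supp v v' hl
  have hpos : ν {y | IsBlockAt w' N y v' j} ≠ 0 := by
    rw [h.right.measure_isBlockAt (by rwa [hc.length_eq hl]) (hskel ▸ hreturn), ← h.cutProb_eq]
    exact mul_ne_zero (by simpa using weight_pos h.right.prob.1 v') (h.left.cutProb_pos hN hu).ne'
  have := cond_isProbabilityMeasure hpos
  exact measure_univ

lemma IsMarkedPair.tsum_mul_cond (h : IsMarkedPair p q μ ν w w') (hN : 0 < N) {u : List A}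
    (hu : skeleton w u = gapWord N) (hc : IsBlockCoupling p q w w' N l) (X : Set (ℤ → A))
    (v : List A) (j : ℕ) :
    ∑' v', ENNReal.ofReal (l v v') * cutProb μ w N *
      (μ[|{x | IsBlockAt w N x v j}] X * ν[|{y | IsBlockAt w' N y v' j}] Set.univ) =
      μ ({x | IsBlockAt w N x v j} ∩ X) := by
  have := h.left.isProbabilityMeasure
  by_cases hv : j < v.length ∧ IsReturnWord (gapWord N) (skeleton w v)
  · calc
      _ = ∑' v', ENNReal.ofReal (l v v') *
          (cutProb μ w N * μ[|{x | IsBlockAt w N x v j}] X) := by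
        refine tsum_congr fun v' => ?_
        rcases eq_or_ne (l v v') 0 with hl | hl
        · simp [hl]
        · rw [h.cond_isBlockAt_univ hN hu hc hl hv.1, mul_one, mul_assoc]
      _ = μ[|{x | IsBlockAt w N x v j}] X * μ {x | IsBlockAt w N x v j} := by
        rw [ENNReal.tsum_mul_right, hc.tsum_right hv.2, h.left.measure_isBlockAt hv.1 hv.2]
        ring
      _ = _ := cond_mul_eq_inter (measurableSet_isBlockAt w N v j) X μ
  · have hempty : {x | IsBlockAt w N x v j} = ∅ :=
      Set.eq_empty_of_forall_notMem fun x hx => hv ⟨hx.2.1, hx.2.2.2⟩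
    simp [hempty]

lemma IsMarkedPair.glue_prod_univ (h : IsMarkedPair p q μ ν w w') (hN : 0 < N) {u : List A}
    (hu : skeleton w u = gapWord N) (hc : IsBlockCoupling p q w w' N l) {X : Set (ℤ → A)}
    (hX : MeasurableSet X) : glue μ ν w w' N l (X ×ˢ Set.univ) = μ X := by
  rw [glue, Measure.sum_apply _ (hX.prod MeasurableSet.univ)]
  simp only [Measure.smul_apply, Measure.prod_prod, smul_eq_mul]
  rw [← h.left.tsum_measure_inter_isBlockAt hN hu hX, ENNReal.tsum_prod', ENNReal.tsum_prod',
    ENNReal.tsum_prod']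
  refine tsum_congr fun v => ?_
  rw [ENNReal.tsum_comm]
  exact tsum_congr fun j => h.tsum_mul_cond hN hu hc X v j

lemma IsMarkedPair.map_fst_glue (h : IsMarkedPair p q μ ν w w') (hN : 0 < N) {u : List A}
    (hu : skeleton w u = gapWord N) (hc : IsBlockCoupling p q w w' N l) :
    (glue μ ν w w' N l).map Prod.fst = μ := by
  ext X hX
  rw [Measure.map_apply measurable_fst hX, ← Set.prod_univ, h.glue_prod_univ hN hu hc hX]

lemma IsMarkedPair.map_swap_glue (h : IsMarkedPair p q μ ν w w') :
    (glue μ ν w w' N l).map Prod.swap = glue ν μ w' w N fun v' v => l v v' := by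
  rw [glue, glue, Measure.map_sum measurable_swap.aemeasurable]
  ext C hC
  rw [Measure.sum_apply _ hC, Measure.sum_apply _ hC,
    ← ((Equiv.prodComm (List A) (List B)).prodCongr (Equiv.refl ℕ)).tsum_eq]
  refine tsum_congr fun i => ?_
  rw [Measure.map_smul, Measure.prod_swap, h.cutProb_eq]
  rfl

lemma IsMarkedPair.map_snd_glue (h : IsMarkedPair p q μ ν w w') (hN : 0 < N) {u : List B}
    (hu : skeleton w' u = gapWord N) (hc : IsBlockCoupling p q w w' N l) :
    (glue μ ν w w' N l).map Prod.snd = ν := by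
  have hfst := h.symm.map_fst_glue hN hu hc.flip
  rwa [← h.map_swap_glue, Measure.map_map measurable_fst measurable_swap] at hfst

omit [Fintype A] [Fintype B] in
lemma ae_glue_isMatched [Finite A] [Finite B] :
    ∀ᵐ z ∂glue μ ν w w' N l, IsMatched w w' N l z.1 z.2 := by
  rw [glue, Measure.ae_sum_iff]
  rintro ⟨⟨v, v'⟩, j⟩
  rcases eq_or_ne (l v v') 0 with hl | hl
  · simp [hl]
  refine Measure.ae_smul_measure ?_ _
  filter_upwards [Measure.quasiMeasurePreserving_fst.ae
      (ae_cond_mem (measurableSet_isBlockAt w N v j)),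
    Measure.quasiMeasurePreserving_snd.ae (ae_cond_mem (measurableSet_isBlockAt w' N v' j))]
    with z hz hz'
  exact ⟨v, v', j, hz, hz', hl⟩

lemma IsMarked.measurePreserving_cond_isBlockAt (h : IsMarked p μ w) {v : List A} {j : ℕ}
    (hj : j + 1 < v.length) :
    MeasurePreserving (translate 1) μ[|{x | IsBlockAt w N x v j}]
      μ[|{x | IsBlockAt w N x v (j + 1)}] := by
  have hpreimage : {x | IsBlockAt w N x v j} = translate 1 ⁻¹' {x | IsBlockAt w N x v (j + 1)} :=
    Set.ext fun x => (isBlockAt_translate hj).symm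
  rw [hpreimage]
  exact measurePreserving_cond_preimage (measurePreserving_translate h.prob h.bern 1)
    (measurableSet_isBlockAt w N v (j + 1))

/- Off the cuts at `1`, translation only advances the common offset inside the coupled blocks. -/
lemma IsMarkedPair.glue_preimage_translate_diff_le (h : IsMarkedPair p q μ ν w w')
    (hc : IsBlockCoupling p q w w' N l) {C : Set ((ℤ → A) × (ℤ → B))} (hC : MeasurableSet C) :
    glue μ ν w w' N l (Prod.map (translate 1) (translate 1) ⁻¹' C \
      Prod.fst ⁻¹' {x | IsCut N (markerBits w x) 1}) ≤ glue μ ν w w' N l C := by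
  have hcut : MeasurableSet
      (Prod.fst ⁻¹' {x | IsCut N (markerBits w x) 1} : Set ((ℤ → A) × (ℤ → B))) :=
    measurable_fst (measurableSet_isCut w N 1)
  have htranslate : Measurable
      (Prod.map (translate 1) (translate 1) : (ℤ → A) × (ℤ → B) → (ℤ → A) × (ℤ → B)) :=
    (measurable_translate 1).prodMap (measurable_translate 1)
  have hadvance : Function.Injective fun i : (List A × List B) × ℕ => (i.1, i.2 + 1) := by
    rintro ⟨i, j⟩ ⟨i', j'⟩ hij
    simpa using hij
  rw [glue, Measure.sum_apply _ ((htranslate hC).diff hcut), Measure.sum_apply _ hC]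
  refine (ENNReal.tsum_le_tsum ?_).trans (ENNReal.tsum_comp_le_tsum_of_injective hadvance _)
  rintro ⟨⟨v, v'⟩, j⟩
  rcases eq_or_ne (l v v') 0 with hl | hl
  · simp [hl]
  simp only [Measure.smul_apply, smul_eq_mul]
  refine mul_le_mul_right ?_ _
  by_cases hj : j + 1 < v.length
  · rw [← ((h.left.measurePreserving_cond_isBlockAt hj).prod
      (h.right.measurePreserving_cond_isBlockAt (by rwa [hc.length_eq hl]))).measure_preimage
        hC.nullMeasurableSet]
    exact measure_mono Set.sdiff_subset
  · refine le_of_eq_of_le (measure_mono_null ?_ (Measure.quasiMeasurePreserving_fst.ae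
      (ae_cond_mem (measurableSet_isBlockAt w N v j)))) zero_le
    rintro z ⟨-, hz⟩ ⟨-, hlt, hend, -⟩
    exact hz (by rwa [show (v.length : ℤ) - j = 1 by omega] at hend)

lemma IsMarkedPair.glue_preimage_translate_le (h : IsMarkedPair p q μ ν w w') (hN : 0 < N)
    {u : List A} (hu : skeleton w u = gapWord N) (hc : IsBlockCoupling p q w w' N l)
    {C : Set ((ℤ → A) × (ℤ → B))} (hC : MeasurableSet C) :
    glue μ ν w w' N l (Prod.map (translate 1) (translate 1) ⁻¹' C) ≤
      glue μ ν w w' N l C + cutProb μ w N := by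
  have hcut : glue μ ν w w' N l (Prod.fst ⁻¹' {x | IsCut N (markerBits w x) 1}) =
      cutProb μ w N := by
    rw [← Set.prod_univ, h.glue_prod_univ hN hu hc (measurableSet_isCut w N 1),
      h.left.measure_isCut]
  calc
    _ ≤ _ := measure_mono (Set.subset_sdiff_union _ _)
    _ ≤ _ := measure_union_le _ _
    _ ≤ _ := add_le_add (h.glue_preimage_translate_diff_le hc hC) hcut.le

end Glue

section Limit
variable {X : Type*} [TopologicalSpace X] [CompactSpace X] [T2Space X] [TotallyDisconnectedSpace X]
  [SecondCountableTopology X] [MeasurableSpace X] [BorelSpace X]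

lemma eq_of_forall_isClopen_le (P Q : Measure X) [IsProbabilityMeasure P] [IsProbabilityMeasure Q]
    (h : ∀ C, IsClopen C → P C ≤ Q C) : P = Q := by
  refine ext_of_generate_finite {C | IsClopen C} ?_ ?_ ?_ (by simp)
  · rw [BorelSpace.measurable_eq (α := X)]
    exact isTopologicalBasis_isClopen.borel_eq_generateFrom
  · exact fun s hs t ht _ => IsClopen.inter hs ht
  · intro C hC
    refine le_antisymm (h C hC) ?_
    have hcompl := h Cᶜ (IsClopen.compl hC)
    rw [prob_compl_eq_one_sub hC.2.measurableSet, prob_compl_eq_one_sub hC.2.measurableSet]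
      at hcompl
    exact (ENNReal.sub_le_sub_iff_left prob_le_one one_ne_top).1 hcompl

lemma exists_limit_measure (M : ℕ → Measure X) (hM : ∀ s, IsProbabilityMeasure (M s)) :
    ∃ Q : Measure X, IsProbabilityMeasure Q ∧
      (∀ C, IsClopen C → Tendsto (fun s => M s C) (hyperfilter ℕ) (nhds (Q C))) ∧
      ∀ U, IsOpen U → ∀ η : ℝ≥0∞, (∀ᶠ s in atTop, M s U ≤ η) → Q U ≤ η := by
  have := TopologicalSpace.metrizableSpace_of_t3_secondCountable X
  let _ := TopologicalSpace.metrizableSpaceMetric X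
  set M' : ℕ → ProbabilityMeasure X := fun s => ⟨M s, hM s⟩
  set L := ((hyperfilter ℕ).map M').lim
  have hL : Tendsto M' (hyperfilter ℕ) (nhds L) := ((hyperfilter ℕ).map M').le_nhds_lim
  refine ⟨L, inferInstance, fun C hC => ?_, fun U hU η hη => ?_⟩
  · exact ProbabilityMeasure.tendsto_measure_of_null_frontier_of_tendsto' hL
      (by simp [hC.frontier_eq])
  · refine (ProbabilityMeasure.le_liminf_measure_open_of_tendsto hL hU).trans ?_
    exact liminf_le_of_frequently_le' (hη.filter_mono Nat.hyperfilter_le_atTop).frequently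

lemma map_eq_of_tendsto_isClopen {Z ι : Type*} [TopologicalSpace Z] [MeasurableSpace Z]
    [OpensMeasurableSpace Z] {F : Filter ι} [F.NeBot] {M : ι → Measure Z} {Q : Measure Z}
    [IsProbabilityMeasure Q]
    (hQ : ∀ C, IsClopen C → Tendsto (fun s => M s C) F (nhds (Q C)))
    {f : Z → X} (hf : Continuous f) {P : Measure X} [IsProbabilityMeasure P]
    (hM : ∀ s, (M s).map f = P) : Q.map f = P := by
  have := Measure.isProbabilityMeasure_map (μ := Q) hf.measurable.aemeasurable
  refine eq_of_forall_isClopen_le _ _ fun C hC => le_of_eq ?_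
  have hmap : ∀ R : Measure Z, R.map f C = R (f ⁻¹' C) := fun R =>
    Measure.map_apply hf.measurable hC.1.measurableSet
  rw [hmap]
  refine tendsto_nhds_unique (hQ _ (hC.preimage hf)) (tendsto_const_nhds.congr fun s => ?_)
  rw [← hmap, hM s]

end Limit

lemma exists_measurable_of_summable_error {X Z B : Type*} [MeasurableSpace X] [MeasurableSpace Z]
    [Finite B] [MeasurableSpace B] [Nonempty B] {Q : Measure Z} {f : Z → X} {c : Z → B}
    {P : ℕ → B → Set X} (hP : ∀ r b, MeasurableSet (P r b))
    (hdisj : ∀ r b b' x, x ∈ P r b → x ∈ P r b' → b = b')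
    (hsum : ∑' r, Q {z | f z ∉ P r (c z)} ≠ ∞) :
    ∃ g : X → B, Measurable g ∧ ∀ᵐ z ∂Q, c z = g (f z) := by
  classical
  let eventual : X → B → Prop := fun x b => ∀ᶠ r in atTop, x ∈ P r b
  have heventual : Measurable eventual := by
    refine measurable_pi_iff.2 fun b => measurable_to_prop ?_
    have hliminf : (fun x => eventual x b) ⁻¹' {True} = ⋃ n, ⋂ r ≥ n, P r b := by
      ext x
      simp [eventual, eventually_atTop]
    rw [hliminf]
    exact .iUnion fun n => .iInter fun r => .iInter fun _ => hP r b
  let select : (B → Prop) → B := fun S => if h : ∃ b, S b then h.choose else Classical.arbitrary B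
  refine ⟨fun x => select (eventual x), (Measurable.of_discrete (f := select)).comp heventual, ?_⟩
  filter_upwards [ae_eventually_notMem hsum] with z hz
  have hc : eventual (f z) (c z) := by
    filter_upwards [hz] with r hr
    exact not_not.1 hr
  have hexists : ∃ b, eventual (f z) b := ⟨_, hc⟩
  rw [show select (eventual (f z)) = hexists.choose from dif_pos hexists]
  obtain ⟨r, hr, hr'⟩ := (hc.and hexists.choose_spec).exists
  exact hdisj r _ _ _ hr hr'

section Translation
variable {A B : Type*}

lemma translate_comp_translate (s t : ℤ) :
    (translate s ∘ translate t : (ℤ → A) → ℤ → A) = translate (s + t) := by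
  funext x n
  simp [translate, add_assoc]

lemma translate_zero : (translate 0 : (ℤ → A) → ℤ → A) = id := by
  funext x n
  simp [translate]

lemma continuous_translate [TopologicalSpace A] (t : ℤ) :
    Continuous (translate t : (ℤ → A) → ℤ → A) :=
  continuous_pi fun n => continuous_apply (n + t)

lemma shift_injective : Function.Injective (shift : (ℤ → A) → ℤ → A) := by
  intro x y h
  funext n
  simpa [shift] using congrFun h (n - 1)

lemma measurePreserving_prodMap_translate [MeasurableSpace A] [MeasurableSpace B]
    {Q : Measure ((ℤ → A) × (ℤ → B))}
    (hQ : MeasurePreserving (Prod.map (translate 1) (translate 1)) Q Q) (n : ℤ) :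
    MeasurePreserving (Prod.map (translate n) (translate n)) Q Q := by
  have hadd : ∀ m n : ℤ, MeasurePreserving (Prod.map (translate m) (translate m)) Q Q →
      MeasurePreserving (Prod.map (translate n) (translate n)) Q Q →
      MeasurePreserving (Prod.map (translate (m + n)) (translate (m + n))) Q Q := by
    intro m n hm hn
    rw [← translate_comp_translate, ← translate_comp_translate, ← Prod.map_comp_map]
    exact hm.comp hn
  have hneg : MeasurePreserving (Prod.map (translate (-1)) (translate (-1))) Q Q := by
    refine ⟨(measurable_translate _).prodMap (measurable_translate _), ?_⟩
    conv_lhs => rw [← hQ.map_eq]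
    rw [Measure.map_map ((measurable_translate _).prodMap (measurable_translate _)) hQ.measurable,
      Prod.map_comp_map, translate_comp_translate, translate_comp_translate, neg_add_cancel,
      translate_zero, translate_zero, Prod.map_id, Measure.map_id]
  induction n with
  | zero =>
    rw [translate_zero, translate_zero, Prod.map_id]
    exact .id Q
  | succ n ih => exact hadd n 1 ih hQ
  | pred n ih => exact hadd (-n) (-1) ih hneg

/-- The map which codes a sequence coordinatewise by the code `f` of its translates. -/
def stationaryCode (f : (ℤ → A) → B) (x : ℤ → A) (n : ℤ) : B := f (translate n x)

lemma stationaryCode_shift (f : (ℤ → A) → B) (x : ℤ → A) :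
    stationaryCode f (shift x) = shift (stationaryCode f x) := by
  funext n
  exact congrArg f (congrFun (translate_comp_translate n 1) x)

lemma measurable_stationaryCode [MeasurableSpace A] [MeasurableSpace B] {f : (ℤ → A) → B}
    (hf : Measurable f) : Measurable (stationaryCode f) :=
  measurable_pi_iff.2 fun n => hf.comp (measurable_translate n)

end Translation

section Joining
variable {A B : Type*} [MeasurableSpace A] [MeasurableSpace B] {μ : Measure (ℤ → A)}
  {ν : Measure (ℤ → B)} {Q : Measure ((ℤ → A) × (ℤ → B))}

/-- A joining of two shift systems: a shift-invariant coupling of their measures. -/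
structure IsJoining (μ : Measure (ℤ → A)) (ν : Measure (ℤ → B))
    (Q : Measure ((ℤ → A) × (ℤ → B))) : Prop where
  map_fst : Q.map Prod.fst = μ
  map_snd : Q.map Prod.snd = ν
  invariant : MeasurePreserving (Prod.map (translate 1) (translate 1)) Q Q

/-- The existence of a measurable isomorphism between two shift systems. -/
def Isomorphic (μ : Measure (ℤ → A)) (ν : Measure (ℤ → B)) : Prop :=
  ∃ D E φ ψ, IsMeasurableIsomorphism μ ν D E φ ψ

lemma IsJoining.swap (hQ : IsJoining μ ν Q) : IsJoining ν μ (Q.map Prod.swap) where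
  map_fst := by rw [Measure.map_map measurable_fst measurable_swap]; exact hQ.map_snd
  map_snd := by rw [Measure.map_map measurable_snd measurable_swap]; exact hQ.map_fst
  invariant := by
    have hmeasurable := (measurable_translate (A := B) 1).prodMap (measurable_translate (A := A) 1)
    refine ⟨hmeasurable, ?_⟩
    rw [Measure.map_map hmeasurable measurable_swap]
    conv_rhs => rw [← hQ.invariant.map_eq, Measure.map_map measurable_swap hQ.invariant.measurable]
    rfl

lemma IsJoining.ae_eq_stationaryCode (hQ : IsJoining μ ν Q) {f : (ℤ → A) → B}
    (hf : ∀ᵐ z ∂Q, z.2 0 = f z.1) : ∀ᵐ z ∂Q, z.2 = stationaryCode f z.1 := by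
  have hcoordinates : ∀ᵐ z ∂Q, ∀ n : ℤ, z.2 n = stationaryCode f z.1 n := by
    refine ae_all_iff.2 fun n => ?_
    filter_upwards [(measurePreserving_prodMap_translate hQ.invariant n).quasiMeasurePreserving.ae
      hf] with z hz
    simpa [stationaryCode, translate] using hz
  filter_upwards [hcoordinates] with z hz using funext hz

variable [Finite A] [DiscreteMeasurableSpace A]

lemma IsJoining.isFactorMap [IsProbabilityMeasure μ] (hQ : IsJoining μ ν Q)
    {φ : (ℤ → A) → ℤ → B} {ψ : (ℤ → B) → ℤ → A} (hφ : Measurable φ) (hψ : Measurable ψ)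
    (hφ_shift : ∀ x, φ (shift x) = shift (φ x)) (hψ_shift : ∀ y, ψ (shift y) = shift (ψ y))
    (hφQ : ∀ᵐ z ∂Q, z.2 = φ z.1) (hψQ : ∀ᵐ z ∂Q, z.1 = ψ z.2) :
    IsFactorMap μ ν {x | ψ (φ x) = x} φ := by
  have hdomain : MeasurableSet {x | ψ (φ x) = x} := measurableSet_eq_fun (hψ.comp hφ) measurable_id
  refine ⟨hφ, hdomain, ?_, ?_, ?_, fun x _ => hφ_shift x⟩
  · ext x
    rw [Set.mem_preimage, Set.mem_ofPred_eq, hφ_shift, hψ_shift, shift_injective.eq_iff,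
      Set.mem_ofPred_eq]
  · rw [← mem_ae_iff_prob_eq_one hdomain, ← hQ.map_fst]
    refine (ae_map_iff measurable_fst.aemeasurable hdomain).2 ?_
    filter_upwards [hφQ, hψQ] with z hz hz'
    rw [← hz, ← hz']
  · rw [← hQ.map_fst, Measure.map_map hφ measurable_fst, ← hQ.map_snd]
    exact Measure.map_congr hφQ

lemma IsJoining.isomorphic [Finite B] [DiscreteMeasurableSpace B] [IsProbabilityMeasure μ]
    [IsProbabilityMeasure ν] (hQ : IsJoining μ ν Q)
    {f : (ℤ → A) → B} (hf : Measurable f) (hfQ : ∀ᵐ z ∂Q, z.2 0 = f z.1)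
    {g : (ℤ → B) → A} (hg : Measurable g) (hgQ : ∀ᵐ z ∂Q, z.1 0 = g z.2) : Isomorphic μ ν := by
  have hgQ_swap : ∀ᵐ z ∂Q.map Prod.swap, z.2 0 = g z.1 :=
    (MeasurableEquiv.prodComm.measurableEmbedding.ae_map_iff (μ := Q)).2 hgQ
  have hφ := hQ.ae_eq_stationaryCode hfQ
  have hψ := ae_of_ae_map measurable_swap.aemeasurable (hQ.swap.ae_eq_stationaryCode hgQ_swap)
  refine ⟨_, _, stationaryCode f, stationaryCode g,
    hQ.isFactorMap (measurable_stationaryCode hf) (measurable_stationaryCode hg)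
      (stationaryCode_shift f) (stationaryCode_shift g) hφ hψ,
    hQ.swap.isFactorMap (measurable_stationaryCode hg) (measurable_stationaryCode hf)
      (stationaryCode_shift g) (stationaryCode_shift f)
      ((MeasurableEquiv.prodComm.measurableEmbedding.ae_map_iff (μ := Q)).2 hψ)
      ((MeasurableEquiv.prodComm.measurableEmbedding.ae_map_iff (μ := Q)).2 hφ),
    fun x hx => ⟨congrArg (stationaryCode f) hx, hx⟩,
    fun y hy => ⟨congrArg (stationaryCode g) hy, hy⟩⟩

lemma exists_isJoining_of_tendsto [Finite B] [DiscreteMeasurableSpace B] [TopologicalSpace A]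
    [DiscreteTopology A] [TopologicalSpace B] [DiscreteTopology B] [IsProbabilityMeasure μ]
    [IsProbabilityMeasure ν] {M : ℕ → Measure ((ℤ → A) × (ℤ → B))}
    (hfst : ∀ s, (M s).map Prod.fst = μ) (hsnd : ∀ s, (M s).map Prod.snd = ν)
    {δ : ℕ → ℝ≥0∞} (hδ : Tendsto δ atTop (nhds 0))
    (htranslate : ∀ s C, MeasurableSet C →
      M s (Prod.map (translate 1) (translate 1) ⁻¹' C) ≤ M s C + δ s) :
    ∃ Q, IsJoining μ ν Q ∧
      ∀ U, IsOpen U → ∀ η : ℝ≥0∞, (∀ᶠ s in atTop, M s U ≤ η) → Q U ≤ η := by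
  have hprob : ∀ s, IsProbabilityMeasure (M s) := fun s => ⟨by
    rw [← Set.preimage_univ (f := Prod.fst), ← Measure.map_apply measurable_fst .univ, hfst s,
      measure_univ]⟩
  obtain ⟨Q, _, hclopen, hopen⟩ := exists_limit_measure M hprob
  refine ⟨Q, ⟨map_eq_of_tendsto_isClopen hclopen continuous_fst hfst,
    map_eq_of_tendsto_isClopen hclopen continuous_snd hsnd, ?_⟩, hopen⟩
  have hT := (continuous_translate (A := A) 1).prodMap (continuous_translate (A := B) 1)
  refine ⟨hT.measurable, ?_⟩
  have := Measure.isProbabilityMeasure_map (μ := Q) hT.measurable.aemeasurable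
  refine eq_of_forall_isClopen_le _ _ fun C hC => ?_
  rw [Measure.map_apply hT.measurable hC.1.measurableSet]
  have hlimit := (hclopen C hC).add (hδ.mono_left Nat.hyperfilter_le_atTop)
  rw [add_zero] at hlimit
  exact le_of_tendsto_of_tendsto' (hclopen _ (hC.preimage hT)) hlimit fun s =>
    htranslate s C hC.1.measurableSet

end Joining

/-! ### Schemes with a common marker law -/

section DecodedSets
variable {A B : Type*} {w : List A} {N : ℕ} {F : List A → ℕ → B} {b b' : B}

lemma IsDecoded.unique {x : ℤ → A} (h : IsDecoded w N F x b) (hw : IsNonOverlapping w) (hN : 0 < N)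
    (h' : IsDecoded w N F x b') : b = b' := by
  obtain ⟨v, j, hv, rfl⟩ := h
  obtain ⟨v', j', hv', rfl⟩ := h'
  obtain ⟨rfl, rfl⟩ := hv.unique hw hN hv'
  rfl

lemma setOf_isDecoded :
    {x : ℤ → A | IsDecoded w N F x b} = ⋃ v, ⋃ j, ⋃ (_ : F v j = b), {x | IsBlockAt w N x v j} := by
  ext x
  simp only [IsDecoded, Set.mem_ofPred_eq, Set.mem_iUnion, exists_prop, and_comm]

lemma measurableSet_isDecoded [Finite A] [MeasurableSpace A] [DiscreteMeasurableSpace A] :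
    MeasurableSet {x : ℤ → A | IsDecoded w N F x b} := by
  rw [setOf_isDecoded]
  exact .iUnion fun v => .iUnion fun j => .iUnion fun _ => measurableSet_isBlockAt w N v j

variable [TopologicalSpace A] [DiscreteTopology A]

lemma isOpen_of_dependsOn {F : Finset ℤ} {E : Set (ℤ → A)}
    (hE : DependsOn (· ∈ E) (F : Set ℤ)) : IsOpen E := by
  obtain ⟨g, hg⟩ := exists_comp_restrict hE
  have hpreimage : E = F.restrict ⁻¹' {x | g x} := Set.ext fun x => iff_of_eq (congrFun hg x)
  rw [hpreimage]
  exact (isOpen_discrete _).preimage (continuous_pi fun i => continuous_apply _)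

lemma isOpen_isBlockAt (w : List A) (N : ℕ) (v : List A) (j : ℕ) :
    IsOpen {x : ℤ → A | IsBlockAt w N x v j} :=
  (isOpen_of_dependsOn (dependsOn_word (-j) v.length (· = v))).inter <| isOpen_const.inter <|
    (isOpen_of_dependsOn (dependsOn_isCut w (v.length - j) N)).inter isOpen_const

lemma isOpen_isDecoded : IsOpen {x : ℤ → A | IsDecoded w N F x b} := by
  rw [setOf_isDecoded]
  exact isOpen_iUnion fun v => isOpen_iUnion fun j => isOpen_iUnion fun _ =>
    isOpen_isBlockAt w N v j

end DecodedSets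

section Reading
variable {A B Z : Type*} [Fintype A] [MeasurableSpace A] [DiscreteMeasurableSpace A]
  [TopologicalSpace A] [DiscreteTopology A] [TopologicalSpace B] [DiscreteTopology B]
  [TopologicalSpace Z] [MeasurableSpace Z] [OpensMeasurableSpace Z]
  {p : A → ℝ} {μ : Measure (ℤ → A)} {w : List A} {X : Z → ℤ → A} {c : Z → B}
  {Q : Measure Z} {M : ℕ → Measure Z}

/- Almost surely some letter is decoded, and then failing to decode `c` means decoding another
letter, which is an open condition. -/
lemma IsMarked.measure_not_isDecoded_le (h : IsMarked p μ w) {N : ℕ} (hN : 0 < N) {u : List A}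
    (hu : skeleton w u = gapWord N) {F : List A → ℕ → B} (hX : Continuous X) (hc : Continuous c)
    (hQX : Q.map X = μ)
    (hQ : ∀ U, IsOpen U → ∀ η : ℝ≥0∞, (∀ᶠ s in atTop, M s U ≤ η) → Q U ≤ η) {η : ℝ≥0∞}
    (hM : ∀ᶠ s in atTop, M s {z | ¬ IsDecoded w N F (X z) (c z)} ≤ η) :
    Q {z | ¬ IsDecoded w N F (X z) (c z)} ≤ η := by
  have hopen : IsOpen {z | ∃ b, c z ∈ ({b}ᶜ : Set B) ∧ IsDecoded w N F (X z) b} := by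
    rw [Set.ofPred_exists]
    exact isOpen_iUnion fun b =>
      ((isOpen_discrete {b}ᶜ).preimage hc).inter (isOpen_isDecoded.preimage hX)
  have hdecoded : ∀ᵐ z ∂Q, ∃ v j, IsBlockAt w N (X z) v j :=
    ae_of_ae_map hX.measurable.aemeasurable (hQX ▸ h.ae_exists_isBlockAt hN hu)
  refine (measure_mono_ae ?_).trans (hQ _ hopen η (hM.mono fun s hs => (measure_mono ?_).trans hs))
  · filter_upwards [hdecoded] with z ⟨v, j, hv⟩ hz
    exact ⟨F v j, fun hb => hz ⟨v, j, hv, hb.symm⟩, v, j, hv, rfl⟩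
  · rintro z ⟨b, hb, hdec⟩ hdec'
    exact hb (hdec'.unique h.nonOverlap hN hdec)

lemma IsMarked.exists_reading [Finite B] [Nonempty B] [MeasurableSpace B] (h : IsMarked p μ w)
    {N : ℕ → ℕ} (hN : ∀ r, 0 < N r) (hu : ∀ r, ∃ u, skeleton w u = gapWord (N r))
    {F : ℕ → List A → ℕ → B} (hX : Continuous X) (hc : Continuous c) (hQX : Q.map X = μ)
    (hQ : ∀ U, IsOpen U → ∀ η : ℝ≥0∞, (∀ᶠ s in atTop, M s U ≤ η) → Q U ≤ η) {η : ℕ → ℝ≥0∞}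
    (hη : ∑' r, η r ≠ ∞)
    (hM : ∀ r, ∀ᶠ s in atTop, M s {z | ¬ IsDecoded w (N r) (F r) (X z) (c z)} ≤ η r) :
    ∃ f : (ℤ → A) → B, Measurable f ∧ ∀ᵐ z ∂Q, c z = f (X z) := by
  refine exists_measurable_of_summable_error (P := fun r b => {x | IsDecoded w (N r) (F r) x b})
    (fun r b => measurableSet_isDecoded)
    (fun r b b' x hb hb' => hb.unique h.nonOverlap (hN r) hb')
    (ne_top_of_le_ne_top hη (ENNReal.tsum_le_tsum fun r => ?_))
  obtain ⟨u, hu⟩ := hu r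
  exact h.measure_not_isDecoded_le (hN r) hu hX hc hQX hQ (hM r)

end Reading

section Descent

lemma tsum_pow_half_ne_top : ∑' r : ℕ, 4 * (2⁻¹ : ℝ≥0∞) ^ r ≠ ∞ := by
  rw [ENNReal.tsum_mul_left, ENNReal.tsum_geometric, ENNReal.one_sub_inv_two, inv_inv]
  exact ENNReal.mul_ne_top (by simp) (by simp)

lemma sum_two_mul_pow_half_le (r s : ℕ) :
    ∑ k ∈ Finset.Ico r s, 2 * (2⁻¹ : ℝ≥0∞) ^ k ≤ 4 * 2⁻¹ ^ r := by
  rw [Finset.sum_Ico_eq_sum_range]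
  simp only [pow_add]
  rw [← Finset.mul_sum, ← Finset.mul_sum]
  calc 2 * (2⁻¹ ^ r * ∑ k ∈ Finset.range (s - r), (2⁻¹ : ℝ≥0∞) ^ k)
      ≤ 2 * (2⁻¹ ^ r * ∑' k, (2⁻¹ : ℝ≥0∞) ^ k) := by
        gcongr
        exact ENNReal.sum_le_tsum _
    _ = 4 * 2⁻¹ ^ r := by
        rw [ENNReal.tsum_geometric, ENNReal.one_sub_inv_two, inv_inv, mul_left_comm, mul_comm]
        norm_num

lemma measure_not_le_sum_of_holdsOutside {X Y : Type*} [MeasurableSpace X] [MeasurableSpace Y]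
    {μ : Measure X} {ν : Measure Y} {P R : ℕ → X → Y → Prop} {δ : ℕ → ℝ≥0∞}
    (hstep : ∀ r, HoldsOutside μ ν (δ r) fun x y => P (r + 1) x y → P r x y ∧ R r x y)
    {M : Measure (X × Y)} (hfst : M.map Prod.fst = μ) (hsnd : M.map Prod.snd = ν) {r s : ℕ}
    (hrs : r < s) (hs : ∀ᵐ z ∂M, P s z.1 z.2) :
    M {z | ¬ R r z.1 z.2} ≤ ∑ k ∈ Finset.Ico r s, 2 * δ k := by
  let failure (k : ℕ) : Set (X × Y) :=
    {z | ¬ (P (k + 1) z.1 z.2 → P k z.1 z.2 ∧ R k z.1 z.2)}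
  have hdescend : ∀ z, P s z.1 z.2 → (∀ k ∈ Finset.Ico r s, z ∉ failure k) → R r z.1 z.2 := by
    intro z hz hgood
    have hlevel : ∀ k, r < k → k ≤ s → P k z.1 z.2 := by
      intro k hrk hks
      induction hks using Nat.decreasingInduction with
      | self => exact hz
      | of_succ k hks ih =>
        exact (not_not.1 (hgood k (Finset.mem_Ico.2 ⟨hrk.le, hks⟩)) (ih (by omega))).1
    exact (not_not.1 (hgood r (Finset.mem_Ico.2 ⟨le_rfl, hrs⟩)) (hlevel _ r.lt_succ_self hrs)).2
  calc M {z | ¬ R r z.1 z.2}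
      ≤ M (⋃ k ∈ Finset.Ico r s, failure k) := by
        refine measure_mono_ae ?_
        filter_upwards [hs] with z hz hne
        by_contra hcover
        exact hne (hdescend z hz fun k hk hfail => hcover (Set.mem_biUnion hk hfail))
    _ ≤ ∑ k ∈ Finset.Ico r s, M (failure k) := measure_biUnion_finset_le _ _
    _ ≤ ∑ k ∈ Finset.Ico r s, 2 * δ k :=
        Finset.sum_le_sum fun k _ => (hstep k).measure_le hfst hsnd

end Descent

section Refinement
variable {A B : Type*} {w : List A} {w' : List B}

/-- The level `N` is positive, and for both markers some word of length `N` may precede an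
occurrence of the marker without creating another one. -/
structure IsAdmissible (w : List A) (w' : List B) (N : ℕ) : Prop where
  pos : 0 < N
  left : ∃ u, skeleton w u = gapWord N
  right : ∃ u, skeleton w' u = gapWord N

variable [Fintype A] [MeasurableSpace A] [Fintype B] [MeasurableSpace B]
  {p : A → ℝ} {q : B → ℝ} {μ : Measure (ℤ → A)} {ν : Measure (ℤ → B)}

lemma IsMarkedPair.exists_forall_isAdmissible (h : IsMarkedPair p q μ ν w w') :
    ∃ n₀, ∀ N ≥ n₀, IsAdmissible w w' N := by
  obtain ⟨g, hg⟩ := h.left.rich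
  obtain ⟨g', hg'⟩ := h.right.rich
  refine ⟨max 1 (max g g'), fun N hN => ?_⟩
  simp only [ge_iff_le, max_le_iff] at hN
  obtain ⟨u, -, -, hu, -⟩ := hg N hN.2.1
  obtain ⟨u', -, -, hu', -⟩ := hg' N hN.2.2
  exact ⟨hN.1, ⟨u, hu⟩, u', hu'⟩

variable [DiscreteMeasurableSpace A] [DiscreteMeasurableSpace B]

lemma IsMarkedPair.exists_two_sided_refinement (h : IsMarkedPair p q μ ν w w')
    (hent : vecEntropy p = vecEntropy q) {N : ℕ} (hN : IsAdmissible w w' N)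
    {l : List A → List B → ℝ} (hc : IsBlockCoupling p q w w' N l) {ε : ℝ} (hε : 0 < ε) (n : ℕ) :
    ∃ (N₁ N₂ : ℕ) (l₂ : List A → List B → ℝ) (F : List A → ℕ → B) (G : List B → ℕ → A),
      IsAdmissible w w' N₁ ∧ IsAdmissible w w' N₂ ∧ n ≤ N₂ ∧ IsBlockCoupling p q w w' N₂ l₂ ∧
      HoldsOutside μ ν (ENNReal.ofReal ε) fun x y => IsMatched w w' N₂ l₂ x y →
        IsMatched w w' N l x y ∧ IsDecoded w N₁ F x (y 0) ∧ IsDecoded w' N₂ G y (x 0) := by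
  obtain ⟨n₀, hn₀⟩ := h.exists_forall_isAdmissible
  obtain ⟨u, hu⟩ := hN.left
  obtain ⟨N₁, hN₁, l₁, F, hc₁, hF⟩ :=
    exists_decoding_refinement h.left h.right hent hN.pos hu hc (half_pos hε) n₀
  obtain ⟨u', hu'⟩ := (hn₀ N₁ hN₁).right
  obtain ⟨N₂, hN₂, l₂, G, hc₂, hG⟩ :=
    exists_decoding_refinement h.right h.left hent.symm (hn₀ N₁ hN₁).pos hu' hc₁.flip
      (half_pos hε) (max n₀ n)
  refine ⟨N₁, N₂, fun v v' => l₂ v' v, F, G, hn₀ N₁ hN₁, hn₀ N₂ ((le_max_left _ _).trans hN₂),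
    (le_max_right _ _).trans hN₂, hc₂.flip, ?_⟩
  rw [← add_halves ε, ENNReal.ofReal_add (half_pos hε).le (half_pos hε).le]
  refine (hF.and hG.flip).imp fun x y ⟨hF, hG⟩ hmatched => ?_
  obtain ⟨hmatched₁, hdecoded⟩ := hG hmatched.flip
  exact ⟨(hF hmatched₁.flip).1, (hF hmatched₁.flip).2, hdecoded⟩

lemma ofReal_pow_half (r : ℕ) : ENNReal.ofReal (2⁻¹ ^ r) = 2⁻¹ ^ r := by
  rw [ENNReal.ofReal_pow (by norm_num), ENNReal.ofReal_inv_of_pos (by norm_num),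
    ENNReal.ofReal_ofNat]

lemma IsMarkedPair.exists_coupling_sequence (h : IsMarkedPair p q μ ν w w')
    (hent : vecEntropy p = vecEntropy q) :
    ∃ (N N₁ : ℕ → ℕ) (l : ℕ → List A → List B → ℝ) (F : ℕ → List A → ℕ → B)
      (G : ℕ → List B → ℕ → A), (∀ r, IsAdmissible w w' (N r)) ∧ (∀ r, IsAdmissible w w' (N₁ r)) ∧
      (∀ r, r ≤ N r) ∧ (∀ r, IsBlockCoupling p q w w' (N r) (l r)) ∧
      ∀ r, HoldsOutside μ ν (2⁻¹ ^ r) fun x y => IsMatched w w' (N (r + 1)) (l (r + 1)) x y →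
        IsMatched w w' (N r) (l r) x y ∧
          IsDecoded w (N₁ r) (F r) x (y 0) ∧ IsDecoded w' (N (r + 1)) (G r) y (x 0) := by
  let Stage := {s : ℕ × (List A → List B → ℝ) //
    IsAdmissible w w' s.1 ∧ IsBlockCoupling p q w w' s.1 s.2}
  have hnext (r : ℕ) (s : Stage) := h.exists_two_sided_refinement hent s.2.1 s.2.2
    (ε := 2⁻¹ ^ r) (by positivity) (r + 1)
  choose N₁ N₂ l₂ F G hN₁ hN₂ hle hc hstep using hnext
  simp only [ofReal_pow_half] at hstep
  obtain ⟨n₀, hn₀⟩ := h.exists_forall_isAdmissible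
  obtain ⟨u, hu⟩ := (hn₀ n₀ le_rfl).left
  obtain ⟨l₀, hl₀⟩ := exists_isBlockCoupling (w := w) (w' := w') h.left.prob.1 h.right.prob.1 n₀
    fun S hS => h.sum_weight_fiber_eq (hn₀ n₀ le_rfl).pos hu hS
  let next (r : ℕ) (s : Stage) : Stage := ⟨(N₂ r s, l₂ r s), hN₂ r s, hc r s⟩
  let s : ℕ → Stage := fun r => Nat.rec ⟨(n₀, l₀), hn₀ n₀ le_rfl, hl₀⟩ next r
  refine ⟨fun r => (s r).1.1, fun r => N₁ r (s r), fun r => (s r).1.2, fun r => F r (s r),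
    fun r => G r (s r), fun r => (s r).2.1, fun r => hN₁ r (s r), fun r => ?_,
    fun r => (s r).2.2, fun r => hstep r (s r)⟩
  cases r with
  | zero => exact Nat.zero_le _
  | succ r => exact hle r (s r)

theorem IsMarkedPair.isomorphic (h : IsMarkedPair p q μ ν w w')
    (hent : vecEntropy p = vecEntropy q) : Isomorphic μ ν := by
  have := h.left.isProbabilityMeasure
  have := h.right.isProbabilityMeasure
  have := nonempty_of_isProbVector h.left.prob
  have := nonempty_of_isProbVector h.right.prob
  let _ : TopologicalSpace A := ⊥
  let _ : TopologicalSpace B := ⊥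
  have : DiscreteTopology A := ⟨rfl⟩
  have : DiscreteTopology B := ⟨rfl⟩
  obtain ⟨N, N₁, l, F, G, hN, hN₁, hrN, hc, hstep⟩ := h.exists_coupling_sequence hent
  have hfst s : (glue μ ν w w' (N s) (l s)).map Prod.fst = μ :=
    (hN s).left.elim fun _ hu => h.map_fst_glue (hN s).pos hu (hc s)
  have hsnd s : (glue μ ν w w' (N s) (l s)).map Prod.snd = ν :=
    (hN s).right.elim fun _ hu => h.map_snd_glue (hN s).pos hu (hc s)
  obtain ⟨Q, hQ, hopen⟩ := exists_isJoining_of_tendsto hfst hsnd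
    (h.left.tendsto_cutProb.comp (tendsto_atTop_mono hrN tendsto_id)) fun s _ hC =>
      (hN s).left.elim fun _ hu => h.glue_preimage_translate_le (hN s).pos hu (hc s) hC
  have hdecoded r : ∀ᶠ s in atTop, glue μ ν w w' (N s) (l s)
      {z | ¬ (IsDecoded w (N₁ r) (F r) z.1 (z.2 0) ∧
        IsDecoded w' (N (r + 1)) (G r) z.2 (z.1 0))} ≤ 4 * 2⁻¹ ^ r := by
    filter_upwards [eventually_gt_atTop r] with s hrs
    exact (measure_not_le_sum_of_holdsOutside (P := fun s => IsMatched w w' (N s) (l s))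
      (R := fun r x y => IsDecoded w (N₁ r) (F r) x (y 0) ∧ IsDecoded w' (N (r + 1)) (G r) y (x 0))
      hstep (hfst s) (hsnd s) hrs ae_glue_isMatched).trans (sum_two_mul_pow_half_le r s)
  obtain ⟨f, hf, hfQ⟩ := h.left.exists_reading (fun r => (hN₁ r).pos) (fun r => (hN₁ r).left)
    continuous_fst ((continuous_apply 0).comp continuous_snd) hQ.map_fst hopen tsum_pow_half_ne_top
    fun r => (hdecoded r).mono fun s => le_trans (measure_mono fun z hz hz' => hz hz'.1)
  obtain ⟨g, hg, hgQ⟩ := h.right.exists_reading (fun r => (hN (r + 1)).pos)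
    (fun r => (hN (r + 1)).right) continuous_snd ((continuous_apply 0).comp continuous_fst)
    hQ.map_snd hopen tsum_pow_half_ne_top
    fun r => (hdecoded r).mono fun s => le_trans (measure_mono fun z hz hz' => hz hz'.2)
  exact hQ.isomorphic hf hfQ hg hgQ

end Refinement

/-! ### The intermediate scheme -/

section Marker
variable {A : Type*} {w : List A}

lemma skeleton_eq_replicate {v : List A} (h : ∀ i < v.length, ¬ w <+: v.drop i) :
    skeleton w v = List.replicate v.length false := by
  induction v with
  | nil => rfl
  | cons a v ih =>
    have hhead : ¬ w <+: a :: v := h 0 (by simp)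
    rw [skeleton, ih fun i hi => by simpa using h (i + 1) (by simpa using hi)]
    simp [hhead, List.replicate_succ]

lemma skeleton_eq_gapWord {v : List A} (hv : v ≠ []) (hbegins : w <+: v)
    (h : ∀ i, 0 < i → i < v.length → ¬ w <+: v.drop i) : skeleton w v = gapWord v.length := by
  cases v with
  | nil => exact absurd rfl hv
  | cons a v =>
    rw [skeleton, skeleton_eq_replicate fun i hi => by
      simpa using h (i + 1) (by omega) (by simpa using hi), gapWord]
    simp [hbegins]

/-- The marker `a ⋯ a b` with `k` letters `a`. -/
def marker (a b : A) (k : ℕ) : List A := List.replicate k a ++ [b]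

variable {a b : A} {k : ℕ}

@[simp] lemma length_marker : (marker a b k).length = k + 1 := by simp [marker]

lemma weight_marker {p : A → ℝ} : weight p (marker a b k) = p a ^ k * p b := by
  simp [marker, weight]

lemma getElem?_marker_of_lt {i : ℕ} (hi : i < k) : (marker a b k)[i]? = some a := by
  simp [marker, hi, List.getElem?_append]

lemma getElem?_marker_self : (marker a b k)[k]? = some b := by
  simp [marker]

lemma getElem?_of_prefix_drop {u v : List A} {i j : ℕ} {c : A} (h : u <+: v.drop i)
    (hj : u[j]? = some c) : v[i + j]? = some c := by
  obtain ⟨t, ht⟩ := h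
  rw [← List.getElem?_drop, ← ht, List.getElem?_append_left, hj]
  exact (List.getElem?_eq_some_iff.1 hj).1

lemma isNonOverlapping_marker (hab : a ≠ b) : IsNonOverlapping (marker a b k) := by
  intro i hi hik h
  rw [length_marker] at hik
  have hlast : ((marker a b k).drop i)[k - i]? = some b := by
    rw [List.getElem?_drop, Nat.add_sub_cancel' (by omega), getElem?_marker_self]
  have hletter := getElem?_of_prefix_drop (i := 0) (by simpa using h) hlast
  rw [zero_add, getElem?_marker_of_lt (by omega)] at hletter
  exact hab (Option.some.inj hletter)

lemma skeleton_marker_append_left (hab : a ≠ b) (n : ℕ) :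
    skeleton (marker a b k) (marker a b k ++ List.replicate n a) = gapWord (k + 1 + n) := by
  rw [skeleton_eq_gapWord (by simp [marker]) (List.prefix_append _ _) fun i hi _ h => ?_,
    List.length_append, length_marker, List.length_replicate]
  have hletter := getElem?_of_prefix_drop h getElem?_marker_self
  rw [List.getElem?_append_right (by simp only [length_marker]; omega),
    List.getElem?_replicate] at hletter
  split_ifs at hletter
  exact hab (Option.some.inj hletter)

lemma skeleton_marker_append_right (hab : a ≠ b) (hk : 0 < k) (n : ℕ) :
    skeleton (marker a b k) (marker a b k ++ List.replicate n b) = gapWord (k + 1 + n) := by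
  rw [skeleton_eq_gapWord (by simp [marker]) (List.prefix_append _ _) fun i hi _ h => ?_,
    List.length_append, length_marker, List.length_replicate]
  rcases le_or_gt i k with hik | hik
  · have hletter := getElem?_of_prefix_drop h (getElem?_marker_of_lt (i := k - i) (by omega))
    rw [Nat.add_sub_cancel' hik, List.getElem?_append_left (by simp),
      getElem?_marker_self] at hletter
    exact hab (Option.some.inj hletter).symm
  · have hletter := getElem?_of_prefix_drop h (getElem?_marker_of_lt hk)
    rw [List.getElem?_append_right (by simp only [length_marker]; omega),
      List.getElem?_replicate] at hletter
    split_ifs at hletter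
    exact hab (Option.some.inj hletter).symm

lemma isMarked_marker [Fintype A] [MeasurableSpace A] {p : A → ℝ} {μ : Measure (ℤ → A)}
    (hp : IsProbVector p) (hμ : IsBernoulliMeasure μ p) (hab : a ≠ b) (hk : 0 < k) :
    IsMarked p μ (marker a b k) where
  prob := hp
  bern := hμ
  nonOverlap := isNonOverlapping_marker hab
  ne_nil := by simp [marker]
  rich := by
    refine ⟨k + 2, fun g hg => ?_⟩
    obtain ⟨n, rfl⟩ := Nat.exists_eq_add_of_le hg
    refine ⟨_, _, ?_, (skeleton_marker_append_left hab (n + 1)).trans (by congr 1; omega),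
      (skeleton_marker_append_right hab hk (n + 1)).trans (by congr 1; omega)⟩
    intro h
    have hletters := List.append_cancel_left h
    rw [List.replicate_succ, List.replicate_succ] at hletters
    exact hab (List.cons.inj hletters).1

end Marker

section Entropy

lemma vecEntropy_eq_sum {A : Type*} [Fintype A] (p : A → ℝ) :
    vecEntropy p = ∑ i, Real.negMulLog (p i) := by
  simp [vecEntropy, Real.negMulLog, ← Finset.sum_neg_distrib]

lemma sum_negMulLog_div_card {ι : Type*} [Fintype ι] [Nonempty ι] (m : ℝ) :
    ∑ _i : ι, Real.negMulLog (m / Fintype.card ι) =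
      m * Real.log (Fintype.card ι) + Real.negMulLog m := by
  have hcard : (Fintype.card ι : ℝ) ≠ 0 := Nat.cast_ne_zero.2 Fintype.card_ne_zero
  rw [Finset.sum_const, Finset.card_univ, nsmul_eq_mul, div_eq_mul_inv, Real.negMulLog_mul,
    Real.negMulLog, Real.negMulLog, Real.log_inv]
  field_simp
  ring

-- The entropy varies continuously along the segment from a point mass to a uniform mass.
lemma exists_sum_negMulLog_eq {m h : ℝ} (hm : 0 < m) (hh : Real.negMulLog m < h) :
    ∃ (n : ℕ) (u : Fin n → ℝ),
      (∀ i, 0 < u i) ∧ ∑ i, u i = m ∧ ∑ i, Real.negMulLog (u i) = h := by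
  obtain ⟨n, hn⟩ : ∃ n : ℕ, h - Real.negMulLog m < m * Real.log ((n + 1 : ℕ) : ℝ) :=
    (((Real.tendsto_log_atTop.comp tendsto_natCast_atTop_atTop).comp
      (tendsto_add_atTop_nat 1)).const_mul_atTop hm |>.eventually_gt_atTop _).exists
  let u (t : ℝ) (i : Fin (n + 1)) : ℝ :=
    (1 - t) * Pi.single (M := fun _ => ℝ) 0 m i + t * (m / (n + 1 : ℕ))
  let entropy (t : ℝ) : ℝ := ∑ i, Real.negMulLog (u t i)
  have hcont : Continuous entropy :=
    continuous_finsetSum _ fun i _ => Real.continuous_negMulLog.comp (by fun_prop)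
  have hpoint : entropy 0 < h := by
    have hu : u 0 = Pi.single 0 m := by ext i; simp [u]
    simp only [entropy, hu]
    rwa [Finset.sum_eq_single 0 (fun i _ hi => by simp [hi]) (by simp), Pi.single_eq_same]
  have huniform : h < entropy 1 := by
    have hentropy := sum_negMulLog_div_card (ι := Fin (n + 1)) m
    rw [Fintype.card_fin] at hentropy
    simp only [entropy, u, sub_self, zero_mul, zero_add, one_mul, hentropy]
    linarith
  obtain ⟨t, ⟨ht₀, ht₁⟩, ht⟩ :=
    intermediate_value_Ioo zero_le_one hcont.continuousOn ⟨hpoint, huniform⟩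
  refine ⟨n + 1, u t, fun i => ?_, ?_, ht⟩
  · have hsingle : 0 ≤ Pi.single (M := fun _ : Fin (n + 1) => ℝ) 0 m := Pi.single_nonneg.2 hm.le
    have huniform : 0 < t * (m / (n + 1 : ℕ)) := by positivity
    exact add_pos_of_nonneg_of_pos (mul_nonneg (sub_nonneg.2 ht₁.le) (hsingle i)) huniform
  · simp only [u]
    rw [Finset.sum_add_distrib, ← Finset.mul_sum, Finset.sum_pi_single', if_pos (Finset.mem_univ _),
      Finset.sum_const, Finset.card_univ, Fintype.card_fin, nsmul_eq_mul]
    field_simp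
    ring

lemma exists_negMulLog_add_lt {c h : ℝ} (hc : c < 1) (hh : 0 < h) :
    ∃ ρ ∈ Set.Ioo c 1, Real.negMulLog ρ + Real.negMulLog (1 - ρ) < h := by
  have hcont : Continuous fun ρ => Real.negMulLog ρ + Real.negMulLog (1 - ρ) := by fun_prop
  have hlim : Tendsto (fun ρ => Real.negMulLog ρ + Real.negMulLog (1 - ρ))
      (nhdsWithin 1 (Set.Iio 1)) (nhds 0) := by
    simpa using (hcont.tendsto 1).mono_left nhdsWithin_le_nhds
  exact (Eventually.and (Ioo_mem_nhdsLT hc) (hlim.eventually_lt_const hh)).exists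

lemma eventually_negMulLog_add_lt {ρ h : ℝ} (hρ : ρ < 1)
    (hh : Real.negMulLog ρ + Real.negMulLog (1 - ρ) < h) :
    ∀ᶠ s : ℝ × ℝ in nhds 0, 0 < 1 - ρ - s.1 - s.2 ∧
      Real.negMulLog ρ + Real.negMulLog s.1 + Real.negMulLog s.2 +
        Real.negMulLog (1 - ρ - s.1 - s.2) < h := by
  have hmass : Continuous fun s : ℝ × ℝ => 1 - ρ - s.1 - s.2 := by fun_prop
  have hentropy : Continuous fun s : ℝ × ℝ => Real.negMulLog ρ + Real.negMulLog s.1 +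
      Real.negMulLog s.2 + Real.negMulLog (1 - ρ - s.1 - s.2) := by fun_prop
  exact ((hmass.tendsto 0).eventually_const_lt (by simpa using hρ)).and
    ((hentropy.tendsto 0).eventually_lt_const (by simpa using hh))

lemma tendsto_div_pow_mul {a ρ : ℝ} (ha : 0 < a) (haρ : a < ρ) (a' : ℝ) :
    Tendsto (fun k : ℕ => (a / ρ) ^ k * a') atTop (nhds 0) := by
  have hρ := ha.trans haρ
  simpa using (tendsto_pow_atTop_nhds_zero_of_lt_one (by positivity)
    ((div_lt_one hρ).2 haρ)).mul_const a'

lemma exists_isProbVector_pow_mul_eq {a a' b b' h : ℝ} (ha : 0 < a) (ha₁ : a < 1) (ha' : 0 < a')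
    (hb : 0 < b) (hb₁ : b < 1) (hb' : 0 < b') (hh : 0 < h) :
    ∃ (k n : ℕ) (r : Fin 3 ⊕ Fin n → ℝ), 0 < k ∧ IsProbVector r ∧ vecEntropy r = h ∧
      r (Sum.inl 0) ^ k * r (Sum.inl 1) = a ^ k * a' ∧
      r (Sum.inl 0) ^ k * r (Sum.inl 2) = b ^ k * b' := by
  obtain ⟨ρ, ⟨hρ, hρ₁⟩, hρh⟩ := exists_negMulLog_add_lt (max_lt ha₁ hb₁) hh
  obtain ⟨haρ, hbρ⟩ := max_lt_iff.1 hρ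
  have hρ₀ : 0 < ρ := ha.trans haρ
  have hlim := (tendsto_div_pow_mul ha haρ a').prodMk_nhds (tendsto_div_pow_mul hb hbρ b')
  obtain ⟨k, ⟨hmass, hentropy⟩, hk⟩ :=
    ((hlim.eventually (eventually_negMulLog_add_lt hρ₁ hρh)).and (eventually_gt_atTop 0)).exists
  obtain ⟨n, u, hu, hsum, hent⟩ := exists_sum_negMulLog_eq hmass (lt_sub_iff_add_lt'.2 hentropy)
  have hpow (c c' : ℝ) : ρ ^ k * ((c / ρ) ^ k * c') = c ^ k * c' := by
    rw [← mul_assoc, ← mul_pow, mul_div_cancel₀ _ hρ₀.ne']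
  refine ⟨k, n, Sum.elim ![ρ, (a / ρ) ^ k * a', (b / ρ) ^ k * b'] u, hk, ⟨?_, ?_⟩, ?_,
    hpow a a', hpow b b'⟩
  · rintro (i | i)
    · fin_cases i
      exacts [hρ₀, mul_pos (pow_pos (div_pos ha hρ₀) k) ha',
        mul_pos (pow_pos (div_pos hb hρ₀) k) hb']
    · exact hu i
  · simp [Fin.sum_univ_three, hsum]
  · simp [vecEntropy_eq_sum, Fin.sum_univ_three, hent]

end Entropy

section Isomorphic
variable {A B C : Type*} [MeasurableSpace A] [MeasurableSpace B] [MeasurableSpace C]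

lemma _root_.IsFactorMap.comp {μ : Measure (ℤ → A)} {ν : Measure (ℤ → B)} {κ : Measure (ℤ → C)}
    [IsProbabilityMeasure μ] {D : Set (ℤ → A)} {E : Set (ℤ → B)}
    {φ : (ℤ → A) → ℤ → B} {φ' : (ℤ → B) → ℤ → C} (h : IsFactorMap μ ν D φ)
    (h' : IsFactorMap ν κ E φ') : IsFactorMap μ κ (D ∩ φ ⁻¹' E) (φ' ∘ φ) where
  measurable_map := h'.measurable_map.comp h.measurable_map
  dom_measurable := h.dom_measurable.inter (h.measurable_map h'.dom_measurable)
  dom_shift_invariant := by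
    ext x
    have hD : shift x ∈ D ↔ x ∈ D := Set.ext_iff.1 h.dom_shift_invariant x
    have hE : shift (φ x) ∈ E ↔ φ x ∈ E := Set.ext_iff.1 h'.dom_shift_invariant (φ x)
    simp only [Set.mem_preimage, Set.mem_inter_iff, hD]
    refine and_congr_right fun hx => ?_
    rw [h.equivariant x hx, hE]
  dom_full := by
    have hmeasurable := h.measurable_map h'.dom_measurable
    have hfull : μ (φ ⁻¹' E) = 1 := by
      rw [← Measure.map_apply h.measurable_map h'.dom_measurable, ← h.pushforward, h'.dom_full]
    rw [← mem_ae_iff_prob_eq_one (h.dom_measurable.inter hmeasurable)]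
    exact inter_mem ((mem_ae_iff_prob_eq_one h.dom_measurable).2 h.dom_full)
      ((mem_ae_iff_prob_eq_one hmeasurable).2 hfull)
  pushforward := by
    rw [← Measure.map_map h'.measurable_map h.measurable_map, ← h.pushforward, ← h'.pushforward]
  equivariant x hx := by
    rw [Function.comp_apply, h.equivariant x hx.1, h'.equivariant _ hx.2, Function.comp_apply]

lemma Isomorphic.trans {μ : Measure (ℤ → A)} {ν : Measure (ℤ → B)} {κ : Measure (ℤ → C)}
    [IsProbabilityMeasure μ] [IsProbabilityMeasure κ] (h : Isomorphic μ ν) (h' : Isomorphic ν κ) :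
    Isomorphic μ κ := by
  obtain ⟨D, E, φ, ψ, hφ, hψ, hleft, hright⟩ := h
  obtain ⟨D', E', φ', ψ', hφ', hψ', hleft', hright'⟩ := h'
  refine ⟨_, _, _, _, hφ.comp hφ', hψ'.comp hψ, ?_, ?_⟩
  · rintro x ⟨hx, hx'⟩
    obtain ⟨hφx, hψφ⟩ := hleft x hx
    obtain ⟨hφ'x, hψφ'⟩ := hleft' _ hx'
    simp only [Function.comp_apply, Set.mem_inter_iff, Set.mem_preimage, hψφ']
    exact ⟨⟨hφ'x, hφx⟩, hψφ⟩
  · rintro y ⟨hy, hy'⟩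
    obtain ⟨hψ'y, hφψ'⟩ := hright' y hy
    obtain ⟨hψy, hφψ⟩ := hright _ hy'
    simp only [Function.comp_apply, Set.mem_inter_iff, Set.mem_preimage, hφψ]
    exact ⟨⟨hψy, hψ'y⟩, hφψ'⟩

lemma isFactorMap_of_subsingleton [Subsingleton B] {μ : Measure (ℤ → A)}
    {ν : Measure (ℤ → B)} [IsProbabilityMeasure μ] [IsProbabilityMeasure ν] (y : ℤ → B) :
    IsFactorMap μ ν Set.univ fun _ => y where
  measurable_map := measurable_const
  dom_measurable := .univ
  dom_shift_invariant := rfl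
  dom_full := measure_univ
  pushforward := by
    have : IsProbabilityMeasure (μ.map fun _ => y) :=
      Measure.isProbabilityMeasure_map aemeasurable_const
    ext s _
    rcases s.eq_empty_or_nonempty with rfl | h
    · simp
    · rw [Subsingleton.eq_univ_of_nonempty h, measure_univ, measure_univ]
  equivariant _ _ := Subsingleton.elim _ _

lemma isomorphic_of_subsingleton [Subsingleton A] [Nonempty A] [Subsingleton B] [Nonempty B]
    (μ : Measure (ℤ → A)) (ν : Measure (ℤ → B)) [IsProbabilityMeasure μ]
    [IsProbabilityMeasure ν] : Isomorphic μ ν :=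
  ⟨_, _, _, _, isFactorMap_of_subsingleton (Classical.arbitrary _),
    isFactorMap_of_subsingleton (Classical.arbitrary _),
    fun _ _ => ⟨trivial, Subsingleton.elim _ _⟩, fun _ _ => ⟨trivial, Subsingleton.elim _ _⟩⟩

end Isomorphic

section ProbVector
variable {A : Type*} [Fintype A]

lemma vecEntropy_of_subsingleton [Subsingleton A] {p : A → ℝ} (hp : IsProbVector p) :
    vecEntropy p = 0 := by
  obtain ⟨a⟩ := nonempty_of_isProbVector hp
  have h := hp.2
  rw [Fintype.sum_subsingleton _ a] at h
  rw [vecEntropy_eq_sum, Fintype.sum_subsingleton _ a, h, Real.negMulLog_one]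

lemma lt_one_of_isProbVector [Nontrivial A] {p : A → ℝ} (hp : IsProbVector p) (a : A) :
    p a < 1 := by
  classical
  obtain ⟨b, hb⟩ := exists_ne a
  rw [← hp.2]
  exact Finset.single_lt_sum hb (Finset.mem_univ a) (Finset.mem_univ b) (hp.1 b)
    fun i _ _ => (hp.1 i).le

lemma vecEntropy_pos [Nontrivial A] {p : A → ℝ} (hp : IsProbVector p) : 0 < vecEntropy p := by
  rw [vecEntropy_eq_sum]
  refine Finset.sum_pos (fun a _ => ?_) Finset.univ_nonempty
  have hlog := Real.log_neg (hp.1 a) (lt_one_of_isProbVector hp a)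
  exact mul_pos_of_neg_of_neg (neg_neg_of_pos (hp.1 a)) hlog

end ProbVector

section Nontrivial
variable {A B : Type*} [Fintype A] [Nontrivial A] [MeasurableSpace A] [DiscreteMeasurableSpace A]
  [Fintype B] [Nontrivial B] [MeasurableSpace B] [DiscreteMeasurableSpace B]

-- Markers of equal probability need not exist in the two schemes themselves, so we pass through a
-- third scheme of the same entropy having a marker for each of them.
theorem isomorphic_of_nontrivial {p : A → ℝ} {q : B → ℝ} {μ : Measure (ℤ → A)}
    {ν : Measure (ℤ → B)} (hp : IsProbVector p) (hq : IsProbVector q)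
    (hμ : IsBernoulliMeasure μ p) (hν : IsBernoulliMeasure ν q)
    (hent : vecEntropy p = vecEntropy q) : Isomorphic μ ν := by
  obtain ⟨a, a', ha⟩ := exists_pair_ne A
  obtain ⟨b, b', hb⟩ := exists_pair_ne B
  obtain ⟨k, n, r, hk, hr, hrent, hra, hrb⟩ := exists_isProbVector_pow_mul_eq (hp.1 a)
    (lt_one_of_isProbVector hp a) (hp.1 a') (hq.1 b) (lt_one_of_isProbVector hq b) (hq.1 b')
    (vecEntropy_pos hp)
  let _ : MeasurableSpace (Fin 3 ⊕ Fin n) := ⊤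
  have : DiscreteMeasurableSpace (Fin 3 ⊕ Fin n) := ⟨fun _ => trivial⟩
  obtain ⟨κ, hκ⟩ := exists_isBernoulliMeasure hr
  have : Nonempty (Fin 3 ⊕ Fin n) := ⟨Sum.inl 0⟩
  have := isProbabilityMeasure_of_isBernoulliMeasure hμ
  have := isProbabilityMeasure_of_isBernoulliMeasure hν
  have hleft : IsMarkedPair p r μ κ (marker a a' k) (marker (Sum.inl 0) (Sum.inl 1) k) :=
    ⟨isMarked_marker hp hμ ha hk, isMarked_marker hr hκ (by simp) hk, by simp,
      by rw [weight_marker, weight_marker, hra]⟩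
  have hright : IsMarkedPair r q κ ν (marker (Sum.inl 0) (Sum.inl 2) k) (marker b b' k) :=
    ⟨isMarked_marker hr hκ (by simp) hk, isMarked_marker hq hν hb hk, by simp,
      by rw [weight_marker, weight_marker, hrb]⟩
  exact (hleft.isomorphic hrent.symm).trans (hright.isomorphic (hrent.trans hent))

end Nontrivial

end Ornstein

/-- **Ornstein's isomorphism theorem.** If `p` and `q` are strictly positive probability
vectors on finite alphabets with `H(p) = H(q)`, then `BS(p)` and `BS(q)` are measurably
isomorphic. -/
theorem measurably_isomorphic_of_entropy_eq
    {A B : Type*} [Fintype A] [Fintype B]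
    [MeasurableSpace A] [DiscreteMeasurableSpace A]
    [MeasurableSpace B] [DiscreteMeasurableSpace B]
    (p : A → ℝ) (q : B → ℝ) (hp : IsProbVector p) (hq : IsProbVector q)
    (μ : Measure (ℤ → A)) (ν : Measure (ℤ → B))
    (hμ : IsBernoulliMeasure μ p) (hν : IsBernoulliMeasure ν q)
    (hH : vecEntropy p = vecEntropy q) :
    ∃ (D : Set (ℤ → A)) (E : Set (ℤ → B))
      (φ : (ℤ → A) → (ℤ → B)) (ψ : (ℤ → B) → (ℤ → A)),
      IsMeasurableIsomorphism μ ν D E φ ψ := by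
  have := Ornstein.nonempty_of_isProbVector hp
  have := Ornstein.nonempty_of_isProbVector hq
  have := Ornstein.isProbabilityMeasure_of_isBernoulliMeasure hμ
  have := Ornstein.isProbabilityMeasure_of_isBernoulliMeasure hν
  rcases subsingleton_or_nontrivial A with hA | hA <;>
    rcases subsingleton_or_nontrivial B with hB | hB
  · exact Ornstein.isomorphic_of_subsingleton μ ν
  · exact absurd hH (Ornstein.vecEntropy_of_subsingleton hp ▸ (Ornstein.vecEntropy_pos hq).ne)
  · exact absurd hH (Ornstein.vecEntropy_of_subsingleton hq ▸ (Ornstein.vecEntropy_pos hp).ne')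
  · exact Ornstein.isomorphic_of_nontrivial hp hq hμ hν hH
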